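/- arXiv:2008.00361 — 2 statements merged into one kernel-verified Lean document; each statement's English description precedes it below -/
import Mathlib

section
/- Let H be either H1 or H2. For all integers k ≥ 1 and r with 0 ≤ r ≤ k such that k−r and r are both even, GR_k((k−r)K3, rH) = 5^((k−r)/2)·17^(r/2) + 1. -/
open SimpleGraph

/-- A rainbow triangle in an edge-coloring of a complete graph: three distinct
vertices whose three pairwise edges receive three pairwise distinct colors. -/
def HasRainbowTriangle {n k : ℕ} (c : Fin n → Fin n → Fin k) : Prop :=
  ∃ u v w : Fin n, u ≠ v ∧ u ≠ w ∧ v ≠ w ∧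
    c u v ≠ c u w ∧ c u v ≠ c v w ∧ c u w ≠ c v w

/-- A Gallai `k`-coloring of `K_n`: a symmetric edge-coloring with no rainbow triangle. -/
def IsGallaiColoring {n k : ℕ} (c : Fin n → Fin n → Fin k) : Prop :=
  (∀ u v, c u v = c v u) ∧ ¬ HasRainbowTriangle c

/-- A monochromatic copy of the graph `F` in color `i`: an injection of the vertices
of `F` into the vertices of `K_n` mapping every edge of `F` to an edge colored `i`. -/
def HasMonoCopy {V : Type} (F : SimpleGraph V) {n k : ℕ}
    (c : Fin n → Fin n → Fin k) (i : Fin k) : Prop :=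
  ∃ f : V → Fin n, Function.Injective f ∧ ∀ a b, F.Adj a b → c (f a) (f b) = i

/-- The Gallai-Ramsey number `GR(F₁, …, F_k)`: the least `n` such that every Gallai
`k`-coloring of `K_n` contains, for some color `i`, a monochromatic copy of `Fᵢ`
in color `i`. -/
noncomputable def GR (k : ℕ) (F : Fin k → Σ V : Type, SimpleGraph V) : ℕ :=
  sInf {n : ℕ | ∀ c : Fin n → Fin n → Fin k, IsGallaiColoring c →
    ∃ i : Fin k, HasMonoCopy (F i).2 c i}

/-- The triangle `K₃`. -/
def GK3 : SimpleGraph (Fin 3) := ⊤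

/-- The path `P₃` on three vertices (edges 0–1 and 1–2). -/
def GP3 : SimpleGraph (Fin 3) := SimpleGraph.fromRel (fun a _ => a = 1)

/-- `H₁`: a `K₄` on `{0,1,2,3}` together with the extra vertex `4` adjacent to
exactly the vertex `3`. -/
def GH1 : SimpleGraph (Fin 5) :=
  SimpleGraph.fromRel (fun a b => (a ≠ 4 ∧ b ≠ 4) ∨ (a = 3 ∧ b = 4))

/-- `H₂`: `K₅` minus the two edges 0–1 and 1–2 of a path on three vertices. -/
def GH2 : SimpleGraph (Fin 5) :=
  (⊤ : SimpleGraph (Fin 5)) \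
    SimpleGraph.fromRel (fun a b => (a = 0 ∧ b = 1) ∨ (a = 1 ∧ b = 2))

/-- `H₃`: `K₅` minus the edge 0–1. -/
def GH3 : SimpleGraph (Fin 5) :=
  (⊤ : SimpleGraph (Fin 5)) \ SimpleGraph.fromRel (fun a b => a = 0 ∧ b = 1)
/-- The family of graphs for `GR_k((k-r)K₃, rH)`: the graph `H` in each of the first
`r` colors and the triangle `K₃` in each of the remaining `k - r` colors. -/
def mixKH (k r : ℕ) (H : SimpleGraph (Fin 5)) : Fin k → Σ V : Type, SimpleGraph V :=
  fun i => if (i : ℕ) < r then ⟨Fin 5, H⟩ else ⟨Fin 3, GK3⟩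


set_option linter.unusedSectionVars false
namespace GRaux
variable {α κ : Type} [DecidableEq α] [DecidableEq κ]

/-- symmetric rainbow-free colouring -/
structure Gal (c : α → α → κ) : Prop where
  sym : ∀ u v, c u v = c v u
  nr : ∀ u v w, u ≠ v → u ≠ w → v ≠ w → c u v = c u w ∨ c u v = c v w ∨ c u w = c v w

/-- a nontrivial cut of `S` with cross edges coloured `i` or `j` -/
def Cut (c : α → α → κ) (i j : κ) (X Y : Finset α) : Prop :=
  X.Nonempty ∧ Y.Nonempty ∧ Disjoint X Y ∧ ∀ x ∈ X, ∀ y ∈ Y, c x y = i ∨ c x y = j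

theorem Cut.swap {c : α → α → κ} (hc : Gal c) {i j : κ} {X Y : Finset α} (h : Cut c i j X Y) :
    Cut c i j Y X :=
  ⟨h.2.1, h.1, h.2.2.1.symm, fun x hx y hy => by rw [hc.sym]; exact h.2.2.2 y hy x hx⟩

theorem extend_contra {c : α → α → κ} (hc : Gal c) {r b g : κ} (hrb : r ≠ b) (hgr : g ≠ r)
    (hgb : g ≠ b) {y z y' z' : α} (hyz : y ≠ z) (hyz' : y ≠ z') (hzy' : z ≠ y') (hyz'2 : y' ≠ z')
    (hzz : z ≠ z')
    (h1 : c y z = g) (h2 : c y' z' = g) (h3 : c y z' = b) (h4 : c z y' = r)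
    (h5 : c z z' = r ∨ c z z' = b) : False := by
  have t1 := hc.nr y z z' hyz hyz' hzz
  have t2 := hc.nr z y' z' hzy' hzz hyz'2
  grind

set_option maxHeartbeats 1000000 in
theorem extend_cut {c : α → α → κ} (hc : Gal c) {r b : κ} {X Y : Finset α} (h : Cut c r b X Y)
    {v : α} (hX : v ∉ X) (hY : v ∉ Y) :
    ∃ i j X' Y', Cut c i j X' Y' ∧ X' ∪ Y' = insert v (X ∪ Y) := by
  obtain ⟨hXn, hYn, hd, hXY⟩ := h
  have hsym := hc.sym
  by_cases hjX : ∀ x ∈ X, c x v = r ∨ c x v = b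
  · refine ⟨r, b, X, insert v Y, ⟨hXn, by simp, by simp [hd, hX], ?_⟩, by simp⟩
    intro x hx y hy
    rcases Finset.mem_insert.1 hy with rfl | hy
    · exact hjX x hx
    · exact hXY x hx y hy
  by_cases hjY : ∀ y ∈ Y, c y v = r ∨ c y v = b
  · refine ⟨r, b, insert v X, Y, ⟨by simp, hYn, by simp [hd, hY], ?_⟩, by simp⟩
    intro x hx y hy
    rcases Finset.mem_insert.1 hx with rfl | hx
    · rw [hsym]; exact hjY y hy
    · exact hXY x hx y hy
  push Not at hjX hjY
  obtain ⟨x0, hx0, hx0r, hx0b⟩ := hjX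
  obtain ⟨y0, hy0, hy0r, hy0b⟩ := hjY
  have hne : ∀ x ∈ X, ∀ y ∈ Y, x ≠ y := fun x hx y hy e =>
    Finset.disjoint_left.1 hd hx (e ▸ hy)
  have hvX : ∀ x ∈ X, x ≠ v := fun x hx e => hX (e ▸ hx)
  have hvY : ∀ x ∈ Y, x ≠ v := fun x hx e => hY (e ▸ hx)
  obtain ⟨g, hg⟩ : ∃ g, c x0 v = g := ⟨_, rfl⟩
  have key : ∀ x ∈ X, ∀ y ∈ Y, c x v ≠ r → c x v ≠ b → c y v ≠ r → c y v ≠ b → c x v = c y v := by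
    intro x hx y hy a1 a2 a3 a4
    have := hc.nr x y v (hne x hx y hy) (hvX x hx) (hvY y hy)
    have := hXY x hx y hy
    grind
  have hy0g : c y0 v = g := by rw [← hg]; exact (key x0 hx0 y0 hy0 hx0r hx0b hy0r hy0b).symm
  have hallX : ∀ x ∈ X, c x v = r ∨ c x v = b ∨ c x v = g := by
    intro x hx
    by_contra hcon
    push Not at hcon
    exact hcon.2.2 ((key x hx y0 hy0 hcon.1 hcon.2.1 hy0r hy0b).trans hy0g)
  have hallY : ∀ x ∈ Y, c x v = r ∨ c x v = b ∨ c x v = g := by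
    intro x hx
    by_contra hcon
    push Not at hcon
    exact hcon.2.2 ((key x0 hx0 x hx hx0r hx0b hcon.1 hcon.2.1).symm.trans hg)
  have hall : ∀ x ∈ X ∪ Y, c x v = r ∨ c x v = b ∨ c x v = g := by
    intro x hx
    rcases Finset.mem_union.1 hx with hx | hx
    · exact hallX x hx
    · exact hallY x hx
  have hv : v ∉ X ∪ Y := by simp [hX, hY]
  have hvU : ∀ x ∈ X ∪ Y, x ≠ v := fun x hx e => hv (e ▸ hx)
  have hgr : g ≠ r := hg ▸ hx0r
  have hgb : g ≠ b := hg ▸ hx0b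
  -- v alone
  by_cases hR : ∀ x ∈ X ∪ Y, c x v ≠ r
  · refine ⟨b, g, X ∪ Y, {v}, ⟨⟨x0, by simp [hx0]⟩, by simp, by simp [hX, hY], ?_⟩, ?_⟩
    · intro x hx y hy
      have := hall x hx
      have := hR x hx
      rw [Finset.mem_singleton.1 hy]; tauto
    · grind
  by_cases hB : ∀ x ∈ X ∪ Y, c x v ≠ b
  · refine ⟨r, g, X ∪ Y, {v}, ⟨⟨x0, by simp [hx0]⟩, by simp, by simp [hX, hY], ?_⟩, ?_⟩
    · intro x hx y hy
      have := hall x hx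
      have := hB x hx
      rw [Finset.mem_singleton.1 hy]; tauto
    · grind
  push Not at hR hB
  obtain ⟨xr, hxr, hxr'⟩ := hR
  obtain ⟨xb, hxb, hxb'⟩ := hB
  have hrb : r ≠ b ∨ r = b := by tauto
  rcases hrb with hrb | hrb
  swap
  · subst hrb
    refine ⟨r, g, X ∪ Y, {v}, ⟨⟨x0, by simp [hx0]⟩, by simp, by simp [hX, hY], ?_⟩, ?_⟩
    · intro x hx y hy
      have := hall x hx
      rw [Finset.mem_singleton.1 hy]; tauto
    · grind
  -- general statement for an isolated colour class
  have iso : ∀ s t, s ≠ t → g ≠ s → g ≠ t → (∀ x ∈ X ∪ Y, c x v = s ∨ c x v = t ∨ c x v = g) →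
      (∃ x ∈ X ∪ Y, c x v = s) →
      (∃ i j X' Y', Cut c i j X' Y' ∧ X' ∪ Y' = insert v (X ∪ Y)) ∨
      ∃ y ∈ X ∪ Y, ∃ z ∈ X ∪ Y, c y v = s ∧ c z v = g ∧ c y z = g := by
    intro s t hst hgs hgt hal hex
    by_cases hh : ∃ y ∈ X ∪ Y, ∃ z ∈ X ∪ Y, c y v = s ∧ c z v = g ∧ c y z = g
    · exact Or.inr hh
    left
    push Not at hh
    obtain ⟨x1, hx1, hx1s⟩ := hex
    refine ⟨s, t, (X ∪ Y).filter (fun x => c x v = s),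
      insert v ((X ∪ Y).filter (fun x => ¬ c x v = s)), ⟨⟨x1, by simpa using ⟨by simpa using hx1, hx1s⟩⟩, by simp, ?_, ?_⟩, ?_⟩
    · rw [Finset.disjoint_insert_right]
      refine ⟨by simp [hX, hY], Finset.disjoint_filter_filter_not _ _ _⟩
    · intro x hx y hy
      rw [Finset.mem_filter] at hx
      rcases Finset.mem_insert.1 hy with rfl | hy
      · exact Or.inl hx.2
      · rw [Finset.mem_filter] at hy
        have h1 := hal y hy.1
        have h2 := hh x hx.1 y hy.1 hx.2
        have h3 : x ≠ y := by rintro rfl; exact hy.2 hx.2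
        have h4 := hc.nr x y v h3 (hvU x hx.1) (hvU y hy.1)
        grind
    · rw [Finset.union_insert, Finset.filter_union_filter_not_eq]
  rcases iso b r hrb.symm hgb hgr (fun x hx => by have := hall x hx; tauto) ⟨xb, hxb, hxb'⟩ with h | ⟨y, hy, z, hz, hyb, hzg, hyzg⟩
  · exact h
  rcases iso r b hrb hgr hgb hall ⟨xr, hxr, hxr'⟩ with h | ⟨y', hy', z', hz', hyb', hzg', hyzg'⟩
  · exact h
  exfalso
  have n1 : y ≠ z := by rintro rfl; exact hgb (hzg.symm.trans hyb)
  have n2 : y ≠ z' := by rintro rfl; exact hgb (hzg'.symm.trans hyb)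
  have n3 : z ≠ y' := by rintro rfl; exact hgr (hzg.symm.trans hyb')
  have n4 : y' ≠ z' := by rintro rfl; exact hgr (hzg'.symm.trans hyb')
  have n6 : y ≠ y' := by rintro rfl; exact hrb (hyb'.symm.trans hyb)
  -- the cross colours
  have tyz' := hc.nr y z' v n2 (hvU y hy) (hvU z' hz')
  have tzy' := hc.nr z y' v n3 (hvU z hz) (hvU y' hy')
  have cross : ∀ a b' d, (a ∈ X ∧ b' ∈ X ∧ d ∈ Y ∨ a ∈ Y ∧ b' ∈ Y ∧ d ∈ X) → a ≠ b' →
      c a d ≠ c b' d → c a b' = r ∨ c a b' = b := by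
    intro a b' d h hab hne'
    rcases h with ⟨h1, h2, h3⟩ | ⟨h1, h2, h3⟩
    · have := hc.nr a b' d hab (hne _ h1 _ h3) (hne _ h2 _ h3)
      have := hXY a h1 d h3
      have := hXY b' h2 d h3
      grind
    · have := hc.nr a b' d hab (hne _ h3 _ h1).symm (hne _ h3 _ h2).symm
      have := hXY d h3 a h1
      have := hXY d h3 b' h2
      have := hsym a d
      have := hsym b' d
      grind
  have side : ∀ a ∈ X ∪ Y, ∀ b' ∈ X ∪ Y, c a b' = g → (a ∈ X ∧ b' ∈ X) ∨ (a ∈ Y ∧ b' ∈ Y) := by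
    intro a ha b' hb' hab
    rcases Finset.mem_union.1 ha with ha | ha <;> rcases Finset.mem_union.1 hb' with hb' | hb'
    · exact Or.inl ⟨ha, hb'⟩
    · have := hXY a ha b' hb'; grind
    · have := hXY b' hb' a ha; have := hsym a b'; grind
    · exact Or.inr ⟨ha, hb'⟩
  have fin : z ≠ z' → (c y z' = r ∨ c y z' = b) → (c z y' = r ∨ c z y' = b) →
      (c z z' = r ∨ c z z' = b) → False := by
    intro n5 e1 e2 e3
    exact extend_contra hc hrb hgr hgb n1 n2 n3 n4 n5 hyzg hyzg' (by grind) (by grind) e3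
  -- same-side case
  have same : ∀ d ∈ X ∪ Y, c d v = g → (y ∈ X ∧ z ∈ X ∧ y' ∈ X ∧ z' ∈ X ∧ d ∈ Y ∨
      y ∈ Y ∧ z ∈ Y ∧ y' ∈ Y ∧ z' ∈ Y ∧ d ∈ X) → False := by
    intro d hd' hdg h
    have hcd : ∀ a, (a ∈ X ∧ d ∈ Y) ∨ (a ∈ Y ∧ d ∈ X) → a ≠ d ∧ (c a d = r ∨ c a d = b) := by
      rintro a (⟨h1, h2⟩ | ⟨h1, h2⟩)
      · exact ⟨hne _ h1 _ h2, hXY _ h1 _ h2⟩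
      · exact ⟨(hne _ h2 _ h1).symm, by rw [hsym]; exact hXY _ h2 _ h1⟩
    obtain ⟨m1, k1⟩ := hcd y (h.imp (fun h => ⟨h.1, h.2.2.2.2⟩) (fun h => ⟨h.1, h.2.2.2.2⟩))
    obtain ⟨m2, k2⟩ := hcd z (h.imp (fun h => ⟨h.2.1, h.2.2.2.2⟩) (fun h => ⟨h.2.1, h.2.2.2.2⟩))
    obtain ⟨m3, k3⟩ := hcd y' (h.imp (fun h => ⟨h.2.2.1, h.2.2.2.2⟩) (fun h => ⟨h.2.2.1, h.2.2.2.2⟩))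
    obtain ⟨m4, k4⟩ := hcd z' (h.imp (fun h => ⟨h.2.2.2.1, h.2.2.2.2⟩) (fun h => ⟨h.2.2.2.1, h.2.2.2.2⟩))
    have q1 : c y d = b := by
      have := hc.nr y d v m1 (hvU y hy) (hvU d hd'); grind
    have q2 : c y' d = r := by
      have := hc.nr y' d v m3 (hvU y' hy') (hvU d hd'); grind
    have q3 : c z d = b := by
      have := hc.nr y z d n1 m1 m2; grind
    have q4 : c z' d = r := by
      have := hc.nr y' z' d n4 m3 m4; grind
    have n5 : z ≠ z' := by rintro rfl; exact hrb (q4.symm.trans q3)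
    refine fin n5 (cross y z' d (h.imp (fun h => ⟨h.1, h.2.2.2.1, h.2.2.2.2⟩) (fun h => ⟨h.1, h.2.2.2.1, h.2.2.2.2⟩)) n2 (by rw [q1, q4]; exact hrb.symm))
      (cross z y' d (h.imp (fun h => ⟨h.2.1, h.2.2.1, h.2.2.2.2⟩) (fun h => ⟨h.2.1, h.2.2.1, h.2.2.2.2⟩)) n3 (by rw [q3, q2]; exact hrb.symm))
      (cross z z' d (h.imp (fun h => ⟨h.2.1, h.2.2.2.1, h.2.2.2.2⟩) (fun h => ⟨h.2.1, h.2.2.2.1, h.2.2.2.2⟩)) n5 (by rw [q3, q4]; exact hrb.symm))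
  have hsX : ∀ a ∈ X, ∀ d ∈ Y, c d a = r ∨ c d a = b := fun a h1 d h2 => by
    rw [hsym]; exact hXY a h1 d h2
  rcases side y hy z hz hyzg with ⟨s1, s2⟩ | ⟨s1, s2⟩ <;>
    rcases side y' hy' z' hz' hyzg' with ⟨s3, s4⟩ | ⟨s3, s4⟩
  · exact same y0 (by simp [hy0]) hy0g (Or.inl ⟨s1, s2, s3, s4, hy0⟩)
  · exact fin (hne _ s2 _ s4) (hXY _ s1 _ s4) (hXY _ s2 _ s3) (hXY _ s2 _ s4)
  · exact fin (hne _ s4 _ s2).symm (hsX _ s4 _ s1) (hsX _ s3 _ s2) (hsX _ s4 _ s2)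
  · exact same x0 (by simp [hx0]) hg (Or.inr ⟨s1, s2, s3, s4, hx0⟩)

theorem exists_cut {c : α → α → κ} (hc : Gal c) (S : Finset α) (hS : 2 ≤ S.card) :
    ∃ i j X Y, Cut c i j X Y ∧ X ∪ Y = S := by
  induction S using Finset.induction_on with
  | empty => simp at hS
  | insert v T hv ih =>
    rw [Finset.card_insert_of_notMem hv] at hS
    by_cases h2 : 2 ≤ T.card
    · obtain ⟨i, j, X, Y, h, rfl⟩ := ih h2
      simp only [Finset.mem_union, not_or] at hv
      exact extend_cut hc h hv.1 hv.2
    · obtain ⟨w, rfl⟩ := Finset.card_eq_one.1 (show T.card = 1 by omega)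
      refine ⟨c v w, c v w, {v}, {w}, ⟨by simp, by simp, by simpa using hv, by simp⟩, rfl⟩
end GRaux


set_option linter.unusedSectionVars false
namespace GRaux
variable {α κ : Type} [DecidableEq α] [DecidableEq κ]

/-- A Gallai partition of `S` in colours `i ≠ j`, the parts being the fibres of `π`. -/
structure GP (c : α → α → κ) (S : Finset α) (i j : κ) (π : α → α) : Prop where
  ne : i ≠ j
  mem : ∀ x ∈ S, π x ∈ S
  idem : ∀ x ∈ S, π (π x) = π x
  two : ∀ x ∈ S, ∀ y ∈ S, π x ≠ π y → c x y = i ∨ c x y = j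
  hom : ∀ x ∈ S, ∀ x' ∈ S, ∀ y ∈ S, π x = π x' → π x ≠ π y → c x y = c x' y
  exi : ∀ a ∈ S, ∃ y ∈ S, π y ≠ π a ∧ c a y = i
  exj : ∀ a ∈ S, ∃ y ∈ S, π y ≠ π a ∧ c a y = j

/-- the graph of edges inside `S` of colour other than `i`, `j` -/
def oth (c : α → α → κ) (hc : Gal c) (S : Finset α) (i j : κ) : SimpleGraph α where
  Adj x y := x ≠ y ∧ x ∈ S ∧ y ∈ S ∧ c x y ≠ i ∧ c x y ≠ j
  symm := ⟨fun x y h => by have := hc.sym x y; grind⟩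
  loopless := ⟨fun x h => h.1 rfl⟩

theorem dichotomy {c : α → α → κ} (hc : Gal c) (S : Finset α) (hS : 2 ≤ S.card) :
    (∃ i X Y, Cut c i i X Y ∧ X ∪ Y = S) ∨ ∃ i j π, GP c S i j π := by
  classical
  by_cases hm : ∃ i X Y, Cut c i i X Y ∧ X ∪ Y = S
  · exact Or.inl hm
  right
  obtain ⟨i, j, X, Y, ⟨hXn, hYn, hd, hXY⟩, hU⟩ := exists_cut hc S hS
  have hij : i ≠ j := by
    rintro rfl
    exact hm ⟨i, X, Y, ⟨hXn, hYn, hd, hXY⟩, hU⟩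
  set G := oth c hc S i j with hG
  have rS : ∀ x y, G.Reachable x y → x ∈ S → y ∈ S := by
    intro x y h
    obtain ⟨w⟩ := h
    induction w with
    | nil => exact id
    | cons h _ ih => intro _; exact ih h.2.2.1
  have rX : ∀ x y, G.Reachable x y → x ∈ X → y ∈ X := by
    intro x y h
    obtain ⟨w⟩ := h
    induction w with
    | nil => exact id
    | @cons u v w h _ ih =>
      intro hu
      apply ih
      by_contra hv
      have : v ∈ Y := by
        have := h.2.2.1
        rw [← hU] at this
        exact (Finset.mem_union.1 this).resolve_left hv
      have := hXY u hu v this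
      have := h.2.2.2
      tauto
  have rhom : ∀ x x', G.Reachable x x' → x ∈ S → ∀ y ∈ S, ¬ G.Reachable x y → c x y = c x' y := by
    intro x x' h
    obtain ⟨w⟩ := h
    induction w with
    | nil => intros; rfl
    | @cons u v w h p ih =>
      intro hu y hy hn
      have huv : G.Reachable u v := h.reachable
      have hvy : ¬ G.Reachable v y := fun h' => hn (huv.trans h')
      rw [← ih h.2.2.1 y hy hvy]
      have n1 : u ≠ y := by rintro rfl; exact hn (SimpleGraph.Reachable.refl _)
      have n2 : v ≠ y := by rintro rfl; exact hvy (SimpleGraph.Reachable.refl _)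
      have a1 : ¬ G.Adj u y := fun h => hn h.reachable
      have a2 : ¬ G.Adj v y := fun h => hvy h.reachable
      have t := hc.nr u v y h.1 n1 n2
      obtain ⟨b1, b2, b3, b4, b5⟩ := h
      simp only [hG, oth] at a1 a2
      grind
  let π : α → α := fun x => Quotient.out (s := G.reachableSetoid) (Quotient.mk G.reachableSetoid x)
  have hπr : ∀ x, G.Reachable (π x) x := fun x => Quotient.exact (Quotient.out_eq (s := G.reachableSetoid) _)
  have hπ : ∀ x y, π x = π y ↔ G.Reachable x y := by
    intro x y
    constructor
    · intro h
      exact (hπr x).symm.trans (h ▸ hπr y)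
    · intro h
      have : Quotient.mk G.reachableSetoid x = Quotient.mk G.reachableSetoid y := Quotient.sound h
      simp only [π, this]
  have htwo : ∀ x ∈ S, ∀ y ∈ S, π x ≠ π y → c x y = i ∨ c x y = j := by
    intro x hx y hy h
    have h1 : ¬ G.Reachable x y := fun h' => h ((hπ x y).2 h')
    have h2 : ¬ G.Adj x y := fun h' => h1 h'.reachable
    have n1 : x ≠ y := by rintro rfl; exact h rfl
    simp only [hG, oth] at h2
    tauto
  have hhom : ∀ x ∈ S, ∀ x' ∈ S, ∀ y ∈ S, π x = π x' → π x ≠ π y → c x y = c x' y := by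
    intro x hx x' _ y hy h1 h2
    exact rhom x x' ((hπ _ _).1 h1) hx y hy (fun h => h2 ((hπ _ _).2 h))
  have hother : ∀ a ∈ S, ∃ y ∈ S, π y ≠ π a := by
    intro a ha
    by_cases hX : a ∈ X
    · obtain ⟨y, hy⟩ := hYn
      refine ⟨y, by rw [← hU]; simp [hy], fun h => ?_⟩
      have := rX a y ((hπ _ _).1 h.symm) hX
      exact Finset.disjoint_left.1 hd this hy
    · obtain ⟨y, hy⟩ := hXn
      refine ⟨y, by rw [← hU]; simp [hy], fun h => ?_⟩
      exact hX (rX y a ((hπ _ _).1 h) hy)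
  have hex : ∀ s t, (∀ x ∈ S, ∀ y ∈ S, π x ≠ π y → c x y = s ∨ c x y = t) →
      ∀ a ∈ S, ∃ y ∈ S, π y ≠ π a ∧ c a y = s := by
    intro s t hst a ha
    by_contra hcon
    push Not at hcon
    apply hm
    obtain ⟨y0, hy0, hy0'⟩ := hother a ha
    refine ⟨t, S.filter (fun x => π x = π a), S.filter (fun x => ¬ π x = π a),
      ⟨⟨a, by simp [ha]⟩, ⟨y0, by simp [hy0, hy0']⟩, Finset.disjoint_filter_filter_not _ _ _, ?_⟩,
      Finset.filter_union_filter_not_eq _ _⟩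
    intro x hx y hy
    rw [Finset.mem_filter] at hx hy
    have h1 := hcon y hy.1 hy.2
    have h2 := hst a ha y hy.1 (Ne.symm hy.2)
    have h3 := hhom a ha x hx.1 y hy.1 hx.2.symm (Ne.symm hy.2)
    rw [← h3]; tauto
  exact ⟨i, j, π, hij, fun x hx => rS _ _ (hπr x).symm hx, fun x _ => (hπ _ _).2 (hπr x), htwo, hhom,
    hex i j htwo, hex j i (fun x hx y hy h => (htwo x hx y hy h).symm)⟩

theorem GP.swap {c : α → α → κ} {S : Finset α} {i j : κ} {π : α → α} (h : GP c S i j π) :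
    GP c S j i π :=
  ⟨h.ne.symm, h.mem, h.idem, fun x hx y hy e => (h.two x hx y hy e).symm, h.hom, h.exj, h.exi⟩

/-- part of `a` -/
def part (S : Finset α) (π : α → α) (a : α) : Finset α := S.filter (fun x => π x = π a)
/-- neighbourhood of the part of `a` in colour `i` -/
def nbr (c : α → α → κ) (S : Finset α) (π : α → α) (i : κ) (a : α) : Finset α :=
  S.filter (fun x => π x ≠ π a ∧ c a x = i)

theorem GP.split {c : α → α → κ} {S : Finset α} {i j : κ} {π : α → α} (h : GP c S i j π)
    {a : α} (ha : a ∈ S) :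
    Cut c i i (part S π a) (nbr c S π i a) ∧ Cut c j j (part S π a) (nbr c S π j a) ∧
    (part S π a).card + (nbr c S π i a).card + (nbr c S π j a).card = S.card := by
  have cut : ∀ i j, GP c S i j π → Cut c i i (part S π a) (nbr c S π i a) := by
    intro i j h
    refine ⟨⟨a, by simp [part, ha]⟩, ?_, ?_, ?_⟩
    · obtain ⟨y, h1, h2, h3⟩ := h.exi a ha
      exact ⟨y, by simp [nbr, h1, h2, h3]⟩
    · rw [Finset.disjoint_left]
      intro x hx hx'
      simp only [part, nbr, Finset.mem_filter] at hx hx'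
      exact hx'.2.1 hx.2
    · intro x hx y hy
      simp only [part, nbr, Finset.mem_filter] at hx hy
      rw [← h.hom a ha x hx.1 y hy.1 hx.2.symm (Ne.symm hy.2.1)]
      exact Or.inl hy.2.2
  refine ⟨cut i j h, cut j i h.swap, ?_⟩
  have e1 : (nbr c S π i a).card + (nbr c S π j a).card =
      (S.filter (fun x => ¬ π x = π a)).card := by
    rw [← Finset.card_union_of_disjoint]
    · congr 1
      ext x
      simp only [nbr, Finset.mem_union, Finset.mem_filter]
      constructor
      · rintro (h | h) <;> exact ⟨h.1, h.2.1⟩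
      · rintro ⟨h1, h2⟩
        have := h.two a ha x h1 (Ne.symm h2)
        tauto
    · rw [Finset.disjoint_left]
      intro x hx hx'
      simp only [nbr, Finset.mem_filter] at hx hx'
      exact h.ne (hx.2.2.symm.trans hx'.2.2)
  have e2 := Finset.card_filter_add_card_filter_not (s := S) (fun x => π x = π a)
  rw [part]; omega
end GRaux


set_option linter.unusedSectionVars false
namespace GRaux
variable {α κ : Type} [DecidableEq α] [DecidableEq κ]

/-- edge of colour `i` -/
def E (c : α → α → κ) (i : κ) (x y : α) : Prop := x ≠ y ∧ c x y = i

theorem E.symm {c : α → α → κ} (hc : Gal c) {i : κ} {x y : α} (h : E c i x y) : E c i y x :=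
  ⟨h.1.symm, by rw [hc.sym]; exact h.2⟩

/-- no edge of colour `i` -/
def NE (c : α → α → κ) (i : κ) (S : Finset α) : Prop := ∀ x ∈ S, ∀ y ∈ S, ¬ E c i x y
/-- no triangle of colour `i` -/
def NT (c : α → α → κ) (i : κ) (S : Finset α) : Prop :=
  ∀ x ∈ S, ∀ y ∈ S, ∀ z ∈ S, E c i x y → E c i x z → E c i y z → False
/-- no `K₄` of colour `i` -/
def NK (c : α → α → κ) (i : κ) (S : Finset α) : Prop :=
  ∀ x ∈ S, ∀ y ∈ S, ∀ z ∈ S, ∀ w ∈ S, E c i x y → E c i x z → E c i x w → E c i y z → E c i y w →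
    E c i z w → False
/-- no `K₅` minus path of colour `i` -/
def NH (c : α → α → κ) (i : κ) (S : Finset α) : Prop :=
  ∀ a ∈ S, ∀ b ∈ S, ∀ x ∈ S, ∀ y ∈ S, ∀ z ∈ S, E c i a b → E c i a x → E c i a y → E c i b x →
    E c i b y → E c i x y → E c i z a → E c i z b → z ≠ x → z ≠ y → False
/-- no paw of colour `i` -/
def NP (c : α → α → κ) (i : κ) (S : Finset α) : Prop :=
  ∀ t ∈ S, ∀ u ∈ S, ∀ v ∈ S, ∀ z ∈ S, E c i t u → E c i t v → E c i u v → E c i z t → z ≠ u →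
    z ≠ v → False
/-- only colours `i`, `j` -/
def Two (c : α → α → κ) (i j : κ) (S : Finset α) : Prop :=
  ∀ x ∈ S, ∀ y ∈ S, x ≠ y → c x y = i ∨ c x y = j

section mono
variable {c : α → α → κ} {i j : κ} {S T : Finset α}
theorem NE.mono (h : NE c i S) (hT : T ⊆ S) : NE c i T := fun x hx y hy => h x (hT hx) y (hT hy)
theorem NT.mono (h : NT c i S) (hT : T ⊆ S) : NT c i T :=
  fun x hx y hy z hz => h x (hT hx) y (hT hy) z (hT hz)
theorem NK.mono (h : NK c i S) (hT : T ⊆ S) : NK c i T :=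
  fun x hx y hy z hz w hw => h x (hT hx) y (hT hy) z (hT hz) w (hT hw)
theorem NH.mono (h : NH c i S) (hT : T ⊆ S) : NH c i T :=
  fun x hx y hy z hz w hw v hv => h x (hT hx) y (hT hy) z (hT hz) w (hT hw) v (hT hv)
theorem Two.mono (h : Two c i j S) (hT : T ⊆ S) : Two c i j T :=
  fun x hx y hy => h x (hT hx) y (hT hy)
theorem Two.swap (h : Two c i j S) : Two c j i S := fun x hx y hy n => (h x hx y hy n).symm
end mono

/-- colour neighbourhood of a vertex -/
def N (c : α → α → κ) (i : κ) (v : α) (S : Finset α) : Finset α :=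
  S.filter (fun x => x ≠ v ∧ c v x = i)

theorem N_sub (c : α → α → κ) (i : κ) (v : α) (S : Finset α) : N c i v S ⊆ S := Finset.filter_subset _ _

theorem mem_N {c : α → α → κ} {i : κ} {v : α} {S : Finset α} {x : α} :
    x ∈ N c i v S ↔ x ∈ S ∧ E c i v x := by
  simp only [N, Finset.mem_filter, E]
  constructor <;> rintro ⟨h1, h2, h3⟩ <;> exact ⟨h1, h2.symm, h3⟩

variable {c : α → α → κ} {i j : κ} {S : Finset α}

theorem card_N (hij : i ≠ j) (h : Two c i j S) {v : α} (hv : v ∈ S) :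
    S.card = 1 + (N c i v S).card + (N c j v S).card := by
  have e1 : (S.erase v).card = (N c i v S).card + (N c j v S).card := by
    rw [← Finset.card_union_of_disjoint]
    · congr 1
      ext x
      simp only [Finset.mem_erase, Finset.mem_union, mem_N, E]
      constructor
      · rintro ⟨h1, h2⟩
        have := h v hv x h2 h1.symm
        have := h1.symm
        tauto
      · rintro (⟨h1, h2, _⟩ | ⟨h1, h2, _⟩) <;> exact ⟨h2.symm, h1⟩
    · rw [Finset.disjoint_left]
      intro x hx hx'
      rw [mem_N] at hx hx'
      exact hij (hx.2.2.symm.trans hx'.2.2)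
  have := Finset.card_erase_of_mem hv
  have : 0 < S.card := Finset.card_pos.2 ⟨v, hv⟩
  omega

theorem NT.N (h : NT c i S) {v : α} (hv : v ∈ S) : NE c i (N c i v S) := by
  intro x hx y hy e
  rw [mem_N] at hx hy
  exact h v hv x hx.1 y hy.1 hx.2 hy.2 e

theorem NK.N (h : NK c i S) {v : α} (hv : v ∈ S) : NT c i (N c i v S) := by
  intro x hx y hy z hz e1 e2 e3
  rw [mem_N] at hx hy hz
  exact h v hv x hx.1 y hy.1 z hz.1 hx.2 hy.2 hz.2 e1 e2 e3

theorem exists_inj {t : ℕ} (h : t ≤ S.card) : ∃ f : Fin t → α, Function.Injective f ∧ ∀ k, f k ∈ S := by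
  obtain ⟨e⟩ := Function.Embedding.nonempty_of_card_le (α := Fin t) (β := S) (by simpa using h)
  exact ⟨fun k => (e k).1, fun a b hab => e.injective (Subtype.ext hab), fun k => (e k).2⟩

theorem clique {t : ℕ} (hE : NE c i S) (h : Two c i j S) (ht : t ≤ S.card) :
    ∃ f : Fin t → α, (∀ k, f k ∈ S) ∧ ∀ a b, a ≠ b → E c j (f a) (f b) := by
  obtain ⟨f, hf, hm⟩ := exists_inj ht
  refine ⟨f, hm, fun a b hab => ?_⟩
  have hn : f a ≠ f b := fun e => hab (hf e)
  exact ⟨hn, (h _ (hm a) _ (hm b) hn).resolve_left (fun e => hE _ (hm a) _ (hm b) ⟨hn, e⟩)⟩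

theorem clique3 (hE : NE c i S) (h : Two c i j S) (hT : NT c j S) : S.card ≤ 2 := by
  by_contra hcon
  obtain ⟨f, hm, hf⟩ := clique (t := 3) hE h (by omega)
  exact hT _ (hm 0) _ (hm 1) _ (hm 2) (hf _ _ (by decide)) (hf _ _ (by decide)) (hf _ _ (by decide))

theorem clique4 (hE : NE c i S) (h : Two c i j S) (hT : NK c j S) : S.card ≤ 3 := by
  by_contra hcon
  obtain ⟨f, hm, hf⟩ := clique (t := 4) hE h (by omega)
  exact hT _ (hm 0) _ (hm 1) _ (hm 2) _ (hm 3) (hf _ _ (by decide)) (hf _ _ (by decide))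
    (hf _ _ (by decide)) (hf _ _ (by decide)) (hf _ _ (by decide)) (hf _ _ (by decide))

theorem clique5 (hE : NE c i S) (h : Two c i j S) (hT : NH c j S) : S.card ≤ 4 := by
  by_contra hcon
  obtain ⟨f, hm, hf⟩ := clique (t := 5) hE h (by omega)
  exact hT _ (hm 0) _ (hm 1) _ (hm 2) _ (hm 3) _ (hm 4) (hf _ _ (by decide)) (hf _ _ (by decide))
    (hf _ _ (by decide)) (hf _ _ (by decide)) (hf _ _ (by decide)) (hf _ _ (by decide))
    (hf _ _ (by decide)) (hf _ _ (by decide)) (hf 4 2 (by decide)).1 (hf 4 3 (by decide)).1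

theorem R33 (hij : i ≠ j) (h : Two c i j S) (h1 : NT c i S) (h2 : NT c j S) : S.card ≤ 5 := by
  rcases S.eq_empty_or_nonempty with rfl | ⟨v, hv⟩
  · simp
  have a := clique3 (h1.N hv) (h.mono (N_sub _ _ _ _)) (h2.mono (N_sub _ _ _ _))
  have b := clique3 (h2.N hv) (h.swap.mono (N_sub _ _ _ _)) (h1.mono (N_sub _ _ _ _))
  have := card_N hij h hv
  omega

theorem parity (hc : Gal c) (i : κ) (S : Finset α) (h : ∀ v ∈ S, (N c i v S).card = 3) : Even S.card := by
  classical
  let G : SimpleGraph S :=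
    { Adj := fun x y => E c i x.1 y.1
      symm := ⟨fun x y h => h.symm hc⟩
      loopless := ⟨fun x h => h.1 rfl⟩ }
  have hd : ∀ v : S, G.degree v = 3 := by
    intro v
    rw [← h v.1 v.2, ← SimpleGraph.card_neighborFinset_eq_degree,
      ← Finset.card_map (Function.Embedding.subtype (· ∈ S))]
    congr 1
    ext x
    simp only [Finset.mem_map, SimpleGraph.mem_neighborFinset, mem_N]
    constructor
    · rintro ⟨y, hy, rfl⟩
      exact ⟨y.2, hy⟩
    · rintro ⟨hx, hy⟩
      exact ⟨⟨x, hx⟩, hy, rfl⟩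
  have := G.sum_degrees_eq_twice_card_edges
  simp only [hd, Finset.sum_const, Finset.card_univ, Fintype.card_coe, smul_eq_mul] at this
  rw [Nat.even_iff]; omega

theorem R34 (hc : Gal c) (hij : i ≠ j) (h : Two c i j S) (h1 : NT c i S) (h2 : NK c j S) :
    S.card ≤ 8 := by
  by_contra hcon
  obtain ⟨T, hT, hT9⟩ := Finset.exists_subset_card_eq (show 9 ≤ S.card by omega)
  replace h := h.mono hT
  replace h1 := h1.mono hT
  replace h2 := h2.mono hT
  have := parity hc i T (fun v hv => by
    have a := clique4 (h1.N hv) (h.mono (N_sub _ _ _ _)) (h2.mono (N_sub _ _ _ _))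
    have b := R33 hij (h.mono (N_sub _ _ _ _)) (h1.mono (N_sub _ _ _ _)) (h2.N hv)
    have := card_N hij h hv
    omega)
  rw [hT9] at this
  exact absurd this (by decide)

theorem R44 (hc : Gal c) (hij : i ≠ j) (h : Two c i j S) (h1 : NK c i S) (h2 : NK c j S) :
    S.card ≤ 17 := by
  rcases S.eq_empty_or_nonempty with rfl | ⟨v, hv⟩
  · simp
  have a := R34 hc hij (h.mono (N_sub _ _ _ _)) (h1.N hv) (h2.mono (N_sub _ _ _ _))
  have b := R34 hc hij.symm (h.swap.mono (N_sub _ _ _ _)) (h2.N hv) (h1.mono (N_sub _ _ _ _))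
  have := card_N hij h hv
  omega

/-- given a `K₄` in an `H`-free colour, each other vertex sends at most one edge of that colour -/
theorem K4_out (hc : Gal c) (h : NH c i S) {x y z w v : α} (hx : x ∈ S) (hy : y ∈ S) (hz : z ∈ S)
    (hw : w ∈ S) (hv : v ∈ S) (e1 : E c i x y) (e2 : E c i x z) (e3 : E c i x w) (e4 : E c i y z)
    (e5 : E c i y w) (e6 : E c i z w) (hvx : v ≠ x) (hvy : v ≠ y) (hvz : v ≠ z) (hvw : v ≠ w) :
    ¬ (E c i v x ∧ E c i v y) ∧ ¬ (E c i v x ∧ E c i v z) ∧ ¬ (E c i v x ∧ E c i v w) ∧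
    ¬ (E c i v y ∧ E c i v z) ∧ ¬ (E c i v y ∧ E c i v w) ∧ ¬ (E c i v z ∧ E c i v w) := by
  have f1 := e1.symm hc
  have f2 := e2.symm hc
  have f3 := e3.symm hc
  have f4 := e4.symm hc
  have f5 := e5.symm hc
  have f6 := e6.symm hc
  refine ⟨?_, ?_, ?_, ?_, ?_, ?_⟩ <;> rintro ⟨g1, g2⟩
  · exact h x hx y hy z hz w hw v hv e1 e2 e3 e4 e5 e6 g1 g2 hvz hvw
  · exact h x hx z hz y hy w hw v hv e2 e1 e3 f4 e6 e5 g1 g2 hvy hvw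
  · exact h x hx w hw y hy z hz v hv e3 e1 e2 f5 f6 e4 g1 g2 hvy hvz
  · exact h y hy z hz x hx w hw v hv e4 f1 e5 f2 e6 e3 g1 g2 hvx hvw
  · exact h y hy w hw x hx z hz v hv e5 f1 e4 f3 f6 e2 g1 g2 hvx hvz
  · exact h z hz w hw x hx y hy v hv e6 f2 f4 f3 f5 e1 g1 g2 hvx hvy

theorem R3H (hc : Gal c) (hij : i ≠ j) (h : Two c i j S) (h1 : NT c i S) (h2 : NH c j S) :
    S.card ≤ 8 := by
  by_cases hK : NK c j S
  · exact R34 hc hij h h1 hK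
  unfold NK at hK
  push Not at hK
  obtain ⟨x, hx, y, hy, z, hz, w, hw, e1, e2, e3, e4, e5, e6, -⟩ := hK
  have hW : NE c i (S \ {x, y, z, w}) := by
    intro u hu v hv e
    simp only [Finset.mem_sdiff, Finset.mem_insert, Finset.mem_singleton, not_or] at hu hv
    obtain ⟨hu, u1, u2, u3, u4⟩ := hu
    obtain ⟨hv, v1, v2, v3, v4⟩ := hv
    have a := K4_out hc h2 hx hy hz hw hu e1 e2 e3 e4 e5 e6 u1 u2 u3 u4
    have b := K4_out hc h2 hx hy hz hw hv e1 e2 e3 e4 e5 e6 v1 v2 v3 v4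
    have key : ∀ q ∈ S, u ≠ q → v ≠ q → E c j u q ∨ E c j v q := by
      intro q hq n1 n2
      by_contra hcon
      rw [not_or] at hcon
      have t1 : E c i u q := ⟨n1, (h u hu q hq n1).resolve_right (fun e => hcon.1 ⟨n1, e⟩)⟩
      have t2 : E c i v q := ⟨n2, (h v hv q hq n2).resolve_right (fun e => hcon.2 ⟨n2, e⟩)⟩
      exact h1 u hu v hv q hq e t1 t2
    have k1 := key x hx u1 v1
    have k2 := key y hy u2 v2
    have k3 := key z hz u3 v3
    have k4 := key w hw u4 v4
    clear key
    grind
  have := clique5 hW (h.mono Finset.sdiff_subset) (h2.mono Finset.sdiff_subset)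
  have := Finset.le_card_sdiff {x, y, z, w} S
  have := Finset.card_le_four (a := x) (b := y) (c := z) (d := w)
  omega

theorem RHH_aux (hc : Gal c) (hij : i ≠ j) (h : Two c i j S) (h1 : NH c i S) (h2 : NH c j S)
    (hK : ¬ NK c i S) : S.card ≤ 17 := by
  unfold NK at hK
  push Not at hK
  obtain ⟨x, hx, y, hy, z, hz, w, hw, e1, e2, e3, e4, e5, e6, -⟩ := hK
  have hW : NT c j (S \ {x, y, z, w}) := by
    intro u hu v hv t ht k1 k2 k3
    simp only [Finset.mem_sdiff, Finset.mem_insert, Finset.mem_singleton, not_or] at hu hv ht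
    obtain ⟨hu, u1, u2, u3, u4⟩ := hu
    obtain ⟨hv, v1, v2, v3, v4⟩ := hv
    obtain ⟨ht, t1, t2, t3, t4⟩ := ht
    have a := K4_out hc h1 hx hy hz hw hu e1 e2 e3 e4 e5 e6 u1 u2 u3 u4
    have b := K4_out hc h1 hx hy hz hw hv e1 e2 e3 e4 e5 e6 v1 v2 v3 v4
    have d := K4_out hc h1 hx hy hz hw ht e1 e2 e3 e4 e5 e6 t1 t2 t3 t4
    have o : ∀ p ∈ S, ∀ q ∈ S, p ≠ q → E c i p q ∨ E c j p q := by
      intro p hp q hq n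
      rcases h p hp q hq n with e | e
      · exact Or.inl ⟨n, e⟩
      · exact Or.inr ⟨n, e⟩
    have k1' := k1.symm hc
    have k2' := k2.symm hc
    have k3' := k3.symm hc
    have s := fun {p q : α} (h : E c j p q) => h.symm hc
    -- a common neighbour `p`, another vertex `q` with two neighbours among `u v t`
    have fin : ∀ p ∈ S, ∀ q ∈ S, p ≠ q → q ≠ u → q ≠ v → q ≠ t → E c j u p → E c j v p → E c j t p →
        ((E c j u q ∧ E c j v q) ∨ (E c j u q ∧ E c j t q) ∨ (E c j v q ∧ E c j t q)) → False := by
      intro p hp q hq n n1 n2 n3 f1 f2 f3 hh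
      rcases hh with ⟨g1, g2⟩ | ⟨g1, g2⟩ | ⟨g1, g2⟩
      · exact h2 u hu v hv t ht p hp q hq k1 k2 f1 k3 f2 f3 (s g1) (s g2) n3 n.symm
      · exact h2 u hu t ht v hv p hp q hq k2 k1 f1 k3' f3 f2 (s g1) (s g2) n2 n.symm
      · exact h2 v hv t ht u hu p hp q hq k3 k1' f2 k2' f3 f1 (s g1) (s g2) n1 n.symm
    have ox := fun p hp n => o p hp x hx n
    have oy := fun p hp n => o p hp y hy n
    have oz := fun p hp n => o p hp z hz n
    have ow := fun p hp n => o p hp w hw n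
    have f12 := fin x hx y hy e1.1 (Ne.symm u2) (Ne.symm v2) (Ne.symm t2)
    have f21 := fin y hy x hx e1.1.symm (Ne.symm u1) (Ne.symm v1) (Ne.symm t1)
    have f13 := fin x hx z hz e2.1 (Ne.symm u3) (Ne.symm v3) (Ne.symm t3)
    have f31 := fin z hz x hx e2.1.symm (Ne.symm u1) (Ne.symm v1) (Ne.symm t1)
    have f14 := fin x hx w hw e3.1 (Ne.symm u4) (Ne.symm v4) (Ne.symm t4)
    have f41 := fin w hw x hx e3.1.symm (Ne.symm u1) (Ne.symm v1) (Ne.symm t1)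
    have f23 := fin y hy z hz e4.1 (Ne.symm u3) (Ne.symm v3) (Ne.symm t3)
    have f32 := fin z hz y hy e4.1.symm (Ne.symm u2) (Ne.symm v2) (Ne.symm t2)
    have f24 := fin y hy w hw e5.1 (Ne.symm u4) (Ne.symm v4) (Ne.symm t4)
    have f42 := fin w hw y hy e5.1.symm (Ne.symm u2) (Ne.symm v2) (Ne.symm t2)
    have f34 := fin z hz w hw e6.1 (Ne.symm u4) (Ne.symm v4) (Ne.symm t4)
    have f43 := fin w hw z hz e6.1.symm (Ne.symm u3) (Ne.symm v3) (Ne.symm t3)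
    have q1 := ox u hu u1
    have q2 := oy u hu u2
    have q3 := oz u hu u3
    have q4 := ow u hu u4
    have q5 := ox v hv v1
    have q6 := oy v hv v2
    have q7 := oz v hv v3
    have q8 := ow v hv v4
    have q9 := ox t ht t1
    have q10 := oy t ht t2
    have q11 := oz t ht t3
    have q12 := ow t ht t4
    clear ox oy oz ow fin o s
    clear h h1 h2 hij
    -- purely propositional
    generalize E c i u x = iux at *
    generalize E c i u y = iuy at *
    generalize E c i u z = iuz at *
    generalize E c i u w = iuw at *
    generalize E c i v x = ivx at *
    generalize E c i v y = ivy at *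
    generalize E c i v z = ivz at *
    generalize E c i v w = ivw at *
    generalize E c i t x = itx at *
    generalize E c i t y = ity at *
    generalize E c i t z = itz at *
    generalize E c i t w = itw at *
    generalize E c j u x = jux at *
    generalize E c j u y = juy at *
    generalize E c j u z = juz at *
    generalize E c j u w = juw at *
    generalize E c j v x = jvx at *
    generalize E c j v y = jvy at *
    generalize E c j v z = jvz at *
    generalize E c j v w = jvw at *
    generalize E c j t x = jtx at *
    generalize E c j t y = jty at *
    generalize E c j t z = jtz at *
    generalize E c j t w = jtw at *
    clear k1 k2 k3 k1' k2' k3' e1 e2 e3 e4 e5 e6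
    grind
  have := R3H hc hij.symm (h.swap.mono Finset.sdiff_subset) hW (h1.mono Finset.sdiff_subset)
  have := Finset.le_card_sdiff {x, y, z, w} S
  have := Finset.card_le_four (a := x) (b := y) (c := z) (d := w)
  omega

theorem RHH (hc : Gal c) (hij : i ≠ j) (h : Two c i j S) (h1 : NH c i S) (h2 : NH c j S) :
    S.card ≤ 17 := by
  by_cases hK : NK c i S
  · by_cases hK' : NK c j S
    · exact R44 hc hij h hK hK'
    · exact RHH_aux hc hij.symm h.swap h2 h1 hK'
  · exact RHH_aux hc hij h h1 h2 hK
end GRaux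


set_option linter.unusedSectionVars false
namespace GRaux
variable {α κ : Type} [DecidableEq α] [DecidableEq κ]
variable {c : α → α → κ} {i j : κ} {S A B R : Finset α}

theorem Cut.E1 (h : Cut c i i A B) {x y : α} (hx : x ∈ A) (hy : y ∈ B) : E c i x y :=
  ⟨fun e => Finset.disjoint_left.1 h.2.2.1 hx (e ▸ hy), by simpa using h.2.2.2 x hx y hy⟩

theorem NP.mono {T : Finset α} (h : NP c i S) (hT : T ⊆ S) : NP c i T :=
  fun x hx y hy z hz w hw => h x (hT hx) y (hT hy) z (hT hz) w (hT hw)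

theorem not_NE : ¬ NE c i S ↔ ∃ x ∈ S, ∃ y ∈ S, E c i x y := by
  unfold NE; push Not; rfl

theorem J3 (h : Cut c i i A B) (hA : A ⊆ S) (hB : B ⊆ S) (hS : NT c i S) : NE c i A := by
  intro x hx y hy e
  obtain ⟨u, hu⟩ := h.2.1
  exact hS x (hA hx) y (hA hy) u (hB hu) e (h.E1 hx hu) (h.E1 hy hu)

theorem JH2 (hc : Gal c) (h : Cut c i i A B) (hA : A ⊆ S) (hB : B ⊆ S) (hS : NH c i S)
    (eA : ¬ NE c i A) (eB : ¬ NE c i B) : A.card ≤ 2 := by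
  rw [not_NE] at eA eB
  obtain ⟨x, hx, y, hy, e⟩ := eA
  obtain ⟨u, hu, v, hv, f⟩ := eB
  by_contra hcon
  have : ∃ z ∈ A, z ∉ ({x, y} : Finset α) := by
    by_contra hh
    push Not at hh
    have := Finset.card_le_card (show A ⊆ {x, y} from hh)
    have := Finset.card_le_two (a := x) (b := y)
    omega
  obtain ⟨z, hz, hzn⟩ := this
  simp only [Finset.mem_insert, Finset.mem_singleton, not_or] at hzn
  exact hS u (hB hu) v (hB hv) x (hA hx) y (hA hy) z (hA hz) f ((h.E1 hx hu).symm hc)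
    ((h.E1 hy hu).symm hc) ((h.E1 hx hv).symm hc) ((h.E1 hy hv).symm hc) e (h.E1 hz hu) (h.E1 hz hv)
    hzn.1 hzn.2

theorem JH1 (hc : Gal c) (h : Cut c i i A B) (hA : A ⊆ S) (hB : B ⊆ S) (hS : NH c i S)
    (h2 : 2 ≤ B.card) : NT c i A := by
  intro x hx y hy z hz e1 e2 e3
  obtain ⟨u, hu, v, hv, huv⟩ := Finset.one_lt_card.1 h2
  exact hS x (hA hx) y (hA hy) z (hA hz) u (hB hu) v (hB hv) e1 e2 (h.E1 hx hu) e3 (h.E1 hy hu)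
    (h.E1 hz hu) ((h.E1 hx hv).symm hc) ((h.E1 hy hv).symm hc) (h.E1 hz hv).1.symm huv.symm

theorem JHP (hc : Gal c) (h : Cut c i i A B) (hA : A ⊆ S) (hB : B ⊆ S) (hS : NH c i S) :
    NP c i A := by
  intro t ht u hu v hv z hz e1 e2 e3 e4 n1 n2
  obtain ⟨b, hb⟩ := h.2.1
  exact hS t (hA ht) b (hB hb) u (hA hu) v (hA hv) z (hA hz) (h.E1 ht hb) e1 e2
    ((h.E1 hu hb).symm hc) ((h.E1 hv hb).symm hc) e3 e4 (h.E1 hz hb) n1 n2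

theorem PAW (hc : Gal c) : ∀ (n : ℕ) (A : Finset α), A.card = n → NP c i A →
    ∃ T ⊆ A, NT c i T ∧ 2 * A.card ≤ 3 * T.card := by
  intro n
  induction n using Nat.strong_induction_on with
  | _ n ih =>
    intro A hn hA
    by_cases hT : NT c i A
    · exact ⟨A, subset_rfl, hT, by omega⟩
    unfold NT at hT
    push Not at hT
    obtain ⟨x, hx, y, hy, z, hz, e1, e2, e3, -⟩ := hT
    have h3 : ({x, y, z} : Finset α).card = 3 := Finset.card_eq_three.2 ⟨x, y, z, e1.1, e2.1, e3.1, rfl⟩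
    have hsub : ({x, y, z} : Finset α) ⊆ A := by
      intro w; simp only [Finset.mem_insert, Finset.mem_singleton]
      rintro (rfl | rfl | rfl) <;> assumption
    have hcd := Finset.card_sdiff_add_card_eq_card hsub
    obtain ⟨T, hT1, hT2, hT3⟩ := ih (A \ {x, y, z}).card (by omega) _ rfl (hA.mono Finset.sdiff_subset)
    have hout : ∀ w ∈ T, ¬ E c i w x ∧ ¬ E c i w y := by
      intro w hw
      have := hT1 hw
      simp only [Finset.mem_sdiff, Finset.mem_insert, Finset.mem_singleton, not_or] at this
      obtain ⟨h1, h2, h3, h4⟩ := this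
      exact ⟨fun e => hA x hx y hy z hz w h1 e1 e2 e3 e h3 h4,
        fun e => hA y hy x hx z hz w h1 (e1.symm hc) e3 e2 e h2 h4⟩
    have hxT : x ∉ T := fun h => by have := hT1 h; simp at this
    have hyT : y ∉ T := fun h => by have := hT1 h; simp at this
    refine ⟨insert x (insert y T), ?_, ?_, ?_⟩
    · intro w
      simp only [Finset.mem_insert]
      rintro (rfl | rfl | h)
      · exact hx
      · exact hy
      · exact Finset.sdiff_subset (hT1 h)
    · have hs := fun {p q : α} (h : E c i p q) => h.symm hc
      have hirr : ∀ p, ¬ E c i p p := fun p h => h.1 rfl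
      intro p hp q hq r hr f1 f2 f3
      simp only [Finset.mem_insert] at hp hq hr
      have g1 := hs f1
      have g2 := hs f2
      have g3 := hs f3
      rcases hp with rfl | rfl | hp <;> rcases hq with rfl | rfl | hq <;>
        rcases hr with rfl | rfl | hr
      all_goals first
        | exact hirr _ f1
        | exact hirr _ f2
        | exact hirr _ f3
        | exact hT2 _ hp _ hq _ hr f1 f2 f3
        | exact (hout _ hp).1 f1
        | exact (hout _ hp).2 f1
        | exact (hout _ hp).1 f2
        | exact (hout _ hp).2 f2
        | exact (hout _ hq).1 g1
        | exact (hout _ hq).2 g1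
        | exact (hout _ hq).1 f3
        | exact (hout _ hq).2 f3
        | exact (hout _ hr).1 g2
        | exact (hout _ hr).2 g2
        | exact (hout _ hr).1 g3
        | exact (hout _ hr).2 g3
    · rw [Finset.card_insert_of_notMem (by simp [e1.1, hxT]), Finset.card_insert_of_notMem hyT]
      omega

theorem ALT (hc : Gal c) (h : Cut c i i A B) (hA : A ⊆ S) (hB : B ⊆ S) (hS : NH c i S) :
    NT c i A ∨ (B.card = 1 ∧ NP c i A) := by
  by_cases h2 : 2 ≤ B.card
  · exact Or.inl (JH1 hc h hA hB hS h2)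
  · have := Finset.card_pos.2 h.2.1
    exact Or.inr ⟨by omega, JHP hc h hA hB hS⟩

/-- twice the size bound -/
def g (p r : ℕ) : ℕ := 5 ^ (p / 2) * 17 ^ (r / 2) *
  (if p % 2 = 0 then (if r % 2 = 0 then 2 else 8) else (if r % 2 = 0 then 4 else 17))

theorem g_ee (a b : ℕ) : g (2 * a) (2 * b) = 2 * (5 ^ a * 17 ^ b) := by
  simp [g]; ring
theorem g_oe (a b : ℕ) : g (2 * a + 1) (2 * b) = 4 * (5 ^ a * 17 ^ b) := by
  have : (2 * a + 1) / 2 = a := by omega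
  have h2 : (2 * a + 1) % 2 = 1 := by omega
  simp [g, this, h2]; ring
theorem g_eo (a b : ℕ) : g (2 * a) (2 * b + 1) = 8 * (5 ^ a * 17 ^ b) := by
  have : (2 * b + 1) / 2 = b := by omega
  have h2 : (2 * b + 1) % 2 = 1 := by omega
  simp [g, this, h2]; ring
theorem g_oo (a b : ℕ) : g (2 * a + 1) (2 * b + 1) = 17 * (5 ^ a * 17 ^ b) := by
  have : (2 * b + 1) / 2 = b := by omega
  have h2 : (2 * b + 1) % 2 = 1 := by omega
  have h3 : (2 * a + 1) / 2 = a := by omega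
  have h4 : (2 * a + 1) % 2 = 1 := by omega
  simp [g, this, h2, h3, h4]; ring

theorem g_p2 (p r : ℕ) : g (p + 2) r = 5 * g p r := by
  have h1 : (p + 2) / 2 = p / 2 + 1 := by omega
  have h2 : (p + 2) % 2 = p % 2 := by omega
  simp only [g, h1, h2]; ring
theorem g_r2 (p r : ℕ) : g p (r + 2) = 17 * g p r := by
  have h1 : (r + 2) / 2 = r / 2 + 1 := by omega
  have h2 : (r + 2) % 2 = r % 2 := by omega
  simp only [g, h1, h2]; ring

theorem grid (p r : ℕ) : ∃ X : ℕ, 1 ≤ X ∧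
    ((g p r = 2 * X ∧ g (p + 1) r = 4 * X ∧ g p (r + 1) = 8 * X ∧ g (p + 1) (r + 1) = 17 * X) ∨
     (g p r = 4 * X ∧ g (p + 1) r = 10 * X ∧ g p (r + 1) = 17 * X ∧ g (p + 1) (r + 1) = 40 * X) ∨
     (g p r = 8 * X ∧ g (p + 1) r = 17 * X ∧ g p (r + 1) = 34 * X ∧ g (p + 1) (r + 1) = 68 * X) ∨
     (g p r = 17 * X ∧ g (p + 1) r = 40 * X ∧ g p (r + 1) = 68 * X ∧ g (p + 1) (r + 1) = 170 * X)) := by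
  refine ⟨5 ^ (p / 2) * 17 ^ (r / 2), Nat.one_le_iff_ne_zero.2 (by positivity), ?_⟩
  rcases Nat.even_or_odd' p with ⟨a, rfl | rfl⟩ <;> rcases Nat.even_or_odd' r with ⟨b, rfl | rfl⟩
  · left
    have h1 : 2 * a / 2 = a := by omega
    have h2 : 2 * b / 2 = b := by omega
    rw [g_ee, g_oe, g_eo, g_oo, h1, h2]; simp
  · right; right; left
    have h1 : 2 * a / 2 = a := by omega
    have h2 : (2 * b + 1) / 2 = b := by omega
    have h3 : 2 * b + 1 + 1 = 2 * b + 2 := by ring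
    rw [h3, g_r2, g_r2, g_ee, g_oe, g_eo, g_oo, h1, h2]
    refine ⟨?_, ?_, ?_, ?_⟩ <;> ring
  · right; left
    have h1 : (2 * a + 1) / 2 = a := by omega
    have h2 : (2 * b) / 2 = b := by omega
    have h3 : 2 * a + 1 + 1 = 2 * a + 2 := by ring
    rw [h3, g_p2, g_p2, g_ee, g_oe, g_eo, g_oo, h1, h2]
    refine ⟨?_, ?_, ?_, ?_⟩ <;> ring
  · right; right; right
    have h1 : (2 * a + 1) / 2 = a := by omega
    have h2 : (2 * b + 1) / 2 = b := by omega
    have h3 : 2 * a + 1 + 1 = 2 * a + 2 := by ring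
    have h4 : 2 * b + 1 + 1 = 2 * b + 2 := by ring
    rw [h3, h4, g_p2, g_p2, g_r2, g_r2, g_ee, g_oe, g_eo, g_oo, h1, h2]
    refine ⟨?_, ?_, ?_, ?_⟩ <;> ring

/-- `S` uses only the colours in `P ∪ Q`; those in `P` triangle-free, those in `Q` are `H`-free -/
structure Good (c : α → α → κ) (S : Finset α) (P Q : Finset κ) : Prop where
  disj : Disjoint P Q
  cols : ∀ x ∈ S, ∀ y ∈ S, x ≠ y → c x y ∈ P ∪ Q
  tri : ∀ i ∈ P, NT c i S
  hh : ∀ i ∈ Q, NH c i S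

variable {P Q : Finset κ}

theorem Good.mono (h : Good c S P Q) (hA : A ⊆ S) : Good c A P Q :=
  ⟨h.disj, fun x hx y hy => h.cols x (hA hx) y (hA hy), fun i hi => (h.tri i hi).mono hA,
    fun i hi => (h.hh i hi).mono hA⟩

theorem Good.dropP (h : Good c S P Q) (hE : NE c i S) : Good c S (P.erase i) Q := by
  refine ⟨h.disj.mono_left (Finset.erase_subset _ _), ?_, fun k hk => h.tri k (Finset.mem_of_mem_erase hk), h.hh⟩
  intro x hx y hy n
  have h1 := h.cols x hx y hy n
  have h2 : c x y ≠ i := fun e => hE x hx y hy ⟨n, e⟩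
  simp only [Finset.mem_union, Finset.mem_erase] at h1 ⊢
  tauto

theorem Good.dropQ (h : Good c S P Q) (hE : NE c i S) : Good c S P (Q.erase i) := by
  refine ⟨h.disj.mono_right (Finset.erase_subset _ _), ?_, h.tri, fun k hk => h.hh k (Finset.mem_of_mem_erase hk)⟩
  intro x hx y hy n
  have h1 := h.cols x hx y hy n
  have h2 : c x y ≠ i := fun e => hE x hx y hy ⟨n, e⟩
  simp only [Finset.mem_union, Finset.mem_erase] at h1 ⊢
  tauto

theorem Good.down (h : Good c S P Q) (hE : NT c i S) : Good c S (insert i P) (Q.erase i) := by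
  refine ⟨?_, ?_, ?_, fun k hk => h.hh k (Finset.mem_of_mem_erase hk)⟩
  · rw [Finset.disjoint_insert_left]
    exact ⟨by simp, h.disj.mono_right (Finset.erase_subset _ _)⟩
  · intro x hx y hy n
    have h1 := h.cols x hx y hy n
    simp only [Finset.mem_union, Finset.mem_erase, Finset.mem_insert] at h1 ⊢
    tauto
  · intro k hk
    rcases Finset.mem_insert.1 hk with rfl | hk
    · exact hE
    · exact h.tri k hk

/-- induction hypothesis -/
def IH (c : α → α → κ) (n : ℕ) : Prop := ∀ T : Finset α, T.card < n → ∀ P Q : Finset κ,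
  Good c T P Q → 2 * T.card ≤ g P.card Q.card

theorem Good.notQ (h : Good c S P Q) (hi : i ∈ Q) : i ∉ P := fun h' => Finset.disjoint_left.1 h.disj h' hi

/-- the case of a monochromatic cut -/
theorem case_cut (hc : Gal c) (ih : IH c S.card) (h : Good c S P Q) (hX : Cut c i i A B)
    (hU : A ∪ B = S) : 2 * S.card ≤ g P.card Q.card := by
  have hA : A ⊆ S := hU ▸ Finset.subset_union_left
  have hB : B ⊆ S := hU ▸ Finset.subset_union_right
  have hcard : A.card + B.card = S.card := by rw [← hU, Finset.card_union_of_disjoint hX.2.2.1]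
  have hAp := Finset.card_pos.2 hX.1
  have hBp := Finset.card_pos.2 hX.2.1
  have hi : i ∈ P ∪ Q := by
    obtain ⟨x, hx⟩ := hX.1
    obtain ⟨y, hy⟩ := hX.2.1
    have e := hX.E1 hx hy
    exact e.2 ▸ h.cols x (hA hx) y (hB hy) e.1
  have hX' := hX.swap hc
  rcases Finset.mem_union.1 hi with hi | hi
  · have a := ih A (by omega) _ _ ((h.mono hA).dropP (J3 hX hA hB (h.tri i hi)))
    have b := ih B (by omega) _ _ ((h.mono hB).dropP (J3 hX' hB hA (h.tri i hi)))
    obtain ⟨p, hp⟩ : ∃ p, P.card = p + 1 := ⟨P.card - 1, by have := Finset.card_pos.2 ⟨i, hi⟩; omega⟩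
    rw [Finset.card_erase_of_mem hi, hp, Nat.add_sub_cancel] at a b
    rw [hp]
    obtain ⟨X, hX1, hg⟩ := grid p Q.card
    omega
  · have hH := h.hh i hi
    have hip := h.notQ hi
    obtain ⟨r, hr⟩ : ∃ r, Q.card = r + 1 := ⟨Q.card - 1, by have := Finset.card_pos.2 ⟨i, hi⟩; omega⟩
    obtain ⟨X, hX1, hg⟩ := grid P.card r
    -- `A'` arbitrary side, `B'` without edges
    have key : ∀ A' B' : Finset α, Cut c i i A' B' → A' ⊆ S → B' ⊆ S → A'.card + B'.card = S.card →
        NE c i B' → 2 * S.card ≤ g P.card Q.card := by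
      intro A' B' hX hA hB hcard hE
      have hAp := Finset.card_pos.2 hX.1
      have hBp := Finset.card_pos.2 hX.2.1
      have b := ih B' (by omega) _ _ ((h.mono hB).dropQ hE)
      rw [Finset.card_erase_of_mem hi, hr, Nat.add_sub_cancel] at b
      rw [hr]
      rcases ALT hc hX hA hB hH with hT | ⟨h1, hP⟩
      · have a := ih A' (by omega) _ _ ((h.mono hA).down hT)
        rw [Finset.card_erase_of_mem hi, hr, Nat.add_sub_cancel, Finset.card_insert_of_notMem hip] at a
        omega
      · obtain ⟨T, hT1, hT2, hT3⟩ := PAW hc _ A' rfl hP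
        have := Finset.card_le_card hT1
        have a := ih T (by omega) _ _ ((h.mono (hT1.trans hA)).down hT2)
        rw [Finset.card_erase_of_mem hi, hr, Nat.add_sub_cancel, Finset.card_insert_of_notMem hip] at a
        omega
    by_cases hEB : NE c i B
    · exact key A B hX hA hB hcard hEB
    by_cases hEA : NE c i A
    · exact key B A hX' hB hA (by omega) hEA
    have a := JH2 hc hX hA hB hH hEA hEB
    have b := JH2 hc hX' hB hA hH hEB hEA
    rw [hr]
    omega

/-- colours `i ∈ P`, `j ∈ Q`, a part with an edge of colour `j` -/
theorem case_PQ (hc : Gal c) (ih : IH c S.card) (h : Good c S P Q) (hi : i ∈ P) (hj : j ∈ Q)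
    (hR : Cut c i i A R) (hB : Cut c j j A B) (sA : A ⊆ S) (sR : R ⊆ S) (sB : B ⊆ S)
    (hcard : A.card + R.card + B.card = S.card) (hE : ¬ NE c j A) :
    2 * S.card ≤ g P.card Q.card := by
  have hAp := Finset.card_pos.2 hR.1
  have hRp := Finset.card_pos.2 hR.2.1
  have hBp := Finset.card_pos.2 hB.2.1
  have hH := h.hh j hj
  have hjp := h.notQ hj
  obtain ⟨r, hr⟩ : ∃ r, Q.card = r + 1 := ⟨Q.card - 1, by have := Finset.card_pos.2 ⟨j, hj⟩; omega⟩
  obtain ⟨p, hp⟩ : ∃ p, P.card = p + 1 := ⟨P.card - 1, by have := Finset.card_pos.2 ⟨i, hi⟩; omega⟩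
  obtain ⟨X, hX1, hg⟩ := grid p r
  have aE := J3 hR sA sR (h.tri i hi)
  have rE := J3 (hR.swap hc) sR sA (h.tri i hi)
  have r1 := ih R (by omega) _ _ ((h.mono sR).dropP rE)
  rw [Finset.card_erase_of_mem hi, hp, Nat.add_sub_cancel, hr] at r1
  have low : ∀ T ⊆ A, NT c j T → 2 * T.card ≤ g (p + 1) r := by
    intro T hT hN
    have := Finset.card_le_card hT
    have := ih T (by omega) _ _ (((h.mono (hT.trans sA)).dropP (aE.mono hT)).down hN)
    rwa [Finset.card_erase_of_mem hj, hr, Nat.add_sub_cancel,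
      Finset.card_insert_of_notMem (fun h' => hjp (Finset.mem_of_mem_erase h')),
      Finset.card_erase_of_mem hi, hp, Nat.add_sub_cancel] at this
  rw [hr, hp]
  by_cases hEB : NE c j B
  · have b := ih B (by omega) _ _ ((h.mono sB).dropQ hEB)
    rw [Finset.card_erase_of_mem hj, hr, Nat.add_sub_cancel, hp] at b
    rcases ALT hc hB sA sB hH with hT | ⟨h1, hP⟩
    · have a := low A subset_rfl hT
      omega
    · obtain ⟨T, hT1, hT2, hT3⟩ := PAW hc _ A rfl hP
      have a := low T hT1 hT2
      omega
  · have a := JH2 hc hB sA sB hH hE hEB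
    have b := JH2 hc (hB.swap hc) sB sA hH hEB hE
    omega

/-- colours `i, j ∈ Q`, a part with an edge of colour `i` -/
theorem case_QQ (hc : Gal c) (ih : IH c S.card) (h : Good c S P Q) (hij : i ≠ j) (hi : i ∈ Q)
    (hj : j ∈ Q)
    (hR : Cut c i i A R) (hB : Cut c j j A B) (sA : A ⊆ S) (sR : R ⊆ S) (sB : B ⊆ S)
    (hcard : A.card + R.card + B.card = S.card) (hE : ¬ NE c i A) :
    2 * S.card ≤ g P.card Q.card := by
  have hAp := Finset.card_pos.2 hR.1
  have hRp := Finset.card_pos.2 hR.2.1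
  have hBp := Finset.card_pos.2 hB.2.1
  have hHi := h.hh i hi
  have hHj := h.hh j hj
  have hip := h.notQ hi
  have hjp := h.notQ hj
  have hjq : j ∈ Q.erase i := Finset.mem_erase.2 ⟨hij.symm, hj⟩
  obtain ⟨r, hr⟩ : ∃ r, Q.card = r + 2 := ⟨Q.card - 2, by
    have := Finset.card_pos.2 ⟨j, hjq⟩
    have := Finset.card_erase_of_mem hi
    omega⟩
  obtain ⟨p, hp⟩ : ∃ p, P.card = p := ⟨_, rfl⟩
  have c1 : (Q.erase i).card = r + 1 := by rw [Finset.card_erase_of_mem hi, hr]; rfl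
  have c2 : (Q.erase j).card = r + 1 := by rw [Finset.card_erase_of_mem hj, hr]; rfl
  have c3 : ((Q.erase i).erase j).card = r := by rw [Finset.card_erase_of_mem hjq, c1]; rfl
  have c4 : (insert i P).card = p + 1 := by rw [Finset.card_insert_of_notMem hip, hp]
  have c5 : (insert j P).card = p + 1 := by rw [Finset.card_insert_of_notMem hjp, hp]
  have c6 : (insert j (insert i P)).card = p + 2 := by
    rw [Finset.card_insert_of_notMem (by simp [hij.symm, hjp]), c4]
  obtain ⟨X, hX1, hg⟩ := grid p r
  have gp := g_p2 p r
  have gr := g_r2 p r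
  rw [hp, hr]
  have lowR : NE c i R → 2 * R.card ≤ g p (r + 1) := by
    intro hE
    have := ih R (by omega) _ _ ((h.mono sR).dropQ hE)
    rwa [c1, hp] at this
  by_cases hEj : NE c j A
  · have h2 : 2 ≤ A.card := by
      obtain ⟨x, hx, y, hy, e⟩ := not_NE.1 hE
      exact Finset.one_lt_card.2 ⟨x, hx, y, hy, e.1⟩
    have hBT := JH1 hc (hB.swap hc) sB sA hHj h2
    have b := ih B (by omega) _ _ ((h.mono sB).down hBT)
    rw [c2, c5] at b
    have low : ∀ T ⊆ A, NT c i T → 2 * T.card ≤ g (p + 1) r := by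
      intro T hT hN
      have := Finset.card_le_card hT
      have := ih T (by omega) _ _ (((h.mono (hT.trans sA)).down hN).dropQ (hEj.mono hT))
      rwa [c3, c4] at this
    by_cases hER : NE c i R
    · have r1 := lowR hER
      rcases ALT hc hR sA sR hHi with hT | ⟨h1, hP⟩
      · have a := low A subset_rfl hT
        omega
      · obtain ⟨T, hT1, hT2, hT3⟩ := PAW hc _ A rfl hP
        have a := low T hT1 hT2
        omega
    · have a := JH2 hc hR sA sR hHi hE hER
      have b' := JH2 hc (hR.swap hc) sR sA hHi hER hE
      omega
  · have h3 : 3 ≤ A.card := by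
      by_contra hcon
      obtain ⟨x, hx, y, hy, e⟩ := not_NE.1 hE
      obtain ⟨u, hu, v, hv, f⟩ := not_NE.1 hEj
      have hxy : A = {x, y} := by
        symm
        apply Finset.eq_of_subset_of_card_le
        · intro w; simp only [Finset.mem_insert, Finset.mem_singleton]
          rintro (rfl | rfl) <;> assumption
        · rw [Finset.card_pair e.1]; omega
      rw [hxy] at hu hv
      simp only [Finset.mem_insert, Finset.mem_singleton] at hu hv
      have e' := e.symm hc
      obtain ⟨f1, f2⟩ := f
      rcases hu with rfl | rfl <;> rcases hv with rfl | rfl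
      · exact f1 rfl
      · exact hij (e.2.symm.trans f2)
      · exact hij (e'.2.symm.trans f2)
      · exact f1 rfl
    have hER : NE c i R := by
      by_contra hcon
      have := JH2 hc hR sA sR hHi hE hcon
      omega
    have hEB : NE c j B := by
      by_contra hcon
      have := JH2 hc hB sA sB hHj hEj hcon
      omega
    have r1 := lowR hER
    have b := ih B (by omega) _ _ ((h.mono sB).dropQ hEB)
    rw [c2, hp] at b
    have low : ∀ T ⊆ A, NT c i T → NT c j T → 2 * T.card ≤ g (p + 2) r := by
      intro T hT hN hN'
      have := Finset.card_le_card hT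
      have := ih T (by omega) _ _ (((h.mono (hT.trans sA)).down hN).down hN')
      rwa [c3, c6] at this
    rcases ALT hc hR sA sR hHi with hT | ⟨h1, hP⟩ <;> rcases ALT hc hB sA sB hHj with hT' | ⟨h1', hP'⟩
    · have a := low A subset_rfl hT hT'
      omega
    · obtain ⟨T, hT1, hT2, hT3⟩ := PAW hc _ A rfl hP'
      have a := low T hT1 (hT.mono hT1) hT2
      omega
    · obtain ⟨T, hT1, hT2, hT3⟩ := PAW hc _ A rfl hP
      have a := low T hT1 hT2 (hT'.mono hT1)
      omega
    · obtain ⟨T, hT1, hT2, hT3⟩ := PAW hc _ A rfl hP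
      obtain ⟨T', hT1', hT2', hT3'⟩ := PAW hc _ T rfl (hP'.mono hT1)
      have a := low T' (hT1'.trans hT1) (hT2.mono hT1') hT2'
      omega

theorem case_all {π : α → α} {m K : ℕ} (hM : (S.image π).card ≤ m)
    (hK : ∀ a ∈ S, 2 * (part S π a).card ≤ K) (hidem : ∀ a ∈ S, π a ∈ S ∧ π (π a) = π a) :
    2 * S.card ≤ m * K := by
  have := Finset.card_le_mul_card_image (f := π) S (K / 2) (by
    intro a ha
    obtain ⟨x, hx, rfl⟩ := Finset.mem_image.1 ha
    have h1 := hK x hx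
    simp only [part] at h1
    omega)
  have h2 : K / 2 * (S.image π).card ≤ K / 2 * m := Nat.mul_le_mul_left _ hM
  have h3 : 2 * (K / 2) ≤ K := Nat.mul_div_le K 2
  nlinarith

theorem main_bound (hc : Gal c) : ∀ (n : ℕ) (S : Finset α), S.card = n → ∀ P Q : Finset κ,
    Good c S P Q → 2 * S.card ≤ g P.card Q.card := by
  intro n
  induction n using Nat.strong_induction_on with
  | _ n ihn =>
  intro S hn P Q h
  have ih : IH c S.card := fun T hT P Q hG => ihn T.card (by omega) T rfl P Q hG
  by_cases h2 : 2 ≤ S.card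
  swap
  · obtain ⟨X, hX1, hg⟩ := grid P.card Q.card
    omega
  rcases dichotomy hc S h2 with ⟨i, X, Y, hX, hU⟩ | ⟨i, j, π, hG⟩
  · exact case_cut hc ih h hX hU
  have hidem : ∀ a ∈ S, π a ∈ S ∧ π (π a) = π a := fun a ha => ⟨hG.mem a ha, hG.idem a ha⟩
  have sM : S.image π ⊆ S := by
    intro x hx
    obtain ⟨a, ha, rfl⟩ := Finset.mem_image.1 hx
    exact hG.mem a ha
  have tM : Two c i j (S.image π) := by
    intro x hx y hy n
    obtain ⟨a, ha, rfl⟩ := Finset.mem_image.1 hx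
    obtain ⟨b, hb, rfl⟩ := Finset.mem_image.1 hy
    exact hG.two _ (hG.mem a ha) _ (hG.mem b hb) (by rwa [hG.idem a ha, hG.idem b hb])
  have sP : ∀ a, part S π a ⊆ S := fun a => Finset.filter_subset _ _
  have sN : ∀ i a, nbr c S π i a ⊆ S := fun i a => Finset.filter_subset _ _
  have lt : ∀ a ∈ S, (part S π a).card < S.card := by
    intro a ha
    obtain ⟨h1, h2, h3⟩ := hG.split ha
    have := Finset.card_pos.2 h1.2.1
    omega
  have hij := hG.ne
  have hne : S.Nonempty := Finset.card_pos.1 (by omega)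
  have mem : ∀ i j, GP c S i j π → i ∈ P ∪ Q := by
    intro i j hG
    obtain ⟨a, ha⟩ := hne
    obtain ⟨y, hy, h1, h2⟩ := hG.exi a ha
    exact h2 ▸ h.cols a ha y hy (by rintro rfl; exact h1 rfl)
  -- mixed case
  have mixed : ∀ i j, GP c S i j π → Two c i j (S.image π) → i ∈ P → j ∈ Q →
      2 * S.card ≤ g P.card Q.card := by
    intro i j hG tM hi hj
    by_cases hall : ∀ a ∈ S, NE c j (part S π a)
    · obtain ⟨r, hr⟩ : ∃ r, Q.card = r + 1 := ⟨Q.card - 1, by have := Finset.card_pos.2 ⟨j, hj⟩; omega⟩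
      obtain ⟨p, hp⟩ : ∃ p, P.card = p + 1 := ⟨P.card - 1, by have := Finset.card_pos.2 ⟨i, hi⟩; omega⟩
      have := case_all (K := g p r) (R3H hc hG.ne tM ((h.tri i hi).mono sM) ((h.hh j hj).mono sM))
        (fun a ha => by
          have := ih _ (lt a ha) _ _ (((h.mono (sP a)).dropP
            (J3 (hG.split ha).1 (sP a) (sN i a) (h.tri i hi))).dropQ (hall a ha))
          rwa [Finset.card_erase_of_mem hi, Finset.card_erase_of_mem hj, hp, hr, Nat.add_sub_cancel,
            Nat.add_sub_cancel] at this) hidem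
      obtain ⟨X, hX1, hg⟩ := grid p r
      rw [hp, hr]
      omega
    · push Not at hall
      obtain ⟨a, ha, hE⟩ := hall
      obtain ⟨h1, h2, h3⟩ := hG.split ha
      exact case_PQ hc ih h hi hj h1 h2 (sP a) (sN _ a) (sN _ a) h3 hE
  rcases Finset.mem_union.1 (mem i j hG) with hi | hi <;>
    rcases Finset.mem_union.1 (mem j i hG.swap) with hj | hj
  · have hjp : j ∈ P.erase i := Finset.mem_erase.2 ⟨hij.symm, hj⟩
    obtain ⟨p, hp⟩ : ∃ p, P.card = p + 2 := ⟨P.card - 2, by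
      have := Finset.card_pos.2 ⟨j, hjp⟩
      have := Finset.card_erase_of_mem hi
      omega⟩
    have := case_all (K := g p Q.card) (R33 hij tM ((h.tri i hi).mono sM) ((h.tri j hj).mono sM))
      (fun a ha => by
        have := ih _ (lt a ha) _ _ (((h.mono (sP a)).dropP
          (J3 (hG.split ha).1 (sP a) (sN i a) (h.tri i hi))).dropP
          (J3 (hG.split ha).2.1 (sP a) (sN j a) (h.tri j hj)))
        rw [Finset.card_erase_of_mem hjp, Finset.card_erase_of_mem hi, hp] at this
        exact this) hidem
    rw [hp, g_p2]
    exact this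
  · exact mixed i j hG tM hi hj
  · exact mixed j i hG.swap tM.swap hj hi
  · by_cases hall : ∀ a ∈ S, NE c i (part S π a) ∧ NE c j (part S π a)
    · have hjq : j ∈ Q.erase i := Finset.mem_erase.2 ⟨hij.symm, hj⟩
      obtain ⟨r, hr⟩ : ∃ r, Q.card = r + 2 := ⟨Q.card - 2, by
        have := Finset.card_pos.2 ⟨j, hjq⟩
        have := Finset.card_erase_of_mem hi
        omega⟩
      have := case_all (K := g P.card r) (RHH hc hij tM ((h.hh i hi).mono sM) ((h.hh j hj).mono sM))
        (fun a ha => by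
          have := ih _ (lt a ha) _ _ (((h.mono (sP a)).dropQ (hall a ha).1).dropQ (hall a ha).2)
          rw [Finset.card_erase_of_mem hjq, Finset.card_erase_of_mem hi, hr] at this
          exact this) hidem
      rw [hr, g_r2]
      exact this
    · push Not at hall
      obtain ⟨a, ha, hE⟩ := hall
      obtain ⟨h1, h2, h3⟩ := hG.split ha
      by_cases hEi : NE c i (part S π a)
      · exact case_QQ hc ih h hij.symm hj hi h2 h1 (sP a) (sN _ a) (sN _ a) (by omega) (hE hEi)
      · exact case_QQ hc ih h hij hi hj h1 h2 (sP a) (sN _ a) (sN _ a) h3 hEi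
end GRaux


set_option linter.unusedSectionVars false

namespace GRaux

theorem mono3 {n k : ℕ} (c : Fin n → Fin n → Fin k) (hs : ∀ u v, c u v = c v u) (i : Fin k)
    (x y z : Fin n) (h1 : E c i x y) (h2 : E c i x z) (h3 : E c i y z) :
    HasMonoCopy GK3 c i := by
  obtain ⟨n1, e1⟩ := h1
  obtain ⟨n2, e2⟩ := h2
  obtain ⟨n3, e3⟩ := h3
  refine ⟨![x, y, z], ?_, ?_⟩
  · intro a b hab
    fin_cases a <;> fin_cases b <;> simp_all
  · intro a b hab
    have hne : a ≠ b := hab.ne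
    have e1' := (hs y x).trans e1
    have e2' := (hs z x).trans e2
    have e3' := (hs z y).trans e3
    fin_cases a <;> fin_cases b <;> first | exact absurd rfl hne | assumption

theorem monoH {n k : ℕ} (c : Fin n → Fin n → Fin k) (hs : ∀ u v, c u v = c v u) (i : Fin k)
    (H : SimpleGraph (Fin 5)) (hH : H = GH1 ∨ H = GH2)
    (a b x y z : Fin n) (h1 : E c i a b) (h2 : E c i a x) (h3 : E c i a y) (h4 : E c i b x)
    (h5 : E c i b y) (h6 : E c i x y) (h7 : E c i z a) (h8 : E c i z b) (h9 : z ≠ x)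
    (h10 : z ≠ y) : HasMonoCopy H c i := by
  obtain ⟨n1, e1⟩ := h1
  obtain ⟨n2, e2⟩ := h2
  obtain ⟨n3, e3⟩ := h3
  obtain ⟨n4, e4⟩ := h4
  obtain ⟨n5, e5⟩ := h5
  obtain ⟨n6, e6⟩ := h6
  obtain ⟨n7, e7⟩ := h7
  obtain ⟨n8, e8⟩ := h8
  have e1' := (hs b a).trans e1
  have e2' := (hs x a).trans e2
  have e3' := (hs y a).trans e3
  have e4' := (hs x b).trans e4
  have e5' := (hs y b).trans e5
  have e6' := (hs y x).trans e6
  have e7' := (hs a z).trans e7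
  have e8' := (hs b z).trans e8
  rcases hH with rfl | rfl
  · refine ⟨![b, x, y, a, z], ?_, ?_⟩
    · have := n1.symm; have := n2.symm; have := n3.symm; have := n4.symm; have := n5.symm
      have := n6.symm; have := n7.symm; have := n8.symm; have := h9.symm; have := h10.symm
      intro p q hpq
      fin_cases p <;> fin_cases q <;> first | rfl | (exact absurd hpq (by assumption))
    · intro p q hpq
      simp only [GH1, SimpleGraph.fromRel_adj] at hpq
      fin_cases p <;> fin_cases q <;> first | assumption | (exact absurd hpq (by decide))
  · refine ⟨![x, z, y, a, b], ?_, ?_⟩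
    · have := n1.symm; have := n2.symm; have := n3.symm; have := n4.symm; have := n5.symm
      have := n6.symm; have := n7.symm; have := n8.symm; have := h9.symm; have := h10.symm
      intro p q hpq
      fin_cases p <;> fin_cases q <;> first | rfl | (exact absurd hpq (by assumption))
    · intro p q hpq
      simp only [GH2, SimpleGraph.sdiff_adj, SimpleGraph.top_adj, SimpleGraph.fromRel_adj] at hpq
      fin_cases p <;> fin_cases q <;> first | assumption | (exact absurd hpq (by decide))

theorem upper (H : SimpleGraph (Fin 5)) (hH : H = GH1 ∨ H = GH2)
    (k r : ℕ) (hr : r ≤ k) (h1 : Even (k - r)) (h2 : Even r) (n : ℕ)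
    (c : Fin n → Fin n → Fin k) (hc : IsGallaiColoring c)
    (hno : ∀ i, ¬ HasMonoCopy (mixKH k r H i).2 c i) :
    n ≤ 5 ^ ((k - r) / 2) * 17 ^ (r / 2) := by
  obtain ⟨hs, hnr⟩ := hc
  have hg : Gal c := ⟨hs, by
    intro u v w a1 a2 a3
    by_contra hcon
    push Not at hcon
    exact hnr ⟨u, v, w, a1, a2, a3, hcon⟩⟩
  have hQ : ∀ i : Fin k, (i : ℕ) < r → ¬ HasMonoCopy H c i := by
    intro i hi
    have := hno i
    rw [mixKH, if_pos hi] at this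
    exact this
  have hP : ∀ i : Fin k, ¬ (i : ℕ) < r → ¬ HasMonoCopy GK3 c i := by
    intro i hi
    have := hno i
    rw [mixKH, if_neg hi] at this
    exact this
  set Q : Finset (Fin k) := Finset.univ.filter (fun i : Fin k => (i : ℕ) < r) with hQd
  set P : Finset (Fin k) := Finset.univ.filter (fun i : Fin k => ¬ (i : ℕ) < r) with hPd
  have hgood : Good c Finset.univ P Q := by
    refine ⟨?_, ?_, ?_, ?_⟩
    · exact (Finset.disjoint_filter_filter_not _ _ _).symm
    · intro x _ y _ _
      simp [hQd, hPd]
      omega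
    · intro i hi x _ y _ z _ a1 a2 a3
      exact hP i (Finset.mem_filter.1 hi).2 (mono3 c hs i x y z a1 a2 a3)
    · intro i hi a _ b _ x _ y _ z _ a1 a2 a3 a4 a5 a6 a7 a8 a9 a10
      exact hQ i (Finset.mem_filter.1 hi).2
        (monoH c hs i H hH a b x y z a1 a2 a3 a4 a5 a6 a7 a8 a9 a10)
  have hQc : Q.card = r := by
    have := Fin.card_filter_val_lt (n := k) (m := r)
    rw [hQd, this]; exact min_eq_right hr
  have hPc : P.card = k - r := by
    have := Finset.card_filter_add_card_filter_not (s := (Finset.univ : Finset (Fin k))) (fun i : Fin k => (i : ℕ) < r)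
    rw [← hQd, ← hPd, hQc, Finset.card_univ, Fintype.card_fin] at this
    omega
  have hb := main_bound hg _ Finset.univ rfl P Q hgood
  obtain ⟨a, ha⟩ := h1
  obtain ⟨b, hb'⟩ := h2
  have ea : k - r = 2 * a := by omega
  have eb : r = 2 * b := by omega
  rw [hPc, hQc, ea, eb, g_ee, Finset.card_univ, Fintype.card_fin] at hb
  have e1 : (k - r) / 2 = a := by omega
  have e2 : r / 2 = b := by omega
  rw [e1, e2]
  omega

end GRaux


set_option linter.unusedSectionVars false

namespace GRaux

/-- no monochromatic clique of size `t` in colour `i` -/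
def CF {β : Type} (c : β → β → ℕ) (i t : ℕ) : Prop :=
  ∀ f : Fin t → β, (∀ a b, a ≠ b → f a ≠ f b ∧ c (f a) (f b) = i) → False

/-- Paley residues mod 17 -/
def pal (s t : ZMod 17) : ℕ :=
  if s - t ∈ ([1, 2, 4, 8, 9, 13, 15, 16] : List (ZMod 17)) then 0 else 1

/-- pentagon -/
def pen (s t : ZMod 5) : ℕ :=
  if s - t ∈ ([1, 4] : List (ZMod 5)) then 0 else 1

theorem pal_sym : ∀ s t, pal s t = pal t s := by decide +kernel

theorem pen_sym : ∀ s t, pen s t = pen t s := by decide +kernel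

theorem pal_lt (s t) : pal s t < 2 := by unfold pal; split <;> omega

theorem pen_lt (s t) : pen s t < 2 := by unfold pen; split <;> omega

theorem pal_tr (s t u) : pal s t = pal (s - u) (t - u) := by
  unfold pal; rw [sub_sub_sub_cancel_right]

set_option synthInstance.maxHeartbeats 400000 in
set_option synthInstance.maxSize 2000 in
theorem pal_aux : ∀ i : Fin 2, ∀ x : ZMod 17, x ≠ 0 → pal 0 x = i.val → ∀ y : ZMod 17, y ≠ 0 →
    pal 0 y = i.val → x ≠ y → pal x y = i.val → ∀ z : ZMod 17, z ≠ 0 → z ≠ x → z ≠ y → pal 0 z = i.val →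
    pal x z = i.val → pal y z = i.val → False := by decide +kernel

set_option synthInstance.maxHeartbeats 400000 in
set_option synthInstance.maxSize 2000 in
theorem pen_aux : ∀ i : Fin 2, ∀ x y z : ZMod 5, x ≠ y → x ≠ z → y ≠ z → pen x y = i.val → pen x z = i.val →
    pen y z = i.val → False := by decide +kernel

theorem pal_CF (i : ℕ) (hi : i < 2) : CF pal i 4 := by
  intro f hf
  have h01 := hf 0 1 (by decide)
  have h02 := hf 0 2 (by decide)
  have h03 := hf 0 3 (by decide)
  have h12 := hf 1 2 (by decide)
  have h13 := hf 1 3 (by decide)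
  have h23 := hf 2 3 (by decide)
  have key : ∀ a b, pal (f a - f 0) (f b - f 0) = pal (f a) (f b) := fun a b => (pal_tr _ _ _).symm
  have key0 : ∀ b, pal 0 (f b - f 0) = pal (f 0) (f b) := fun b => by
    rw [← key 0 b, sub_self]
  refine pal_aux ⟨i, hi⟩ (f 1 - f 0) (sub_ne_zero.2 h01.1.symm) ((key0 _).trans h01.2)
    (f 2 - f 0) (sub_ne_zero.2 h02.1.symm) ((key0 _).trans h02.2)
    (fun h => h12.1 (sub_left_injective h)) ((key _ _).trans h12.2)
    (f 3 - f 0) (sub_ne_zero.2 h03.1.symm)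
    (fun h => h13.1 (sub_left_injective h.symm)) (fun h => h23.1 (sub_left_injective h.symm))
    ((key0 _).trans h03.2) ((key _ _).trans h13.2) ((key _ _).trans h23.2)

theorem pen_CF (i : ℕ) (hi : i < 2) : CF pen i 3 := by
  intro f hf
  have h01 := hf 0 1 (by decide)
  have h02 := hf 0 2 (by decide)
  have h12 := hf 1 2 (by decide)
  exact pen_aux ⟨i, hi⟩ _ _ _ h01.1 h02.1 h12.1 h01.2 h02.2 h12.2

/-- lexicographic product -/
def lex {α β : Type} [DecidableEq β] (c : α → α → ℕ) (d : β → β → ℕ) (m : ℕ)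
    (p q : α × β) : ℕ := if p.2 = q.2 then c p.1 q.1 else m + d p.2 q.2

/-- colouring with colours below `m`, symmetric and without rainbow triangles -/
structure Col {α : Type} (c : α → α → ℕ) (m : ℕ) : Prop where
  sym : ∀ u v, c u v = c v u
  lt : ∀ u v, u ≠ v → c u v < m
  nr : ∀ u v w, u ≠ v → u ≠ w → v ≠ w → c u v = c u w ∨ c u v = c v w ∨ c u w = c v w

theorem lex_col {α β : Type} [DecidableEq β] (c : α → α → ℕ) (d : β → β → ℕ) (m : ℕ)
    (hc : Col c m) (ds : ∀ s t, d s t = d t s) (dl : ∀ s t, d s t < 2) :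
    Col (lex c d m) (m + 2) := by
  refine ⟨?_, ?_, ?_⟩
  · rintro ⟨x, s⟩ ⟨y, t⟩
    simp only [lex, eq_comm (a := t), hc.sym y x, ds t s]
  · rintro ⟨x, s⟩ ⟨y, t⟩ h
    simp only [lex]
    split
    · rename_i hst
      have := hc.lt x y (by rintro rfl; subst hst; exact h rfl)
      omega
    · have := dl s t
      omega
  · rintro ⟨x, s⟩ ⟨y, t⟩ ⟨z, u⟩ h1 h2 h3
    simp only [lex]
    by_cases a1 : s = t
    · subst a1
      by_cases a2 : s = u
      · subst a2
        simp only [if_true]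
        exact hc.nr x y z (by rintro rfl; exact h1 rfl) (by rintro rfl; exact h2 rfl)
          (by rintro rfl; exact h3 rfl)
      · simp [a2]
    · by_cases a2 : s = u
      · subst a2
        have : ¬ t = s := fun h => a1 h.symm
        simp [a1, this, ds t s]
      · by_cases a3 : t = u
        · subst a3; simp [a1]
        · have b1 := dl s t
          have b2 := dl s u
          have b3 := dl t u
          simp only [a1, a2, a3, if_false]
          omega

theorem lex_CF_in {α β : Type} [DecidableEq β] (c : α → α → ℕ) (d : β → β → ℕ) (m i t : ℕ)
    (hi : i < m) (h : CF c i t) : CF (lex c d m) i t := by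
  intro f hf
  have key : ∀ a b, (f a).2 = (f b).2 := by
    intro a b
    by_cases hab : a = b
    · rw [hab]
    by_contra hne
    have := (hf a b hab).2
    simp only [lex, hne, if_false] at this
    omega
  refine h (fun a => (f a).1) ?_
  intro a b hab
  obtain ⟨h1, h2⟩ := hf a b hab
  refine ⟨fun h => h1 (Prod.ext h (key a b)), ?_⟩
  simpa only [lex, key a b, if_true] using h2

theorem lex_CF_out {α β : Type} [DecidableEq β] (c : α → α → ℕ) (d : β → β → ℕ) (m i t : ℕ)
    (hc : Col c m) (h : CF d i t) : CF (lex c d m) (m + i) t := by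
  intro f hf
  refine h (fun a => (f a).2) ?_
  intro a b hab
  obtain ⟨h1, h2⟩ := hf a b hab
  have hne : (f a).2 ≠ (f b).2 := by
    intro he
    simp only [lex, he, if_true] at h2
    have := hc.lt (f a).1 (f b).1 (fun h' => h1 (Prod.ext h' he))
    omega
  refine ⟨hne, ?_⟩
  simp only [lex, hne, if_false] at h2
  omega

theorem exists_b (b : ℕ) : ∃ (α : Type) (_ : Fintype α) (c : α → α → ℕ),
    Fintype.card α = 17 ^ b ∧ Col c (2 * b) ∧ ∀ i < 2 * b, CF c i 4 := by
  induction b with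
  | zero =>
    refine ⟨Unit, inferInstance, fun _ _ => 0, rfl, ⟨fun _ _ => rfl, ?_, ?_⟩, ?_⟩
    · intro u v h; exact absurd rfl h
    · intro u v w h; exact absurd rfl h
    · intro i hi; omega
  | succ b ih =>
    obtain ⟨α, _, c, h1, h2, h3⟩ := ih
    refine ⟨α × ZMod 17, inferInstance, lex c pal (2 * b), ?_, ?_, ?_⟩
    · rw [Fintype.card_prod, h1, ZMod.card, pow_succ]
    · exact lex_col c pal (2 * b) h2 pal_sym pal_lt
    · intro i hi
      by_cases hb : i < 2 * b
      · exact lex_CF_in c pal _ i 4 hb (h3 i hb)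
      · obtain ⟨j, rfl⟩ := Nat.exists_eq_add_of_le (not_lt.1 hb)
        exact lex_CF_out c pal _ j 4 h2 (pal_CF j (by omega))

theorem exists_ab (b a : ℕ) : ∃ (α : Type) (_ : Fintype α) (c : α → α → ℕ),
    Fintype.card α = 5 ^ a * 17 ^ b ∧ Col c (2 * b + 2 * a) ∧ (∀ i < 2 * b, CF c i 4) ∧
    ∀ i < 2 * b + 2 * a, 2 * b ≤ i → CF c i 3 := by
  induction a with
  | zero =>
    obtain ⟨α, hα, c, h1, h2, h3⟩ := exists_b b
    refine ⟨α, hα, c, by simpa using h1, h2, h3, ?_⟩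
    intro i h h'; omega
  | succ a ih =>
    obtain ⟨α, _, c, h1, h2, h3, h4⟩ := ih
    refine ⟨α × ZMod 5, inferInstance, lex c pen (2 * b + 2 * a), ?_, ?_, ?_, ?_⟩
    · rw [Fintype.card_prod, h1, ZMod.card, pow_succ]; ring
    · exact lex_col c pen _ h2 pen_sym pen_lt
    · intro i hi
      exact lex_CF_in c pen _ i 4 (by omega) (h3 i hi)
    · intro i hi hi'
      by_cases hb : i < 2 * b + 2 * a
      · exact lex_CF_in c pen _ i 3 hb (h4 i hb hi')
      · obtain ⟨j, rfl⟩ := Nat.exists_eq_add_of_le (not_lt.1 hb)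
        exact lex_CF_out c pen _ j 3 h2 (pen_CF j (by omega))

theorem lower (H : SimpleGraph (Fin 5)) (hH : H = GH1 ∨ H = GH2)
    (k r : ℕ) (hk : 1 ≤ k) (hr : r ≤ k) (h1 : Even (k - r)) (h2 : Even r) (n : ℕ)
    (hn : n ≤ 5 ^ ((k - r) / 2) * 17 ^ (r / 2)) :
    ∃ c : Fin n → Fin n → Fin k, IsGallaiColoring c ∧
      ∀ i, ¬ HasMonoCopy (mixKH k r H i).2 c i := by
  obtain ⟨a, ha⟩ := h1
  obtain ⟨b, hb⟩ := h2
  have e1 : (k - r) / 2 = a := by omega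
  have e2 : r / 2 = b := by omega
  rw [e1, e2] at hn
  obtain ⟨α, _, c, c1, c2, c3, c4⟩ := exists_ab b a
  have hkk : 2 * b + 2 * a = k := by omega
  rw [hkk] at c2 c4
  have hrr : 2 * b = r := by omega
  rw [hrr] at c3 c4
  obtain ⟨φ⟩ : Nonempty (Fin n ↪ α) := by
    apply Function.Embedding.nonempty_of_card_le
    rw [Fintype.card_fin, c1]; exact hn
  let C : Fin n → Fin n → Fin k := fun x y =>
    if h : x = y then ⟨0, hk⟩ else ⟨c (φ x) (φ y), c2.lt _ _ (fun h' => h (φ.injective h'))⟩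
  have hC : ∀ x y, x ≠ y → ((C x y : Fin k) : ℕ) = c (φ x) (φ y) := by
    intro x y h
    simp only [C, dif_neg h]
  refine ⟨C, ⟨?_, ?_⟩, ?_⟩
  · intro u v
    by_cases h : u = v
    · rw [h]
    · apply Fin.ext
      rw [hC u v h, hC v u (fun h' => h h'.symm), c2.sym]
  · rintro ⟨u, v, w, n1, n2, n3, m1, m2, m3⟩
    rw [Ne, Fin.ext_iff, hC _ _ n1, hC _ _ n2] at m1
    rw [Ne, Fin.ext_iff, hC _ _ n1, hC _ _ n3] at m2
    rw [Ne, Fin.ext_iff, hC _ _ n2, hC _ _ n3] at m3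
    rcases c2.nr (φ u) (φ v) (φ w) (φ.injective.ne n1) (φ.injective.ne n2) (φ.injective.ne n3)
      with h | h | h
    · exact m1 h
    · exact m2 h
    · exact m3 h
  · intro i
    by_cases hi : (i : ℕ) < r
    · rw [mixKH, if_pos hi]
      rintro ⟨f, hf, hm⟩
      obtain ⟨e, he, hadj⟩ : ∃ e : Fin 4 → Fin 5, Function.Injective e ∧
          ∀ p q, p ≠ q → H.Adj (e p) (e q) := by
        rcases hH with rfl | rfl
        · refine ⟨![0, 1, 2, 3], by decide, ?_⟩
          simp only [GH1, SimpleGraph.fromRel_adj]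
          decide
        · refine ⟨![0, 2, 3, 4], by decide, ?_⟩
          simp only [GH2, SimpleGraph.sdiff_adj, SimpleGraph.top_adj, SimpleGraph.fromRel_adj]
          decide
      refine c3 i hi (fun p => φ (f (e p))) ?_
      intro p q hpq
      have hne : f (e p) ≠ f (e q) := fun h => hpq (he (hf h))
      refine ⟨φ.injective.ne hne, ?_⟩
      rw [← hC _ _ hne, hm _ _ (hadj p q hpq)]
    · rw [mixKH, if_neg hi]
      rintro ⟨f, hf, hm⟩
      refine c4 i i.2 (not_lt.1 hi) (fun p => φ (f p)) ?_
      intro p q hpq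
      have hne : f p ≠ f q := fun h => hpq (hf h)
      refine ⟨φ.injective.ne hne, ?_⟩
      rw [← hC _ _ hne, hm p q (by rw [GK3]; exact hpq)]

end GRaux

/-- Theorem 1.4, case (a₁): for H ∈ {H₁, H₂}, k ≥ 1, 0 ≤ r ≤ k with k - r and r both
even, GR_k((k-r)K₃, rH) = 5^((k-r)/2)·17^(r/2) + 1. -/
theorem GR_mixKH_even_even (H : SimpleGraph (Fin 5)) (hH : H = GH1 ∨ H = GH2)
    (k r : ℕ) (hk : 1 ≤ k) (hr : r ≤ k) (h1 : Even (k - r)) (h2 : Even r) :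
    GR k (mixKH k r H) = 5 ^ ((k - r) / 2) * 17 ^ (r / 2) + 1 := by
  unfold GR
  apply le_antisymm
  · apply Nat.sInf_le
    intro c hc
    by_contra hcon
    push Not at hcon
    have := GRaux.upper H hH k r hr h1 h2 _ c hc hcon
    omega
  · apply le_csInf
    · refine ⟨5 ^ ((k - r) / 2) * 17 ^ (r / 2) + 1, ?_⟩
      intro c hc
      by_contra hcon
      push Not at hcon
      have := GRaux.upper H hH k r hr h1 h2 _ c hc hcon
      omega
    · intro n hn
      by_contra hlt
      obtain ⟨c, hc, hno⟩ := GRaux.lower H hH k r hk hr h1 h2 n (by omega)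
      obtain ⟨i, hi⟩ := hn c hc
      exact hno i hi
end

section
/- Let H be either H1 or H2. For all integers k ≥ 1 and r with 0 ≤ r ≤ k such that k−r is odd and r is even, GR_k((k−r)K3, rH) = 2·5^((k−r−1)/2)·17^(r/2) + 1. -/
open SimpleGraph

namespace GRproof

variable {V C : Type}

/-- edge of colour `i` -/
def E (c : V → V → C) (i : C) (x y : V) : Prop := x ≠ y ∧ c x y = i

def NoE (c : V → V → C) (S : Finset V) (i : C) : Prop :=
  ∀ x ∈ S, ∀ y ∈ S, ¬ E c i x y

def NoT (c : V → V → C) (S : Finset V) (i : C) : Prop :=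
  ∀ x ∈ S, ∀ y ∈ S, ∀ z ∈ S, E c i x y → E c i x z → E c i y z → False

def NoPaw (c : V → V → C) (S : Finset V) (i : C) : Prop :=
  ∀ x ∈ S, ∀ y ∈ S, ∀ z ∈ S, ∀ w ∈ S, E c i x y → E c i x z → E c i y z → E c i x w →
    w ≠ y → w ≠ z → False

def NoH (c : V → V → C) (S : Finset V) (i : C) : Prop :=
  ∀ x ∈ S, ∀ y ∈ S, ∀ z ∈ S, ∀ w ∈ S, ∀ u ∈ S,
    E c i x y → E c i x z → E c i x w → E c i y z → E c i y w → E c i z w →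
    E c i u x → E c i u y → u ≠ z → u ≠ w → False

def Sym (c : V → V → C) : Prop := ∀ x y, c x y = c y x

def Gal (c : V → V → C) : Prop :=
  ∀ x y z, x ≠ y → x ≠ z → y ≠ z → c x y = c x z ∨ c x y = c y z ∨ c x z = c y z

/-- all edges between the two sets have colour `i` -/
def J (c : V → V → C) (i : C) (A B : Finset V) : Prop := ∀ a ∈ A, ∀ b ∈ B, E c i a b

def P (c : V → V → C) (T B : Finset C) (S : Finset V) : Prop :=
  (∀ i, i ∉ T → i ∉ B → NoE c S i) ∧ (∀ i ∈ T, NoT c S i) ∧ (∀ i ∈ B, NoH c S i)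

def f : ℕ → ℚ
  | 0 => 1
  | 1 => 2
  | n + 2 => 5 * f n

def g : ℕ → ℚ
  | 0 => 1
  | 1 => 33 / 8
  | n + 2 => 17 * g n

theorem E.symm {c : V → V → C} (hs : Sym c) {i : C} {x y : V} (h : E c i x y) : E c i y x :=
  ⟨h.1.symm, by rw [hs]; exact h.2⟩

theorem J.symm {c : V → V → C} (hs : Sym c) {i : C} {A B : Finset V} (h : J c i A B) :
    J c i B A := fun b hb a ha => (h a ha b hb).symm hs

theorem NoE.mono {c : V → V → C} {S S' : Finset V} {i : C} (h : NoE c S i) (hS : S' ⊆ S) :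
    NoE c S' i := fun x hx y hy => h x (hS hx) y (hS hy)

theorem NoT.mono {c : V → V → C} {S S' : Finset V} {i : C} (h : NoT c S i) (hS : S' ⊆ S) :
    NoT c S' i := fun x hx y hy z hz => h x (hS hx) y (hS hy) z (hS hz)

theorem NoH.mono {c : V → V → C} {S S' : Finset V} {i : C} (h : NoH c S i) (hS : S' ⊆ S) :
    NoH c S' i := fun x hx y hy z hz w hw u hu =>
  h x (hS hx) y (hS hy) z (hS hz) w (hS hw) u (hS hu)

theorem NoPaw.mono {c : V → V → C} {S S' : Finset V} {i : C} (h : NoPaw c S i) (hS : S' ⊆ S) :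
    NoPaw c S' i := fun x hx y hy z hz w hw =>
  h x (hS hx) y (hS hy) z (hS hz) w (hS hw)

theorem P.mono {c : V → V → C} {T B : Finset C} {S S' : Finset V} (h : P c T B S)
    (hS : S' ⊆ S) : P c T B S' :=
  ⟨fun i h1 h2 => (h.1 i h1 h2).mono hS, fun i hi => (h.2.1 i hi).mono hS,
    fun i hi => (h.2.2 i hi).mono hS⟩

theorem P.dropT [DecidableEq C] {c : V → V → C} {T B : Finset C} {S : Finset V} {r : C}
    (h : P c (insert r T) B S) (hE : NoE c S r) : P c T B S := by
  refine ⟨fun i h1 h2 => ?_, fun i hi => h.2.1 i (Finset.mem_insert_of_mem hi), h.2.2⟩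
  by_cases hi : i = r
  · subst hi; exact hE
  · exact h.1 i (by simp [hi, h1]) h2

theorem P.dropB [DecidableEq C] {c : V → V → C} {T B : Finset C} {S : Finset V} {r : C}
    (h : P c T (insert r B) S) (hE : NoE c S r) : P c T B S := by
  refine ⟨fun i h1 h2 => ?_, h.2.1, fun i hi => h.2.2 i (Finset.mem_insert_of_mem hi)⟩
  by_cases hi : i = r
  · subst hi; exact hE
  · exact h.1 i h1 (by simp [hi, h2])

theorem P.toT [DecidableEq C] {c : V → V → C} {T B : Finset C} {S : Finset V} {r : C}
    (h : P c T (insert r B) S) (hE : NoT c S r) : P c (insert r T) B S := by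
  refine ⟨fun i h1 h2 => ?_, fun i hi => ?_, fun i hi => h.2.2 i (Finset.mem_insert_of_mem hi)⟩
  · simp only [Finset.mem_insert, not_or] at h1
    exact h.1 i h1.2 (by simp [h1.1, h2])
  · rcases Finset.mem_insert.1 hi with rfl | hi
    · exact hE
    · exact h.2.1 i hi

theorem joined_noT {c : V → V → C} (hs : Sym c) {i : C} {S A B : Finset V} (hA : A ⊆ S)
    (hB : B ⊆ S) (hJ : J c i A B) (hH : NoH c S i) (h2 : 2 ≤ B.card) : NoT c A i := by
  obtain ⟨b, hb, b', hb', hne⟩ := Finset.one_lt_card.1 h2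
  intro x hx y hy z hz h1 h2 h3
  exact hH x (hA hx) y (hA hy) z (hA hz) b (hB hb) b' (hB hb') h1 h2 (hJ x hx b hb) h3
    (hJ y hy b hb) (hJ z hz b hb) ((hJ x hx b' hb').symm hs) ((hJ y hy b' hb').symm hs)
    (hJ z hz b' hb').1.symm hne.symm

theorem joined_edges {c : V → V → C} (hs : Sym c) {i : C} {S A B : Finset V} (hA : A ⊆ S)
    (hB : B ⊆ S) (hJ : J c i A B) (hH : NoH c S i) (h3 : 3 ≤ A.card) (hE : ¬ NoE c A i) :
    NoE c B i := by
  classical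
  unfold NoE at hE
  push Not at hE
  obtain ⟨x, hx, y, hy, hxy⟩ := hE
  obtain ⟨w, hw, hw'⟩ : ∃ w ∈ A, w ∉ ({x, y} : Finset V) := by
    by_contra hcon
    push Not at hcon
    have := Finset.card_le_card (show A ⊆ {x, y} from hcon)
    have := Finset.card_le_two (a := x) (b := y)
    omega
  simp only [Finset.mem_insert, Finset.mem_singleton, not_or] at hw'
  intro p hp q hq hpq
  exact hH p (hB hp) q (hB hq) x (hA hx) y (hA hy) w (hA hw) hpq ((hJ x hx p hp).symm hs)
    ((hJ y hy p hp).symm hs) ((hJ x hx q hq).symm hs) ((hJ y hy q hq).symm hs) hxy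
    (hJ w hw p hp) (hJ w hw q hq) hw'.1 hw'.2

theorem joined_paw {c : V → V → C} (hs : Sym c) {i : C} {S A B : Finset V} (hA : A ⊆ S)
    (hB : B ⊆ S) (hJ : J c i A B) (hH : NoH c S i) (h3 : B.Nonempty) : NoPaw c A i := by
  obtain ⟨b, hb⟩ := h3
  intro x hx y hy z hz w hw h1 h2 h3 h4 h5 h6
  exact hH x (hA hx) b (hB hb) y (hA hy) z (hA hz) w (hA hw) (hJ x hx b hb) h1 h2
    ((hJ y hy b hb).symm hs) ((hJ z hz b hb).symm hs) h3 (h4.symm hs) (hJ w hw b hb) h5 h6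

/-- A paw-free set contains a triangle-free subset with two thirds of the vertices. -/
theorem paw_sub [DecidableEq V] {c : V → V → C} (hs : Sym c) {i : C} (n : ℕ) :
    ∀ S : Finset V, S.card ≤ n → NoPaw c S i →
      ∃ S' ⊆ S, NoT c S' i ∧ 2 * S.card ≤ 3 * S'.card := by
  induction n with
  | zero =>
    intro S hS _
    refine ⟨S, subset_rfl, ?_, by omega⟩
    have : S = ∅ := by simpa using hS
    subst this
    intro x hx; simp at hx
  | succ n ih =>
    intro S hS hp
    by_cases hT : NoT c S i
    · exact ⟨S, subset_rfl, hT, by omega⟩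
    unfold NoT at hT
    push Not at hT
    obtain ⟨x, hx, y, hy, z, hz, hxy, hxz, hyz, -⟩ := hT
    have hsub : ({x, y, z} : Finset V) ⊆ S := by
      intro t ht; simp at ht; rcases ht with rfl | rfl | rfl <;> assumption
    have hc3 : ({x, y, z} : Finset V).card = 3 :=
      Finset.card_eq_three.2 ⟨x, y, z, hxy.1, hxz.1, hyz.1, rfl⟩
    have hcard := Finset.card_sdiff_of_subset hsub
    have hle := Finset.card_le_card hsub
    obtain ⟨S', hS', hT', hc'⟩ := ih (S \ {x, y, z}) (by omega)
      (hp.mono Finset.sdiff_subset)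
    have hout : ∀ t ∈ S', t ∈ S ∧ t ≠ x ∧ t ≠ y ∧ t ≠ z := by
      intro t ht
      have := hS' ht
      simp at this
      tauto
    -- no edge of colour i leaves the triangle
    have hnx : ∀ t ∈ S', ¬ E c i x t := fun t ht h =>
      hp x hx y hy z hz t (hout t ht).1 hxy hxz hyz h (hout t ht).2.2.1 (hout t ht).2.2.2
    have hny : ∀ t ∈ S', ¬ E c i y t := fun t ht h =>
      hp y hy x hx z hz t (hout t ht).1 (hxy.symm hs) hyz hxz h (hout t ht).2.1
        (hout t ht).2.2.2
    refine ⟨insert x (insert y S'), ?_, ?_, ?_⟩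
    · intro t ht
      simp at ht
      rcases ht with rfl | rfl | ht
      · exact hx
      · exact hy
      · exact (hout t ht).1
    · intro p hp' q hq r hr h1 h2 h3
      have hno : ∀ u v, E c i u v → (u = x ∨ u = y) → v ∈ S' → False := by
        rintro u v huv (rfl | rfl) hv
        · exact hnx v hv huv
        · exact hny v hv huv
      have h1' := h1.symm hs
      have h2' := h2.symm hs
      have h3' := h3.symm hs
      have n1 := h1.1
      have n2 := h2.1
      have n3 := h3.1
      simp only [Finset.mem_insert] at hp' hq hr
      by_cases hpS : p ∈ S'
      · have hqS : q ∈ S' := by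
          by_contra hq'
          exact hno q p h1' (by tauto) hpS
        have hrS : r ∈ S' := by
          by_contra hr'
          exact hno r p h2' (by tauto) hpS
        exact hT' p hpS q hqS r hrS h1 h2 h3
      · have hqS : q ∉ S' := fun h => hno p q h1 (by tauto) h
        have hrS : r ∉ S' := fun h => hno p r h2 (by tauto) h
        grind
    · have hy' : y ∉ S' := fun h => (hout y h).2.2.1 rfl
      have hx' : x ∉ insert y S' := by
        simp only [Finset.mem_insert, not_or]
        exact ⟨hxy.1, fun h => (hout x h).2.1 rfl⟩
      rw [Finset.card_insert_of_notMem hx', Finset.card_insert_of_notMem hy']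
      omega

theorem f_two (n : ℕ) : f (n + 2) = 5 * f n := by rw [f]
theorem g_two (n : ℕ) : g (n + 2) = 17 * g n := by rw [g]

theorem f_bd (n : ℕ) : 1 ≤ f n ∧ 2 * f n ≤ f (n + 1) ∧ f (n + 1) ≤ 5 / 2 * f n := by
  induction n with
  | zero => norm_num [f]
  | succ n ih =>
    rw [f_two]
    refine ⟨?_, ?_, ?_⟩ <;> linarith [ih.1, ih.2.1, ih.2.2]

theorem g_bd (n : ℕ) : 1 ≤ g n ∧ 136 / 33 * g n ≤ g (n + 1) ∧ g (n + 1) ≤ 33 / 8 * g n := by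
  induction n with
  | zero => norm_num [g]
  | succ n ih =>
    rw [g_two]
    refine ⟨?_, ?_, ?_⟩ <;> linarith [ih.1, ih.2.1, ih.2.2]

theorem f_even (m : ℕ) : f (2 * m) = 5 ^ m := by
  induction m with
  | zero => simp [f]
  | succ m ih => rw [show 2 * (m + 1) = 2 * m + 2 by ring, f_two, ih]; ring

theorem f_odd (m : ℕ) : f (2 * m + 1) = 2 * 5 ^ m := by
  induction m with
  | zero => simp [f]
  | succ m ih => rw [show 2 * (m + 1) + 1 = 2 * m + 1 + 2 by ring, f_two, ih]; ring

theorem g_even (m : ℕ) : g (2 * m) = 17 ^ m := by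
  induction m with
  | zero => simp [g]
  | succ m ih => rw [show 2 * (m + 1) = 2 * m + 2 by ring, g_two, ih]; ring

/-! ### Two-coloured Ramsey facts -/

def TwoCol (c : V → V → C) (R : Finset V) (r b : C) : Prop :=
  ∀ x ∈ R, ∀ y ∈ R, x ≠ y → E c r x y ∨ E c b x y

theorem TwoCol.mono {c : V → V → C} {R R' : Finset V} {r b : C} (h : TwoCol c R r b)
    (hR : R' ⊆ R) : TwoCol c R' r b := fun x hx y hy => h x (hR hx) y (hR hy)

theorem TwoCol.swap {c : V → V → C} {R : Finset V} {r b : C} (h : TwoCol c R r b) :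
    TwoCol c R b r := fun x hx y hy hn => (h x hx y hy hn).symm

def NoK4 (c : V → V → C) (S : Finset V) (i : C) : Prop :=
  ∀ x ∈ S, ∀ y ∈ S, ∀ z ∈ S, ∀ w ∈ S,
    E c i x y → E c i x z → E c i x w → E c i y z → E c i y w → E c i z w → False

open Classical in
noncomputable def Nb (c : V → V → C) (i : C) (R : Finset V) (v : V) : Finset V :=
  R.filter (fun u => E c i v u)

theorem mem_Nb {c : V → V → C} {i : C} {R : Finset V} {v u : V} :
    u ∈ Nb c i R v ↔ u ∈ R ∧ E c i v u := by simp [Nb]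

theorem Nb_sub {c : V → V → C} {i : C} {R : Finset V} {v : V} : Nb c i R v ⊆ R := by
  intro u hu; exact (mem_Nb.1 hu).1

theorem pig {c : V → V → C} {R : Finset V} {r b : C} (h : TwoCol c R r b) {v : V}
    (hv : v ∈ R) : R.card ≤ 1 + (Nb c r R v).card + (Nb c b R v).card := by
  classical
  have hsub : R ⊆ ({v} ∪ Nb c r R v) ∪ Nb c b R v := by
    intro u hu
    simp only [Finset.mem_union, Finset.mem_singleton, mem_Nb]
    by_cases huv : u = v
    · exact Or.inl (Or.inl huv)
    · rcases h v hv u hu (Ne.symm huv) with h | h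
      · exact Or.inl (Or.inr ⟨hu, h⟩)
      · exact Or.inr ⟨hu, h⟩
  have h1 := Finset.card_le_card hsub
  have h2 := Finset.card_union_le ({v} ∪ Nb c r R v) (Nb c b R v)
  have h3 := Finset.card_union_le {v} (Nb c r R v)
  rw [Finset.card_singleton] at h3
  omega

theorem pick {X : Finset V} {n : ℕ} (h : n ≤ X.card) :
    ∃ e : Fin n → V, Function.Injective e ∧ ∀ i, e i ∈ X := by
  obtain ⟨e⟩ := Function.Embedding.nonempty_of_card_le (α := Fin n) (β := {x // x ∈ X})
    (by simpa using h)
  exact ⟨fun i => (e i).1, fun i j hij => e.injective (Subtype.ext hij), fun i => (e i).2⟩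

/-- If there is no red triangle then a red neighbourhood is a blue clique. -/
theorem nb_clique {c : V → V → C} {R : Finset V} {r b : C} (h : TwoCol c R r b)
    (hr : NoT c R r) {v : V} (hv : v ∈ R) {x y : V} (hx : x ∈ Nb c r R v)
    (hy : y ∈ Nb c r R v) (hxy : x ≠ y) : E c b x y := by
  rw [mem_Nb] at hx hy
  rcases h x hx.1 y hy.1 hxy with h | h
  · exact (hr v hv x hx.1 y hy.1 hx.2 hy.2 h).elim
  · exact h

theorem r33_aux {c : V → V → C} {R : Finset V} {r b : C} (h : TwoCol c R r b)
    (hr : NoT c R r) (hb : NoT c R b) {v : V} (hv : v ∈ R) : (Nb c r R v).card ≤ 2 := by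
  by_contra hcon
  obtain ⟨e, he, hm⟩ := pick (n := 3) (X := Nb c r R v) (by omega)
  have hcl : ∀ i j, i ≠ j → E c b (e i) (e j) := fun i j hij =>
    nb_clique h hr hv (hm i) (hm j) (fun h => hij (he h))
  exact hb _ (Nb_sub (hm 0)) _ (Nb_sub (hm 1)) _ (Nb_sub (hm 2)) (hcl 0 1 (by decide))
    (hcl 0 2 (by decide)) (hcl 1 2 (by decide))

theorem r33 {c : V → V → C} {R : Finset V} {r b : C} (h : TwoCol c R r b)
    (hr : NoT c R r) (hb : NoT c R b) : R.card ≤ 5 := by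
  rcases R.eq_empty_or_nonempty with rfl | ⟨v, hv⟩
  · simp
  have := pig h hv
  have := r33_aux h hr hb hv
  have := r33_aux h.swap hb hr hv
  omega

theorem nb_noT {c : V → V → C} {R : Finset V} {b : C}
    (hb : NoK4 c R b) {v : V} (hv : v ∈ R) : NoT c (Nb c b R v) b := by
  intro x hx y hy z hz h1 h2 h3
  rw [mem_Nb] at hx hy hz
  exact hb v hv x hx.1 y hy.1 z hz.1 hx.2 hy.2 hz.2 h1 h2 h3

theorem r34 {c : V → V → C} (hs : Sym c) {R : Finset V} {r b : C} (h : TwoCol c R r b)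
    (hr : NoT c R r) (hb : NoK4 c R b) : R.card ≤ 8 := by
  classical
  by_contra hcon
  obtain ⟨R', hR', hc⟩ := Finset.exists_subset_card_eq (s := R) (n := 9) (by omega)
  have h' := h.mono hR'
  have hr' := hr.mono hR'
  have hb' : NoK4 c R' b := fun x hx y hy z hz w hw =>
    hb x (hR' hx) y (hR' hy) z (hR' hz) w (hR' hw)
  have hdeg : ∀ v ∈ R', (Nb c r R' v).card = 3 := by
    intro v hv
    have h1 := pig h' hv
    have h2 : (Nb c b R' v).card ≤ 5 :=
      r33 (h'.mono Nb_sub) (hr'.mono Nb_sub) (nb_noT hb' hv)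
    have h3 : (Nb c r R' v).card ≤ 3 := by
      by_contra hcon
      obtain ⟨e, he, hm⟩ := pick (n := 4) (X := Nb c r R' v) (by omega)
      have hcl : ∀ i j, i ≠ j → E c b (e i) (e j) := fun i j hij =>
        nb_clique h' hr' hv (hm i) (hm j) (fun h => hij (he h))
      exact hb' _ (Nb_sub (hm 0)) _ (Nb_sub (hm 1)) _ (Nb_sub (hm 2)) _ (Nb_sub (hm 3))
        (hcl 0 1 (by decide)) (hcl 0 2 (by decide)) (hcl 0 3 (by decide))
        (hcl 1 2 (by decide)) (hcl 1 3 (by decide)) (hcl 2 3 (by decide))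
    omega
  let G : SimpleGraph {x // x ∈ R'} :=
    { Adj := fun x y => E c r x.1 y.1
      symm := ⟨fun x y h => h.symm hs⟩
      loopless := ⟨fun x h => h.1 rfl⟩ }
  have hG : ∀ v, G.degree v = 3 := by
    intro v
    rw [← hdeg v.1 v.2, ← SimpleGraph.card_neighborFinset_eq_degree]
    refine Finset.card_bij (fun u _ => u.1) ?_ ?_ ?_
    · intro u hu
      rw [SimpleGraph.mem_neighborFinset] at hu
      exact mem_Nb.2 ⟨u.2, hu⟩
    · intro u _ w _ huw; exact Subtype.ext huw
    · intro u hu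
      rw [mem_Nb] at hu
      exact ⟨⟨u, hu.1⟩, by rw [SimpleGraph.mem_neighborFinset]; exact hu.2, rfl⟩
  have hsum := G.sum_degrees_eq_twice_card_edges
  simp only [hG, Finset.sum_const, Finset.card_univ, Fintype.card_coe, hc] at hsum
  simp at hsum
  omega

/-- A vertex outside a red `K₄` is joined in red to at most one of its vertices. -/
theorem k4_out {c : V → V → C} {R : Finset V} {r b : C} (h : TwoCol c R r b)
    (hr : NoH c R r) {e : Fin 4 → V} (hm : ∀ i, e i ∈ R)
    (hcl : ∀ i j, i ≠ j → E c r (e i) (e j)) {u : V} (hu : u ∈ R) (hue : ∀ i, u ≠ e i) :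
    ∃ m : Fin 4, ∀ j, j ≠ m → E c b u (e j) := by
  by_cases hall : ∀ j, E c b u (e j)
  · exact ⟨0, fun j _ => hall j⟩
  push Not at hall
  obtain ⟨m, hm'⟩ := hall
  refine ⟨m, fun j hj => ?_⟩
  by_contra hj'
  have h1 : E c r u (e m) := (h u hu _ (hm m) (hue m)).resolve_right hm'
  have h2 : E c r u (e j) := (h u hu _ (hm j) (hue j)).resolve_right hj'
  have key : ∀ m j : Fin 4, ∃ p q : Fin 4, m ≠ p ∧ j ≠ p ∧ m ≠ q ∧ j ≠ q ∧ p ≠ q := by decide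
  obtain ⟨p, q, hp1, hp2, hq1, hq2, hpq⟩ := key m j
  exact hr _ (hm m) _ (hm j) _ (hm p) _ (hm q) u hu (hcl _ _ hj.symm) (hcl _ _ hp1)
    (hcl _ _ hq1) (hcl _ _ hp2) (hcl _ _ hq2) (hcl _ _ hpq) h1 h2 (hue p) (hue q)

theorem get_k4 {c : V → V → C} (hs : Sym c) {R : Finset V} {r : C} {x y z w : V}
    (hx : x ∈ R) (hy : y ∈ R) (hz : z ∈ R) (hw : w ∈ R)
    (h1 : E c r x y) (h2 : E c r x z) (h3 : E c r x w) (h4 : E c r y z)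
    (h5 : E c r y w) (h6 : E c r z w) : ∃ e : Fin 4 → V, (∀ i, e i ∈ R) ∧
      ∀ i j, i ≠ j → E c r (e i) (e j) := by
  refine ⟨![x, y, z, w], ?_, ?_⟩
  · intro i; fin_cases i <;> simpa
  · have h1' := h1.symm hs
    have h2' := h2.symm hs
    have h3' := h3.symm hs
    have h4' := h4.symm hs
    have h5' := h5.symm hs
    have h6' := h6.symm hs
    intro i j hij
    fin_cases i <;> fin_cases j <;> first | exact absurd rfl hij | assumption

theorem r3H {c : V → V → C} (hs : Sym c) {R : Finset V} {r b : C} (h : TwoCol c R r b)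
    (hr : NoT c R r) (hb : NoH c R b) : R.card ≤ 8 := by
  classical
  by_contra hcon
  have hk : ¬ NoK4 c R b := fun hk => hcon (r34 hs h hr hk)
  unfold NoK4 at hk
  push Not at hk
  obtain ⟨x, hx, y, hy, z, hz, w, hw, h1, h2, h3, h4, h5, h6, -⟩ := hk
  obtain ⟨e, hm, hcl⟩ := get_k4 hs hx hy hz hw h1 h2 h3 h4 h5 h6
  set Q := Finset.univ.image e with hQ
  have hQc : Q.card ≤ 4 := Finset.card_image_le.trans (by simp)
  have hd := Finset.le_card_sdiff Q R
  have hout : ∀ u ∈ R \ Q, u ∈ R ∧ ∀ i, u ≠ e i := by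
    intro u hu
    rw [Finset.mem_sdiff] at hu
    refine ⟨hu.1, fun i hi => hu.2 ?_⟩
    rw [hi]; exact Finset.mem_image_of_mem _ (Finset.mem_univ i)
  have hblue : ∀ u ∈ R \ Q, ∀ v ∈ R \ Q, u ≠ v → E c b u v := by
    intro u hu v hv huv
    obtain ⟨m, hm1⟩ := k4_out h.swap hb hm hcl (hout u hu).1 (hout u hu).2
    obtain ⟨m', hm2⟩ := k4_out h.swap hb hm hcl (hout v hv).1 (hout v hv).2
    obtain ⟨j, hj, hj'⟩ : ∃ j : Fin 4, j ≠ m ∧ j ≠ m' := by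
      clear hm1 hm2; revert m m'; decide
    refine (h u (hout u hu).1 v (hout v hv).1 huv).resolve_left fun hred => ?_
    exact hr u (hout u hu).1 v (hout v hv).1 _ (hm j) hred (hm1 j hj) (hm2 j hj')
  obtain ⟨p, hp, hpm⟩ := pick (n := 5) (X := R \ Q) (by omega)
  have hpc : ∀ i j, i ≠ j → E c b (p i) (p j) := fun i j hij =>
    hblue _ (hpm i) _ (hpm j) (fun h => hij (hp h))
  have hpR : ∀ i, p i ∈ R := fun i => (hout _ (hpm i)).1
  exact hb _ (hpR 0) _ (hpR 1) _ (hpR 2) _ (hpR 3) _ (hpR 4) (hpc 0 1 (by decide))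
    (hpc 0 2 (by decide)) (hpc 0 3 (by decide)) (hpc 1 2 (by decide)) (hpc 1 3 (by decide))
    (hpc 2 3 (by decide)) (hpc 4 0 (by decide)) (hpc 4 1 (by decide))
    (hpc 4 2 (by decide)).1 (hpc 4 3 (by decide)).1

theorem rHH_k4 {c : V → V → C} (hs : Sym c) {R : Finset V} {r b : C} (h : TwoCol c R r b)
    (hr : NoH c R r) (hb : NoH c R b) {e : Fin 4 → V} (hm : ∀ i, e i ∈ R)
    (hcl : ∀ i j, i ≠ j → E c r (e i) (e j)) : R.card ≤ 12 := by
  classical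
  by_contra hcon
  set Q := Finset.univ.image e with hQ
  have hQc : Q.card ≤ 4 := Finset.card_image_le.trans (by simp)
  have hd := Finset.le_card_sdiff Q R
  have hout : ∀ u ∈ R \ Q, u ∈ R ∧ ∀ i, u ≠ e i := by
    intro u hu
    rw [Finset.mem_sdiff] at hu
    refine ⟨hu.1, fun i hi => hu.2 ?_⟩
    rw [hi]; exact Finset.mem_image_of_mem _ (Finset.mem_univ i)
  have hT : NoT c (R \ Q) b := by
    intro x hx y hy z hz hxy hxz hyz
    obtain ⟨mx, hmx⟩ := k4_out h hr hm hcl (hout x hx).1 (hout x hx).2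
    obtain ⟨my, hmy⟩ := k4_out h hr hm hcl (hout y hy).1 (hout y hy).2
    obtain ⟨mz, hmz⟩ := k4_out h hr hm hcl (hout z hz).1 (hout z hz).2
    have key : ∀ mx my mz : Fin 4, ∃ j j', j ≠ mx ∧ j ≠ my ∧ j ≠ mz ∧ j' ≠ j ∧
        ((j' ≠ mx ∧ j' ≠ my) ∨ (j' ≠ mx ∧ j' ≠ mz) ∨ (j' ≠ my ∧ j' ≠ mz)) := by decide
    obtain ⟨j, j', h1, h2, h3, h4, h5⟩ := key mx my mz
    have hx' := (hout x hx).1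
    have hy' := (hout y hy).1
    have hz' := (hout z hz).1
    have hxj := hmx j h1
    have hyj := hmy j h2
    have hzj := hmz j h3
    have hjj := (hcl j' j h4).1
    rcases h5 with ⟨h5, h6⟩ | ⟨h5, h6⟩ | ⟨h5, h6⟩
    · exact hb x hx' y hy' z hz' _ (hm j) _ (hm j') hxy hxz hxj hyz hyj hzj
        ((hmx _ h5).symm hs) ((hmy _ h6).symm hs) ((hout z hz).2 j').symm hjj
    · exact hb x hx' z hz' y hy' _ (hm j) _ (hm j') hxz hxy hxj (hyz.symm hs) hzj hyj
        ((hmx _ h5).symm hs) ((hmz _ h6).symm hs) ((hout y hy).2 j').symm hjj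
    · exact hb y hy' z hz' x hx' _ (hm j) _ (hm j') hyz (hxy.symm hs) hyj (hxz.symm hs) hzj hxj
        ((hmy _ h5).symm hs) ((hmz _ h6).symm hs) ((hout x hx).2 j').symm hjj
  have := r3H hs (h.swap.mono Finset.sdiff_subset) hT (hr.mono Finset.sdiff_subset)
  omega

theorem rHH_aux {c : V → V → C} (hs : Sym c) {R : Finset V} {r b : C} (h : TwoCol c R r b)
    (hr : NoH c R r) (hb : NoH c R b) (hR : 18 ≤ R.card) {v : V} (hv : v ∈ R) :
    (Nb c r R v).card ≤ 8 := by
  by_cases hT : NoT c (Nb c r R v) r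
  · exact r3H hs (h.mono Nb_sub) hT (hb.mono Nb_sub)
  · unfold NoT at hT
    push Not at hT
    obtain ⟨x, hx, y, hy, z, hz, hxy, hxz, hyz, -⟩ := hT
    rw [mem_Nb] at hx hy hz
    obtain ⟨e, hm, hcl⟩ := get_k4 hs hv hx.1 hy.1 hz.1 hx.2 hy.2 hz.2 hxy hxz hyz
    have := rHH_k4 hs h hr hb hm hcl
    omega

theorem rHH {c : V → V → C} (hs : Sym c) {R : Finset V} {r b : C} (h : TwoCol c R r b)
    (hr : NoH c R r) (hb : NoH c R b) : R.card ≤ 17 := by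
  by_contra hcon
  obtain ⟨v, hv⟩ : R.Nonempty := Finset.card_pos.1 (by omega)
  have := pig h hv
  have := rHH_aux hs h hr hb (by omega) hv
  have := rHH_aux hs h.swap hb hr (by omega) hv
  omega

/-! ### the Gallai partition theorem -/

/-- `u` and `v` lie in the same component of colour `i` inside `S`. -/
def Cn (c : V → V → C) (S : Finset V) (i : C) : V → V → Prop :=
  Relation.EqvGen (fun u v => u ∈ S ∧ v ∈ S ∧ c u v = i)

theorem eqvGen_closed {r : V → V → Prop} {Q : V → Prop} (h : ∀ x y, r x y → (Q x ↔ Q y))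
    {a b : V} (hab : Relation.EqvGen r a b) : Q a ↔ Q b := by
  induction hab with
  | rel x y hxy => exact h x y hxy
  | refl x => rfl
  | symm x y _ ih => exact ih.symm
  | trans x y z _ _ ih1 ih2 => exact ih1.trans ih2

theorem Cn.mem {c : V → V → C} {S : Finset V} {i : C} {a b : V} (h : Cn c S i a b) :
    a ∈ S ↔ b ∈ S :=
  eqvGen_closed (Q := fun x => x ∈ S) (fun x y hxy => by simp [hxy.1, hxy.2.1]) h

theorem Cn.const {c : V → V → C} (_hs : Sym c) (hG : Gal c) {S : Finset V} {i : C} {a a' : V}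
    (h : Cn c S i a a') : ∀ b ∈ S, ¬ Cn c S i a b → c a b = c a' b := by
  induction h with
  | rel x y hxy =>
    intro b hb hn
    by_cases hxy' : x = y
    · rw [hxy']
    have hxb : x ≠ b := fun h => hn (h ▸ Relation.EqvGen.refl x)
    have hyb : y ≠ b := fun h => hn (h ▸ Relation.EqvGen.rel x y hxy)
    rcases hG x y b hxy' hxb hyb with h | h | h
    · exact (hn (.rel _ _ ⟨hxy.1, hb, by rw [← h]; exact hxy.2.2⟩)).elim
    · exact (hn (.trans _ _ _ (.rel _ _ hxy)
        (.rel _ _ ⟨hxy.2.1, hb, by rw [← h]; exact hxy.2.2⟩))).elim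
    · exact h
  | refl x => intros; rfl
  | symm x y hxy ih =>
    intro b hb hn
    exact (ih b hb (fun h => hn (.trans _ _ _ (.symm _ _ hxy) h))).symm
  | trans x y z hxy _ ih1 ih2 =>
    intro b hb hn
    exact (ih1 b hb hn).trans (ih2 b hb (fun h => hn (.trans _ _ _ hxy h)))

def Conn (c : V → V → C) (S : Finset V) (i : C) : Prop := ∀ u ∈ S, ∀ v ∈ S, Cn c S i u v

/-- In a connected colour every vertex has an edge of that colour. -/
theorem Conn.edge {c : V → V → C} (hs : Sym c) {S : Finset V} {i : C} (h : Conn c S i) {v w : V}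
    (hv : v ∈ S) (hw : w ∈ S) (hvw : w ≠ v) : ∃ u ∈ S, u ≠ v ∧ c v u = i := by
  by_contra hcon
  push Not at hcon
  have := eqvGen_closed (Q := fun x => x = v) (fun x y hxy => by
    constructor
    · rintro rfl
      by_contra hne
      exact hcon y hxy.2.1 hne hxy.2.2
    · rintro rfl
      by_contra hne
      exact hcon x hxy.1 hne (by rw [hs]; exact hxy.2.2)) (h v hv w hw)
  exact hvw (this.1 rfl)

theorem gallai_step [DecidableEq V] {c : V → V → C} (hs : Sym c) (hG : Gal c) {S : Finset V}
    {v : V} (hv : v ∈ S) {i j l : C} (hij : i ≠ j) (hil : i ≠ l) (hjl : j ≠ l)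
    (hi : Conn c S i) (hj : Conn c S j) (hl : Conn c S l) (hn : ¬ Conn c (S.erase v) i) :
    False := by
  unfold Conn at hn
  push Not at hn
  obtain ⟨p, hp, q, hq, hpq⟩ := hn
  have hpS := Finset.mem_of_mem_erase hp
  have hpv := Finset.ne_of_mem_erase hp
  -- every component of `S - v` has an `i`-edge to `v`
  have hcomp : ∀ a ∈ S.erase v, ∃ u, Cn c (S.erase v) i a u ∧ c v u = i := by
    intro a ha
    by_contra hcon
    push Not at hcon
    have := eqvGen_closed (Q := fun x => Cn c (S.erase v) i a x) (fun x y hxy => by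
      constructor
      · intro hx
        have hxS := hx.mem.1 ha
        by_cases hy : y = v
        · subst hy
          exact (hcon x hx (by rw [hs]; exact hxy.2.2)).elim
        · exact .trans _ _ _ hx (.rel _ _ ⟨hxS, Finset.mem_erase.2 ⟨hy, hxy.2.1⟩, hxy.2.2⟩)
      · intro hy
        have hyS := hy.mem.1 ha
        by_cases hx : x = v
        · subst hx
          exact (hcon y hy hxy.2.2).elim
        · exact .trans _ _ _ hy (.symm _ _
            (.rel _ _ ⟨Finset.mem_erase.2 ⟨hx, hxy.1⟩, hyS, hxy.2.2⟩)))
        (hi a (Finset.mem_of_mem_erase ha) v hv)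
    have h2 := (this.1 (.refl a)).mem.1 ha
    simp at h2
  obtain ⟨w1, hw1, hw1v, hcw1⟩ := hj.edge hs hv hpS hpv
  obtain ⟨w2, hw2, hw2v, hcw2⟩ := hl.edge hs hv hpS hpv
  have hw1' := Finset.mem_erase.2 ⟨hw1v, hw1⟩
  have hw2' := Finset.mem_erase.2 ⟨hw2v, hw2⟩
  -- propagate
  have tri : ∀ w ∈ S.erase v, ∀ u, u ∈ S.erase v → ¬ Cn c (S.erase v) i w u → c v w ≠ i →
      c v u = i → c w u = c v w := by
    intro w hw u hu hwu h1 h2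
    have hne : w ≠ u := fun h => hwu (h ▸ .refl w)
    have hwui : c w u ≠ i := fun h => hwu (.rel _ _ ⟨hw, hu, h⟩)
    rcases hG v w u (Finset.ne_of_mem_erase hw).symm (Finset.ne_of_mem_erase hu).symm hne
      with h | h | h
    · exact (h1 (h.trans h2)).elim
    · exact h.symm
    · exact (hwui (h.symm.trans h2)).elim
  by_cases h12 : Cn c (S.erase v) i w1 w2
  · obtain ⟨t, ht, hwt⟩ : ∃ t ∈ S.erase v, ¬ Cn c (S.erase v) i w1 t := by
      by_contra hcon
      push Not at hcon
      exact hpq (.trans _ _ _ (.symm _ _ (hcon p hp)) (hcon q hq))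
    obtain ⟨u, hu, hcu⟩ := hcomp t ht
    have huS := hu.mem.1 ht
    have h1u : ¬ Cn c (S.erase v) i w1 u := fun h => hwt (.trans _ _ _ h (.symm _ _ hu))
    have h2u : ¬ Cn c (S.erase v) i w2 u := fun h => h1u (.trans _ _ _ h12 h)
    have e1 := tri w1 hw1' u huS h1u (by rw [hcw1]; exact hij.symm) hcu
    have e2 := tri w2 hw2' u huS h2u (by rw [hcw2]; exact hil.symm) hcu
    have e3 := h12.const hs hG u huS h1u
    exact hjl (by rw [← hcw1, ← hcw2, ← e1, ← e2, e3])
  · obtain ⟨u, hu, hcu⟩ := hcomp w2 hw2'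
    obtain ⟨t, ht, hct⟩ := hcomp w1 hw1'
    have huS := hu.mem.1 hw2'
    have htS := ht.mem.1 hw1'
    have h1u : ¬ Cn c (S.erase v) i w1 u := fun h => h12 (.trans _ _ _ h (.symm _ _ hu))
    have h2t : ¬ Cn c (S.erase v) i w2 t := fun h =>
      h12 (.trans _ _ _ ht (.symm _ _ h))
    have h21 : ¬ Cn c (S.erase v) i w2 w1 := fun h => h12 (.symm _ _ h)
    have e1 := tri w1 hw1' u huS h1u (by rw [hcw1]; exact hij.symm) hcu
    have e2 := tri w2 hw2' t htS h2t (by rw [hcw2]; exact hil.symm) hct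
    have e3 := ht.const hs hG w2 hw2' h12
    have e4 := hu.const hs hG w1 hw1' h21
    have e5 := hs w1 w2
    have e6 := hs w2 t
    have e7 := hs w1 u
    exact hjl (by rw [← hcw1, ← hcw2, ← e1, ← e2, e7, ← e4, e6, ← e3, e5])

theorem gallai_conn [DecidableEq V] {c : V → V → C} (hs : Sym c) (hG : Gal c) (n : ℕ) :
    ∀ S : Finset V, S.card = n → 2 ≤ n → ∀ i j l : C, i ≠ j → i ≠ l → j ≠ l →
    Conn c S i → Conn c S j → Conn c S l → False := by
  induction n with
  | zero => intro S _ h; omega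
  | succ n ih =>
    intro S hS hn i j l hij hil hjl hi hj hl
    obtain ⟨v, hv, w, hw, hvw⟩ := Finset.one_lt_card.1 (show 1 < S.card by omega)
    have hc := Finset.card_erase_of_mem hv
    by_cases hn2 : 2 ≤ n
    · by_cases h1 : Conn c (S.erase v) i
      · by_cases h2 : Conn c (S.erase v) j
        · by_cases h3 : Conn c (S.erase v) l
          · exact ih (S.erase v) (by omega) hn2 i j l hij hil hjl h1 h2 h3
          · exact gallai_step hs hG hv hil.symm hjl.symm hij hl hi hj h3
        · exact gallai_step hs hG hv hij.symm hjl hil hj hi hl h2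
      · exact gallai_step hs hG hv hij hil hjl hi hj hl h1
    · obtain ⟨a, ha⟩ := Finset.card_eq_one.1 (show (S.erase v).card = 1 by omega)
      obtain ⟨x, hx, hxv, hcx⟩ := hi.edge hs hv hw hvw.symm
      obtain ⟨y, hy, hyv, hcy⟩ := hj.edge hs hv hw hvw.symm
      have hx' : x ∈ S.erase v := Finset.mem_erase.2 ⟨hxv, hx⟩
      have hy' : y ∈ S.erase v := Finset.mem_erase.2 ⟨hyv, hy⟩
      rw [ha, Finset.mem_singleton] at hx' hy'
      rw [hx'] at hcx
      rw [hy'] at hcy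
      exact hij (hcx.symm.trans hcy)

/-- the Gallai theorem: a partition, described by an idempotent choice of representatives,
whose quotient uses at most two colours. -/
theorem gallai [DecidableEq V] {c : V → V → C} (hs : Sym c) (hG : Gal c) (n : ℕ) :
    ∀ S : Finset V, S.card ≤ n → 2 ≤ S.card →
    ∃ (r b : C) (p : V → V), (∀ v ∈ S, p v ∈ S) ∧ (∀ v ∈ S, p (p v) = p v) ∧
      (∀ u ∈ S, ∀ v ∈ S, p u ≠ p v → c u v = c (p u) (p v) ∧ (c u v = r ∨ c u v = b)) ∧
      ∃ u ∈ S, ∃ v ∈ S, p u ≠ p v := by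
  classical
  induction n with
  | zero => intro S h1 h2; omega
  | succ n ih =>
    intro S hS h2
    by_cases h3 : ∃ i j l : C, i ≠ j ∧ i ≠ l ∧ j ≠ l ∧ (∃ x ∈ S, ∃ y ∈ S, E c i x y) ∧
        (∃ x ∈ S, ∃ y ∈ S, E c j x y) ∧ (∃ x ∈ S, ∃ y ∈ S, E c l x y)
    · obtain ⟨i, hu, hnc⟩ : ∃ i : C, (∃ x ∈ S, ∃ y ∈ S, E c i x y) ∧ ¬ Conn c S i := by
        obtain ⟨i, j, l, hij, hil, hjl, hi, hj, hl⟩ := h3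
        by_contra hcon
        push Not at hcon
        exact gallai_conn hs hG _ S rfl h2 i j l hij hil hjl (hcon i hi) (hcon j hj) (hcon l hl)
      let st : Setoid V := Relation.EqvGen.setoid (fun u v => u ∈ S ∧ v ∈ S ∧ c u v = i)
      let p : V → V := fun v => (Quotient.mk st v).out
      have hpv : ∀ v, Cn c S i (p v) v := fun v => Quotient.mk_out (s := st) v
      have hpS : ∀ v ∈ S, p v ∈ S := fun v hv => (hpv v).mem.2 hv
      have hpeq : ∀ u v, p u = p v ↔ Cn c S i u v := by
        intro u v
        constructor
        · intro h
          exact .trans _ _ _ (.symm _ _ (hpv u)) (h ▸ hpv v)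
        · intro h
          have : Quotient.mk st u = Quotient.mk st v := Quotient.sound h
          simp only [p, this]
      have hpp : ∀ v, p (p v) = p v := fun v => (hpeq _ _).2 (hpv v)
      have hcc : ∀ u ∈ S, ∀ v ∈ S, p u ≠ p v → c u v = c (p u) (p v) := by
        intro u hu v hv hne
        have hn : ¬ Cn c S i u v := fun h => hne ((hpeq u v).2 h)
        have e1 := Cn.const hs hG (.symm _ _ (hpv u)) v hv hn
        have hn2 : ¬ Cn c S i v (p u) := fun h =>
          hn (.trans _ _ _ (.symm _ _ (hpv u)) (.symm _ _ h))
        have e2 := Cn.const hs hG (.symm _ _ (hpv v)) (p u) (hpS u hu) hn2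
        rw [e1, hs (p u) v, e2, hs]
      set R := S.image p with hR
      have hRS : R ⊆ S := by
        intro x hx
        obtain ⟨y, hy, rfl⟩ := Finset.mem_image.1 hx
        exact hpS y hy
      have hRc : R.card < S.card := by
        obtain ⟨x, hx, y, hy, hxy⟩ := hu
        have hpxy : p x = p y := (hpeq x y).2 (.rel _ _ ⟨hx, hy, hxy.2⟩)
        refine lt_of_le_of_ne Finset.card_image_le fun h => ?_
        exact hxy.1 (Finset.card_image_iff.1 h hx hy hpxy)
      have hR2 : 2 ≤ R.card := by
        unfold Conn at hnc
        push Not at hnc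
        obtain ⟨x, hx, y, hy, hxy⟩ := hnc
        exact Finset.one_lt_card.2 ⟨p x, Finset.mem_image_of_mem _ hx, p y,
          Finset.mem_image_of_mem _ hy, fun h => hxy ((hpeq x y).1 h)⟩
      obtain ⟨r, b, p', h1, h4, h5, u, hu, v, hv, huv⟩ := ih R (by omega) hR2
      have hpR : ∀ v ∈ S, p v ∈ R := fun v hv => Finset.mem_image_of_mem _ hv
      have hfix : ∀ x ∈ R, p x = x := by
        intro x hx
        obtain ⟨y, hy, rfl⟩ := Finset.mem_image.1 hx
        exact hpp y
      refine ⟨r, b, fun v => p' (p v), fun v hv => hRS (h1 _ (hpR v hv)), ?_, ?_, ?_⟩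
      · intro v hv
        simp only
        rw [hfix _ (h1 _ (hpR v hv)), h4 _ (hpR v hv)]
      · intro u hu v hv hne
        have e1 := hcc u hu v hv (fun h => hne (by simp only [h]))
        have e2 := h5 _ (hpR u hu) _ (hpR v hv) hne
        rw [e1]
        exact e2
      · refine ⟨u, hRS hu, v, hRS hv, ?_⟩
        simp only
        rwa [hfix u hu, hfix v hv]
    · obtain ⟨x, hx, y, hy, hxy⟩ := Finset.one_lt_card.1 (show 1 < S.card by omega)
      have hxyE : E c (c x y) x y := ⟨hxy, rfl⟩
      by_cases hall : ∀ u ∈ S, ∀ v ∈ S, u ≠ v → c u v = c x y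
      · exact ⟨c x y, c x y, id, fun v hv => hv, fun v _ => rfl,
          fun u hu v hv h => ⟨rfl, Or.inl (hall u hu v hv h)⟩, x, hx, y, hy, hxy⟩
      · push Not at hall
        obtain ⟨z, hz, w, hw, hzw, hne⟩ := hall
        refine ⟨c x y, c z w, id, fun v hv => hv, fun v _ => rfl,
          fun u hu v hv h => ⟨rfl, ?_⟩, x, hx, y, hy, hxy⟩
        by_contra hcon
        push Not at hcon
        exact h3 ⟨c x y, c z w, c u v, hne.symm, hcon.1.symm, hcon.2.symm,
          ⟨x, hx, y, hy, hxy, rfl⟩, ⟨z, hz, w, hw, hzw, rfl⟩, ⟨u, hu, v, hv, h, rfl⟩⟩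

/-! ### The upper bound -/

def Bd (c : V → V → C) (n : ℕ) : Prop :=
  ∀ S : Finset V, S.card < n → ∀ T B : Finset C, Disjoint T B → P c T B S →
    (S.card : ℚ) ≤ f T.card * g B.card

theorem num (a b : ℕ) : 1 ≤ f a * g b ∧ 2 * (f a * g b) ≤ f (a + 1) * g b ∧
    f (a + 1) * g b ≤ 5 / 2 * (f a * g b) ∧ 136 / 33 * (f a * g b) ≤ f a * g (b + 1) ∧
    f a * g (b + 1) ≤ 33 / 8 * (f a * g b) := by
  obtain ⟨h1, h2, h3⟩ := f_bd a
  obtain ⟨k1, k2, k3⟩ := g_bd b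
  refine ⟨?_, ?_, ?_, ?_, ?_⟩
  · nlinarith
  · nlinarith
  · nlinarith
  · nlinarith
  · nlinarith

theorem pawB [DecidableEq V] [DecidableEq C] {c : V → V → C} (hs : Sym c) {n : ℕ}
    (hB : Bd c n) {A : Finset V} (hA : A.card < n) {T B : Finset C} {r : C} (hrT : r ∉ T)
    (hrB : r ∉ B) (hd : Disjoint T B) (hP : P c T (insert r B) A) (hp : NoPaw c A r) :
    (A.card : ℚ) ≤ 3 / 2 * (f (T.card + 1) * g B.card) := by
  obtain ⟨A', hA', hT, hc⟩ := paw_sub hs _ A le_rfl hp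
  have h1 := hB A' ((Finset.card_le_card hA').trans_lt hA) (insert r T) B
    (by rw [Finset.disjoint_insert_left]; exact ⟨hrB, hd⟩) ((hP.mono hA').toT hT)
  rw [Finset.card_insert_of_notMem hrT] at h1
  have h2 : (2 * A.card : ℚ) ≤ 3 * A'.card := by exact_mod_cast hc
  linarith

theorem not_noE {c : V → V → C} {A : Finset V} {i : C} (h : ¬ NoE c A i) :
    ∃ x ∈ A, ∃ y ∈ A, E c i x y := by
  unfold NoE at h
  push Not at h
  exact h

theorem two_of_not_noE {c : V → V → C} {A : Finset V} {i : C} (h : ¬ NoE c A i) :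
    2 ≤ A.card := by
  obtain ⟨x, hx, y, hy, hxy⟩ := not_noE h
  exact Finset.one_lt_card.2 ⟨x, hx, y, hy, hxy.1⟩

theorem three_of_not_noE {c : V → V → C} {A : Finset V} {r b : C} (hrb : r ≠ b) (hs : Sym c)
    (h : ¬ NoE c A r) (h' : ¬ NoE c A b) : 3 ≤ A.card := by
  classical
  by_contra hcon
  have h2 := two_of_not_noE h
  obtain ⟨p, q, hpq, rfl⟩ := Finset.card_eq_two.1 (show A.card = 2 by omega)
  obtain ⟨x, hx, y, hy, hxy⟩ := not_noE h
  obtain ⟨z, hz, w, hw, hzw⟩ := not_noE h'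
  obtain ⟨n1, e1⟩ := hxy
  obtain ⟨n2, e2⟩ := hzw
  have := hs p q
  simp only [Finset.mem_insert, Finset.mem_singleton] at hx hy hz hw
  rcases hx with rfl | rfl <;> rcases hy with rfl | rfl <;> rcases hz with rfl | rfl <;>
    rcases hw with rfl | rfl <;> simp_all

theorem noE_of_tri {c : V → V → C} {i : C} {S A B : Finset V} (hA : A ⊆ S)
    (hB : B ⊆ S) (hJ : J c i A B) (hT : NoT c S i) (hne : B.Nonempty) (hs : Sym c) :
    NoE c A i := by
  obtain ⟨b, hb⟩ := hne
  intro x hx y hy hxy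
  have := hs x y
  exact hT x (hA hx) y (hA hy) b (hB hb) hxy (hJ x hx b hb) (hJ y hy b hb)

theorem bipT [DecidableEq V] [DecidableEq C] {c : V → V → C} (hs : Sym c) {S : Finset V}
    (hB : Bd c S.card) {X Y : Finset V} (hX : X ⊆ S) (hY : Y ⊆ S) (hXn : X.Nonempty)
    (hYn : Y.Nonempty) (hc : S.card = X.card + Y.card) {T B : Finset C} {r : C} (hrT : r ∉ T)
    (hd : Disjoint T B) (hP : P c (insert r T) B S) (hJ : J c r X Y) :
    (S.card : ℚ) ≤ f (T.card + 1) * g B.card := by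
  have hT := hP.2.1 r (Finset.mem_insert_self _ _)
  have hx := hXn.card_pos
  have hy := hYn.card_pos
  have h1 := hB X (by omega) T B hd ((hP.mono hX).dropT (noE_of_tri hX hY hJ hT hYn hs))
  have h2 := hB Y (by omega) T B hd
    ((hP.mono hY).dropT (noE_of_tri hY hX (hJ.symm hs) hT hXn hs))
  have h3 := num T.card B.card
  rw [hc]
  push_cast
  linarith [h3.2.1]

theorem bipB_one [DecidableEq V] [DecidableEq C] {c : V → V → C} (hs : Sym c) {S : Finset V}
    (hB : Bd c S.card) {X Y : Finset V} (hX : X ⊆ S) (hY : Y ⊆ S)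
    (hY1 : Y.card = 1) (hc : S.card = X.card + Y.card) {T B : Finset C} {r : C} (hrT : r ∉ T)
    (hrB : r ∉ B) (hd : Disjoint T B) (hP : P c T (insert r B) S) (hJ : J c r X Y) :
    (S.card : ℚ) ≤ f T.card * g (B.card + 1) := by
  have hH := hP.2.2 r (Finset.mem_insert_self _ _)
  have h1 := pawB hs hB (A := X) (by omega) hrT hrB hd (hP.mono hX)
    (joined_paw hs hX hY hJ hH (Finset.card_pos.1 (by omega)))
  rw [hc, hY1]
  generalize T.card = a at *
  generalize B.card = b at *
  obtain ⟨n1, n2, n3, n4, n5⟩ := num a b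
  push_cast
  by_cases hU : 11 / 4 ≤ f a * g b
  · linarith
  · push Not at hU
    have hf := f_bd a
    have hg := g_bd b
    match b, hg with
    | 0, _ =>
      match a, hf with
      | 0, _ =>
        norm_num [f, g] at *
        have : (X.card : ℚ) ≤ 3 := by exact_mod_cast h1
        linarith
      | 1, _ =>
        norm_num [f, g] at *
        have : X.card ≤ 7 := by
          by_contra hcon
          have : (8 : ℚ) ≤ X.card := by exact_mod_cast (by omega : 8 ≤ X.card)
          linarith
        have : (X.card : ℚ) ≤ 7 := by exact_mod_cast this
        linarith
      | a + 2, _ =>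
        have := (f_bd a).1
        rw [f_two] at hU
        norm_num [g] at hU
        linarith
    | b + 1, hg =>
      have := g_bd b
      nlinarith

theorem bipB [DecidableEq V] [DecidableEq C] {c : V → V → C} (hs : Sym c) {S : Finset V}
    (hB : Bd c S.card) {X Y : Finset V} (hX : X ⊆ S) (hY : Y ⊆ S) (hXn : X.Nonempty)
    (hYn : Y.Nonempty) (hc : S.card = X.card + Y.card) {T B : Finset C} {r : C} (hrT : r ∉ T)
    (hrB : r ∉ B) (hd : Disjoint T B) (hP : P c T (insert r B) S) (hJ : J c r X Y) :
    (S.card : ℚ) ≤ f T.card * g (B.card + 1) := by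
  have hH := hP.2.2 r (Finset.mem_insert_self _ _)
  have hx := hXn.card_pos
  have hy := hYn.card_pos
  have hJ' := hJ.symm hs
  obtain ⟨n1, n2, n3, n4, n5⟩ := num T.card B.card
  by_cases hY1 : Y.card = 1
  · exact bipB_one hs hB hX hY hY1 hc hrT hrB hd hP hJ
  by_cases hX1 : X.card = 1
  · exact bipB_one hs hB hY hX hX1 (by omega) hrT hrB hd hP hJ'
  by_cases h4 : S.card ≤ 4
  · have : (S.card : ℚ) ≤ 4 := by exact_mod_cast h4
    linarith
  have hd' : Disjoint (insert r T) B := by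
    rw [Finset.disjoint_insert_left]; exact ⟨hrB, hd⟩
  have hXT := hB X (by omega) _ _ hd' ((hP.mono hX).toT
    (joined_noT hs hX hY hJ hH (by omega)))
  have hYT := hB Y (by omega) _ _ hd' ((hP.mono hY).toT
    (joined_noT hs hY hX hJ' hH (by omega)))
  rw [Finset.card_insert_of_notMem hrT] at hXT hYT
  have hor : NoE c X r ∨ NoE c Y r := by
    by_contra hcon
    push Not at hcon
    by_cases h3 : 3 ≤ X.card
    · exact hcon.2 (joined_edges hs hX hY hJ hH h3 hcon.1)
    · exact hcon.1 (joined_edges hs hY hX hJ' hH (by omega) hcon.2)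
  have hc' : (S.card : ℚ) = X.card + Y.card := by exact_mod_cast hc
  rcases hor with h | h
  · have := hB X (by omega) _ _ hd ((hP.mono hX).dropB h)
    linarith
  · have := hB Y (by omega) _ _ hd ((hP.mono hY).dropB h)
    linarith

/-- a set `A` joined in red to `X` and in blue to `Y`, where `S = A ∪ X ∪ Y`. -/
structure Dec (c : V → V → C) (S : Finset V) (r b : C) (A X Y : Finset V) : Prop where
  hA : A ⊆ S
  hX : X ⊆ S
  hY : Y ⊆ S
  hc : S.card = A.card + X.card + Y.card
  hAn : A.Nonempty
  hXn : X.Nonempty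
  hYn : Y.Nonempty
  hJX : J c r A X
  hJY : J c b A Y

theorem Dec.swap {c : V → V → C} {S : Finset V} {r b : C} {A X Y : Finset V}
    (h : Dec c S r b A X Y) : Dec c S b r A Y X :=
  ⟨h.hA, h.hY, h.hX, by rw [h.hc]; ring, h.hAn, h.hYn, h.hXn, h.hJY, h.hJX⟩

theorem modTB [DecidableEq V] [DecidableEq C] {c : V → V → C} (hs : Sym c) {S : Finset V}
    (hB : Bd c S.card) {r b : C} {A X Y : Finset V} (hD : Dec c S r b A X Y)
    {T B : Finset C} (hrb : r ≠ b) (hrT : r ∉ T) (hrB : r ∉ B) (hbT : b ∉ T)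
    (hbB : b ∉ B) (hd : Disjoint T B) (hP : P c (insert r T) (insert b B) S)
    (hE : ¬ NoE c A b) : (S.card : ℚ) ≤ f (T.card + 1) * g (B.card + 1) := by
  have hA0 := hD.hAn.card_pos
  have hX0 := hD.hXn.card_pos
  have hY0 := hD.hYn.card_pos
  have hc := hD.hc
  have hc' : (S.card : ℚ) = A.card + X.card + Y.card := by exact_mod_cast hc
  have hT := hP.2.1 r (Finset.mem_insert_self _ _)
  have hH := hP.2.2 b (Finset.mem_insert_self _ _)
  have hAr : NoE c A r := noE_of_tri hD.hA hD.hX hD.hJX hT hD.hXn hs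
  have hXr : NoE c X r := noE_of_tri hD.hX hD.hA (hD.hJX.symm hs) hT hD.hAn hs
  have hA2 := two_of_not_noE hE
  obtain ⟨n1, n2, n3, n4, n5⟩ := num T.card B.card
  obtain ⟨m1, m2, m3, m4, m5⟩ := num (T.card + 1) B.card
  obtain ⟨l1, l2, l3, l4, l5⟩ := num T.card (B.card + 1)
  -- bound for `X`
  have bX := hB X (by omega) T (insert b B)
    (by rw [Finset.disjoint_insert_right]; exact ⟨hbT, hd⟩) ((hP.mono hD.hX).dropT hXr)
  rw [Finset.card_insert_of_notMem hbB] at bX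
  have hPA : P c T (insert b B) A := (hP.mono hD.hA).dropT hAr
  by_cases hAT : NoT c A b
  · have bA := hB A (by omega) (insert b T) B
      (by rw [Finset.disjoint_insert_left]; exact ⟨hbB, hd⟩) (hPA.toT hAT)
    rw [Finset.card_insert_of_notMem hbT] at bA
    by_cases hYE : NoE c Y b
    · have bY := hB Y (by omega) (insert r T) B
        (by rw [Finset.disjoint_insert_left]; exact ⟨hrB, hd⟩) ((hP.mono hD.hY).dropB hYE)
      rw [Finset.card_insert_of_notMem hrT] at bY
      linarith
    · have h3 : A.card ≤ 2 := by
        by_contra h3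
        exact hYE (joined_edges hs hD.hA hD.hY hD.hJY hH (by omega) hE)
      have h4 : Y.card ≤ 2 := by
        by_contra h3
        exact hE (joined_edges hs hD.hY hD.hA (hD.hJY.symm hs) hH (by omega) hYE)
      have h3' : (A.card : ℚ) ≤ 2 := by exact_mod_cast h3
      have h4' : (Y.card : ℚ) ≤ 2 := by exact_mod_cast h4
      linarith
  · have hY1 : Y.card ≤ 1 := by
      by_contra h3
      exact hAT (joined_noT hs hD.hA hD.hY hD.hJY hH (by omega))
    have hY1' : (Y.card : ℚ) ≤ 1 := by exact_mod_cast hY1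
    have bA := pawB hs hB (A := A) (by omega) hbT hbB hd hPA
      (joined_paw hs hD.hA hD.hY hD.hJY hH hD.hYn)
    linarith

theorem modBB [DecidableEq V] [DecidableEq C] {c : V → V → C} (hs : Sym c) {S : Finset V}
    (hB : Bd c S.card) {r b : C} {A X Y : Finset V} (hD : Dec c S r b A X Y)
    {T B : Finset C} (hrb : r ≠ b) (hrT : r ∉ T) (hrB : r ∉ B) (hbT : b ∉ T)
    (hbB : b ∉ B) (hd : Disjoint T B) (hP : P c T (insert r (insert b B)) S)
    (hE : ¬ NoE c A r) : (S.card : ℚ) ≤ f T.card * g (B.card + 2) := by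
  have hA0 := hD.hAn.card_pos
  have hX0 := hD.hXn.card_pos
  have hY0 := hD.hYn.card_pos
  have hc := hD.hc
  have hc' : (S.card : ℚ) = A.card + X.card + Y.card := by exact_mod_cast hc
  have hHr := hP.2.2 r (by simp)
  have hHb := hP.2.2 b (by simp)
  have hP' : P c T (insert b (insert r B)) S := by rw [Finset.insert_comm]; exact hP
  have hA2 := two_of_not_noE hE
  obtain ⟨n1, n2, n3, n4, n5⟩ := num T.card B.card
  obtain ⟨l1, l2, l3, l4, l5⟩ := num T.card (B.card + 1)
  have hg2 : f T.card * g (B.card + 2) = 17 * (f T.card * g B.card) := by rw [g_two]; ring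
  have hf2 : f (T.card + 1 + 1) * g B.card = 5 * (f T.card * g B.card) := by
    rw [show T.card + 1 + 1 = T.card + 2 by ring, f_two]; ring
  have hrB' : r ∉ insert b B := by simp [hrb, hrB]
  have hbB' : b ∉ insert r B := by simp [hrb.symm, hbB]
  have hrT' : r ∉ insert b T := by simp [hrb, hrT]
  have hbT' : b ∉ insert r T := by simp [hrb.symm, hbT]
  have d1 : Disjoint T (insert b B) := by
    rw [Finset.disjoint_insert_right]; exact ⟨hbT, hd⟩
  have d2 : Disjoint T (insert r B) := by
    rw [Finset.disjoint_insert_right]; exact ⟨hrT, hd⟩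
  have d3 : Disjoint (insert r T) B := by
    rw [Finset.disjoint_insert_left]; exact ⟨hrB, hd⟩
  have d4 : Disjoint (insert b T) B := by
    rw [Finset.disjoint_insert_left]; exact ⟨hbB, hd⟩
  have d5 : Disjoint (insert b T) (insert r B) := by
    rw [Finset.disjoint_insert_left]; exact ⟨hbB', d2⟩
  have d6 : Disjoint (insert r T) (insert b B) := by
    rw [Finset.disjoint_insert_left]; exact ⟨hrB', d1⟩
  have d7 : Disjoint (insert b (insert r T)) B := by
    rw [Finset.disjoint_insert_left]; exact ⟨hbB, d3⟩
  have crB := Finset.card_insert_of_notMem hrB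
  have cbB := Finset.card_insert_of_notMem hbB
  have crT := Finset.card_insert_of_notMem hrT
  have cbT := Finset.card_insert_of_notMem hbT
  have crbT := Finset.card_insert_of_notMem hbT'
  rw [crT] at crbT
  have pawR : NoPaw c A r := joined_paw hs hD.hA hD.hX hD.hJX hHr hD.hXn
  have pawBl : NoPaw c A b := joined_paw hs hD.hA hD.hY hD.hJY hHb hD.hYn
  have X1 : ¬ NoT c A r → (X.card : ℚ) ≤ 1 := by
    intro h
    have : X.card ≤ 1 := by
      by_contra h3
      exact h (joined_noT hs hD.hA hD.hX hD.hJX hHr (by omega))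
    exact_mod_cast this
  have Y1 : ¬ NoT c A b → (Y.card : ℚ) ≤ 1 := by
    intro h
    have : Y.card ≤ 1 := by
      by_contra h3
      exact h (joined_noT hs hD.hA hD.hY hD.hJY hHb (by omega))
    exact_mod_cast this
  have XnoE : NoE c X r → (X.card : ℚ) ≤ f T.card * g (B.card + 1) := by
    intro h
    have := hB X (by omega) T (insert b B) d1 ((hP.mono hD.hX).dropB h)
    rwa [cbB] at this
  by_cases hEb : NoE c A b
  · -- no blue edges in `A`
    have bY := hB Y (by omega) (insert b T) (insert r B) d5 ((hP'.mono hD.hY).toT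
      (joined_noT hs hD.hY hD.hA (hD.hJY.symm hs) hHb hA2))
    rw [cbT, crB] at bY
    have hPA : P c T (insert r B) A := (hP'.mono hD.hA).dropB hEb
    by_cases hAT : NoT c A r
    · have bA := hB A (by omega) (insert r T) B d3 (hPA.toT hAT)
      rw [crT] at bA
      by_cases hXE : NoE c X r
      · have := XnoE hXE
        linarith
      · have h3 : A.card ≤ 2 := by
          by_contra h3
          exact hXE (joined_edges hs hD.hA hD.hX hD.hJX hHr (by omega) hE)
        have h4 : X.card ≤ 2 := by
          by_contra h3
          exact hE (joined_edges hs hD.hX hD.hA (hD.hJX.symm hs) hHr (by omega) hXE)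
        have h3' : (A.card : ℚ) ≤ 2 := by exact_mod_cast h3
        have h4' : (X.card : ℚ) ≤ 2 := by exact_mod_cast h4
        linarith
    · have bA := pawB hs hB (A := A) (by omega) hrT hrB hd hPA pawR
      have := X1 hAT
      linarith
  · -- both colours occur in `A`
    have hA3 := three_of_not_noE hrb hs hE hEb
    have bX := XnoE (joined_edges hs hD.hA hD.hX hD.hJX hHr hA3 hE)
    have bY := hB Y (by omega) T (insert r B) d2 ((hP'.mono hD.hY).dropB
      (joined_edges hs hD.hA hD.hY hD.hJY hHb hA3 hEb))
    rw [crB] at bY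
    have hPA := hP.mono hD.hA
    have hPA' := hP'.mono hD.hA
    by_cases hTr : NoT c A r
    · have q1 : P c (insert r T) (insert b B) A := hPA.toT hTr
      by_cases hTb : NoT c A b
      · have bA := hB A (by omega) _ _ d7 (q1.toT hTb)
        rw [crbT] at bA
        linarith
      · have bA := pawB hs hB (A := A) (by omega) hbT' hbB d3 q1 pawBl
        rw [crT] at bA
        have := Y1 hTb
        linarith
    · have hX1 := X1 hTr
      by_cases hTb : NoT c A b
      · have bA := pawB hs hB (A := A) (by omega) hrT' hrB d4 (hPA'.toT hTb) pawR
        rw [cbT] at bA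
        linarith
      · have hY1 := Y1 hTb
        -- remove triangles of both colours
        obtain ⟨A', hA', hT', hc1⟩ := paw_sub hs _ A le_rfl pawR
        have hlt : A'.card ≤ A.card := Finset.card_le_card hA'
        have bA := pawB hs hB (A := A') (by omega) hbT' hbB d3 ((hPA.mono hA').toT hT')
          (pawBl.mono hA')
        rw [crT] at bA
        have h2 : (2 * A.card : ℚ) ≤ 3 * A'.card := by exact_mod_cast hc1
        linarith

theorem fibre_sum [DecidableEq V] {S : Finset V} {p : V → V} {U : ℚ}
    (h : ∀ u ∈ S, ((S.filter (fun x => p x = p u)).card : ℚ) ≤ U) :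
    (S.card : ℚ) ≤ (S.image p).card * U := by
  rw [Finset.card_eq_sum_card_image p S]
  push_cast
  rw [← nsmul_eq_mul]
  refine Finset.sum_le_card_nsmul _ _ _ ?_
  intro x hx
  obtain ⟨u, hu, rfl⟩ := Finset.mem_image.1 hx
  exact h u hu

/-- data coming from the Gallai partition when both colours are met by every part -/
structure Part [DecidableEq V] (c : V → V → C) (S : Finset V) (p : V → V) (r b : C) : Prop where
  hrb : r ≠ b
  hsub : S.image p ⊆ S
  h2 : TwoCol c (S.image p) r b
  hD : ∀ u ∈ S, ∃ X Y, Dec c S r b (S.filter (fun x => p x = p u)) X Y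

theorem Part.swap [DecidableEq V] {c : V → V → C} {S : Finset V} {p : V → V} {r b : C}
    (h : Part c S p r b) : Part c S p b r :=
  ⟨h.hrb.symm, h.hsub, h.h2.swap, fun u hu => by
    obtain ⟨X, Y, hD⟩ := h.hD u hu
    exact ⟨Y, X, hD.swap⟩⟩

theorem Dec.lt {c : V → V → C} {S : Finset V} {r b : C} {A X Y : Finset V}
    (h : Dec c S r b A X Y) : A.card < S.card := by
  have := h.hc
  have := h.hXn.card_pos
  omega

theorem coreTT [DecidableEq V] [DecidableEq C] {c : V → V → C} (hs : Sym c) {S : Finset V}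
    (hB : Bd c S.card) {r b : C} {p : V → V} (hD : Part c S p r b)
    {T B : Finset C} (hrT : r ∉ T) (hbT : b ∉ T)
    (hd : Disjoint T B) (hP : P c (insert r (insert b T)) B S) :
    (S.card : ℚ) ≤ f (T.card + 2) * g B.card := by
  have hTr := hP.2.1 r (by simp)
  have hTb := hP.2.1 b (by simp)
  have h5 : (S.image p).card ≤ 5 := r33 hD.h2 (hTr.mono hD.hsub) (hTb.mono hD.hsub)
  have h5' : ((S.image p).card : ℚ) ≤ 5 := by exact_mod_cast h5
  obtain ⟨n1, -⟩ := num T.card B.card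
  have := fibre_sum (S := S) (p := p) (U := f T.card * g B.card) (by
    intro u hu
    obtain ⟨X, Y, hD'⟩ := hD.hD u hu
    refine hB _ hD'.lt T B hd (((hP.mono hD'.hA).dropT ?_).dropT ?_)
    · exact noE_of_tri hD'.hA hD'.hX hD'.hJX hTr hD'.hXn hs
    · exact noE_of_tri hD'.hA hD'.hY hD'.hJY hTb hD'.hYn hs)
  rw [f_two]
  nlinarith

theorem coreTB [DecidableEq V] [DecidableEq C] {c : V → V → C} (hs : Sym c) {S : Finset V}
    (hB : Bd c S.card) {r b : C} {p : V → V} (hD : Part c S p r b)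
    {T B : Finset C} (hrT : r ∉ T) (hrB : r ∉ B) (hbT : b ∉ T) (hbB : b ∉ B)
    (hd : Disjoint T B) (hP : P c (insert r T) (insert b B) S) :
    (S.card : ℚ) ≤ f (T.card + 1) * g (B.card + 1) := by
  have hTr := hP.2.1 r (by simp)
  have hHb := hP.2.2 b (by simp)
  by_cases hall : ∀ u ∈ S, NoE c (S.filter (fun x => p x = p u)) b
  · have h5 : (S.image p).card ≤ 8 := r3H hs hD.h2 (hTr.mono hD.hsub) (hHb.mono hD.hsub)
    have h5' : ((S.image p).card : ℚ) ≤ 8 := by exact_mod_cast h5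
    obtain ⟨n1, n2, n3, n4, n5⟩ := num T.card B.card
    obtain ⟨l1, l2, l3, l4, l5⟩ := num T.card (B.card + 1)
    have := fibre_sum (S := S) (p := p) (U := f T.card * g B.card) (by
      intro u hu
      obtain ⟨X, Y, hD'⟩ := hD.hD u hu
      refine hB _ hD'.lt T B hd (((hP.mono hD'.hA).dropT ?_).dropB (hall u hu))
      exact noE_of_tri hD'.hA hD'.hX hD'.hJX hTr hD'.hXn hs)
    nlinarith
  · push Not at hall
    obtain ⟨u, hu, hE⟩ := hall
    obtain ⟨X, Y, hD'⟩ := hD.hD u hu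
    exact modTB hs hB hD' hD.hrb hrT hrB hbT hbB hd hP hE

theorem coreBB [DecidableEq V] [DecidableEq C] {c : V → V → C} (hs : Sym c) {S : Finset V}
    (hB : Bd c S.card) {r b : C} {p : V → V} (hD : Part c S p r b)
    {T B : Finset C} (hrT : r ∉ T) (hrB : r ∉ B) (hbT : b ∉ T) (hbB : b ∉ B)
    (hd : Disjoint T B) (hP : P c T (insert r (insert b B)) S) :
    (S.card : ℚ) ≤ f T.card * g (B.card + 2) := by
  have hHr := hP.2.2 r (by simp)
  have hHb := hP.2.2 b (by simp)
  by_cases hr : ∀ u ∈ S, NoE c (S.filter (fun x => p x = p u)) r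
  · by_cases hb : ∀ u ∈ S, NoE c (S.filter (fun x => p x = p u)) b
    · have h5 : (S.image p).card ≤ 17 := rHH hs hD.h2 (hHr.mono hD.hsub) (hHb.mono hD.hsub)
      have h5' : ((S.image p).card : ℚ) ≤ 17 := by exact_mod_cast h5
      obtain ⟨n1, -⟩ := num T.card B.card
      have := fibre_sum (S := S) (p := p) (U := f T.card * g B.card) (by
        intro u hu
        obtain ⟨X, Y, hD'⟩ := hD.hD u hu
        exact hB _ hD'.lt T B hd (((hP.mono hD'.hA).dropB (hr u hu)).dropB (hb u hu)))
      rw [g_two]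
      nlinarith
    · push Not at hb
      obtain ⟨u, hu, hE⟩ := hb
      obtain ⟨X, Y, hD'⟩ := hD.hD u hu
      exact modBB hs hB hD'.swap hD.hrb.symm hbT hbB hrT hrB hd
        (by rw [Finset.insert_comm]; exact hP) hE
  · push Not at hr
    obtain ⟨u, hu, hE⟩ := hr
    obtain ⟨X, Y, hD'⟩ := hD.hD u hu
    exact modBB hs hB hD' hD.hrb hrT hrB hbT hbB hd hP hE

theorem P.mem {c : V → V → C} {S : Finset V} {T B : Finset C} (hP : P c T B S) {r : C}
    {x y : V} (hx : x ∈ S) (hy : y ∈ S) (h : E c r x y) : r ∈ T ∨ r ∈ B := by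
  by_contra hcon
  push Not at hcon
  exact hP.1 r hcon.1 hcon.2 x hx y hy h

theorem ex_insert [DecidableEq C] {T : Finset C} {r : C} (h : r ∈ T) :
    ∃ T', r ∉ T' ∧ T = insert r T' :=
  ⟨T.erase r, Finset.notMem_erase _ _, (Finset.insert_erase h).symm⟩

theorem bip [DecidableEq V] [DecidableEq C] {c : V → V → C} (hs : Sym c) {S : Finset V}
    (hB : Bd c S.card) {X Y : Finset V} (hX : X ⊆ S) (hY : Y ⊆ S) (hXn : X.Nonempty)
    (hYn : Y.Nonempty) (hc : S.card = X.card + Y.card) {T B : Finset C} {r : C}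
    (hd : Disjoint T B) (hP : P c T B S) (hJ : J c r X Y) :
    (S.card : ℚ) ≤ f T.card * g B.card := by
  obtain ⟨x, hx⟩ := hXn
  obtain ⟨y, hy⟩ := hYn
  rcases hP.mem (hX hx) (hY hy) (hJ x hx y hy) with h | h
  · obtain ⟨T', hr, rfl⟩ := ex_insert h
    rw [Finset.disjoint_insert_left] at hd
    rw [Finset.card_insert_of_notMem hr]
    exact bipT hs hB hX hY ⟨x, hx⟩ ⟨y, hy⟩ hc hr hd.2 hP hJ
  · obtain ⟨B', hr, rfl⟩ := ex_insert h
    rw [Finset.disjoint_insert_right] at hd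
    rw [Finset.card_insert_of_notMem hr]
    exact bipB hs hB hX hY ⟨x, hx⟩ ⟨y, hy⟩ hc hd.1 hr hd.2 hP hJ

theorem core [DecidableEq V] [DecidableEq C] {c : V → V → C} (hs : Sym c) {S : Finset V}
    (hB : Bd c S.card) {r b : C} {p : V → V} (hD : Part c S p r b) (hSn : S.Nonempty)
    {T B : Finset C} (hd : Disjoint T B) (hP : P c T B S) :
    (S.card : ℚ) ≤ f T.card * g B.card := by
  obtain ⟨u, hu⟩ := hSn
  obtain ⟨X, Y, hD'⟩ := hD.hD u hu
  obtain ⟨a, ha⟩ := hD'.hAn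
  obtain ⟨x, hx⟩ := hD'.hXn
  obtain ⟨y, hy⟩ := hD'.hYn
  have hrb := hD.hrb
  rcases hP.mem (hD'.hA ha) (hD'.hX hx) (hD'.hJX a ha x hx) with hr | hr <;>
  rcases hP.mem (hD'.hA ha) (hD'.hY hy) (hD'.hJY a ha y hy) with hb | hb
  · obtain ⟨T1, hr1, rfl⟩ := ex_insert hr
    obtain ⟨T2, hb2, rfl⟩ := ex_insert (Finset.mem_of_mem_insert_of_ne hb hrb.symm)
    simp only [Finset.disjoint_insert_left] at hd
    rw [Finset.card_insert_of_notMem hr1, Finset.card_insert_of_notMem hb2]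
    simp only [Finset.mem_insert, not_or] at hr1
    exact coreTT hs hB hD hr1.2 hb2 hd.2.2 hP
  · obtain ⟨T1, hr1, rfl⟩ := ex_insert hr
    obtain ⟨B1, hb1, rfl⟩ := ex_insert hb
    simp only [Finset.disjoint_insert_left, Finset.disjoint_insert_right, Finset.mem_insert,
      not_or] at hd
    rw [Finset.card_insert_of_notMem hr1, Finset.card_insert_of_notMem hb1]
    exact coreTB hs hB hD hr1 hd.2.1 hd.1.2 hb1 hd.2.2 hP
  · obtain ⟨T1, hr1, rfl⟩ := ex_insert hb
    obtain ⟨B1, hb1, rfl⟩ := ex_insert hr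
    simp only [Finset.disjoint_insert_left, Finset.disjoint_insert_right, Finset.mem_insert,
      not_or] at hd
    rw [Finset.card_insert_of_notMem hr1, Finset.card_insert_of_notMem hb1]
    exact coreTB hs hB hD.swap hr1 hd.2.1 hd.1.2 hb1 hd.2.2 hP
  · obtain ⟨T1, hr1, rfl⟩ := ex_insert hr
    obtain ⟨T2, hb2, rfl⟩ := ex_insert (Finset.mem_of_mem_insert_of_ne hb hrb.symm)
    simp only [Finset.disjoint_insert_right] at hd
    rw [Finset.card_insert_of_notMem hr1, Finset.card_insert_of_notMem hb2]
    simp only [Finset.mem_insert, not_or] at hr1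
    exact coreBB hs hB hD hd.1 hr1.2 hd.2.1 hb2 hd.2.2 hP

theorem upper_step [DecidableEq V] [DecidableEq C] {c : V → V → C} (hs : Sym c) (hG : Gal c)
    {S : Finset V} (hB : Bd c S.card) {T B : Finset C} (hd : Disjoint T B) (hP : P c T B S) :
    (S.card : ℚ) ≤ f T.card * g B.card := by
  by_cases h2 : 2 ≤ S.card
  swap
  · have h1 : (S.card : ℚ) ≤ 1 := by exact_mod_cast (by omega : S.card ≤ 1)
    linarith [(num T.card B.card).1]
  obtain ⟨r, b, p, hp, hpp, hc, u0, hu0, v0, hv0, huv⟩ := gallai hs hG _ S le_rfl h2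
  -- the three pieces determined by a part
  let A : V → Finset V := fun u => S.filter (fun x => p x = p u)
  let X : V → Finset V := fun u => S.filter (fun x => p x ≠ p u ∧ c u x = r)
  let Y : V → Finset V := fun u => S.filter (fun x => p x ≠ p u ∧ c u x ≠ r)
  have hAn : ∀ u ∈ S, u ∈ A u := fun u hu => by simp [A, hu]
  have hcard : ∀ u, S.card = (A u).card + (X u).card + (Y u).card := by
    intro u
    rw [← Finset.card_filter_add_card_filter_not (s := S) (fun x => p x = p u), add_assoc]
    congr 1
    rw [← Finset.card_filter_add_card_filter_not
      (s := S.filter (fun x => ¬ p x = p u)) (fun x => c u x = r),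
      Finset.filter_filter, Finset.filter_filter]
  have hcol : ∀ u ∈ S, ∀ a ∈ A u, ∀ x ∈ S, p x ≠ p u → a ≠ x ∧ c a x = c u x := by
    intro u hu a ha x hx hne
    simp only [A, Finset.mem_filter] at ha
    have h1 := hc a ha.1 x hx (by rw [ha.2]; exact hne.symm)
    have h2 := hc u hu x hx hne.symm
    refine ⟨?_, by rw [h1.1, h2.1, ha.2]⟩
    rintro rfl
    exact hne ha.2
  have hJX : ∀ u ∈ S, J c r (A u) (X u) := by
    intro u hu a ha x hx
    simp only [X, Finset.mem_filter] at hx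
    have := hcol u hu a ha x hx.1 hx.2.1
    exact ⟨this.1, by rw [this.2]; exact hx.2.2⟩
  have hJY : ∀ u ∈ S, J c b (A u) (Y u) := by
    intro u hu a ha x hx
    simp only [Y, Finset.mem_filter] at hx
    have := hcol u hu a ha x hx.1 hx.2.1
    exact ⟨this.1, by rw [this.2]; exact (hc u hu x hx.1 hx.2.1.symm).2.resolve_left hx.2.2⟩
  have hAS : ∀ u, A u ⊆ S := fun u => Finset.filter_subset _ _
  have hXS : ∀ u, X u ⊆ S := fun u => Finset.filter_subset _ _
  have hYS : ∀ u, Y u ⊆ S := fun u => Finset.filter_subset _ _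
  have hsome : ∀ u ∈ S, (X u).Nonempty ∨ (Y u).Nonempty := by
    intro u hu
    obtain ⟨w, hw, hwu⟩ : ∃ w ∈ S, p w ≠ p u := by
      by_cases h : p u0 = p u
      · exact ⟨v0, hv0, fun h' => huv (h.trans h'.symm)⟩
      · exact ⟨u0, hu0, h⟩
    by_cases hr : c u w = r
    · exact Or.inl ⟨w, by simp [X, hw, hwu, hr]⟩
    · exact Or.inr ⟨w, by simp [Y, hw, hwu, hr]⟩
  by_cases hX : ∀ u ∈ S, (X u).Nonempty
  · by_cases hY : ∀ u ∈ S, (Y u).Nonempty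
    · refine core hs hB (r := r) (b := b) (p := p) ⟨?_, ?_, ?_, ?_⟩ ⟨u0, hu0⟩ hd hP
      · obtain ⟨y, hy⟩ := hY u0 hu0
        have h1 := hJY u0 hu0 u0 (hAn u0 hu0) y hy
        simp only [Y, Finset.mem_filter] at hy
        intro h
        exact hy.2.2 (by rw [h1.2, h])
      · intro x hx
        obtain ⟨y, hy, rfl⟩ := Finset.mem_image.1 hx
        exact hp y hy
      · intro x hx y hy hxy
        obtain ⟨x', hx', rfl⟩ := Finset.mem_image.1 hx
        obtain ⟨y', hy', rfl⟩ := Finset.mem_image.1 hy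
        have := (hc _ (hp x' hx') _ (hp y' hy') (by rwa [hpp x' hx', hpp y' hy'])).2
        exact this.imp (fun h => ⟨hxy, h⟩) (fun h => ⟨hxy, h⟩)
      · intro u hu
        exact ⟨X u, Y u, hAS u, hXS u, hYS u, hcard u, ⟨u, hAn u hu⟩, hX u hu, hY u hu,
          hJX u hu, hJY u hu⟩
    · push Not at hY
      obtain ⟨u, hu, hY⟩ := hY
      have := hcard u
      rw [hY, Finset.card_empty, add_zero] at this
      exact bip hs hB (hAS u) (hXS u) ⟨u, hAn u hu⟩ (hX u hu) this hd hP (hJX u hu)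
  · push Not at hX
    obtain ⟨u, hu, hX⟩ := hX
    have := hcard u
    rw [hX, Finset.card_empty, add_zero] at this
    have hYn := (hsome u hu).resolve_left (by rw [hX]; simp)
    exact bip hs hB (hAS u) (hYS u) ⟨u, hAn u hu⟩ hYn this hd hP (hJY u hu)

theorem upper_all [DecidableEq V] [DecidableEq C] {c : V → V → C} (hs : Sym c) (hG : Gal c)
    (n : ℕ) : Bd c n := by
  induction n with
  | zero => intro S hS; omega
  | succ n ih =>
    intro S hS T B hd hP
    refine upper_step hs hG ?_ hd hP
    intro S' hS'
    exact ih S' (by omega)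

/-! ### The lower bound -/

def Good (r d N : ℕ) : Prop :=
  ∃ (W : Type) (_ : Fintype W) (c : W → W → ℕ), Fintype.card W = N ∧ Sym c ∧ Gal c ∧
    (∀ x y, x ≠ y → c x y < d) ∧
    (∀ i, r ≤ i → ∀ x y z, E c i x y → E c i x z → E c i y z → False) ∧
    (∀ i, ∀ x y z w, E c i x y → E c i x z → E c i x w → E c i y z → E c i y w →
      E c i z w → False)

theorem blow {r d N : ℕ} (hN : Good r d N) {W0 : Type} [Fintype W0] {e : W0 → W0 → ℕ} {d' : ℕ}
    (hd : d ≤ d') (hs0 : Sym e) (hG0 : Gal e) (hlo : ∀ x y, x ≠ y → d ≤ e x y ∧ e x y < d')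
    (ht : ∀ i, r ≤ i → ∀ x y z, E e i x y → E e i x z → E e i y z → False)
    (hk : ∀ i, ∀ x y z w, E e i x y → E e i x z → E e i x w → E e i y z → E e i y w →
      E e i z w → False) : Good r d' (Fintype.card W0 * N) := by
  classical
  obtain ⟨W, hW, c, hc, hs, hG, hlt, ht', hk'⟩ := hN
  let c' : W0 × W → W0 × W → ℕ := fun x y => if x.1 = y.1 then c x.2 y.2 else e x.1 y.1
  have small : ∀ i < d, ∀ x y, E c' i x y → x.1 = y.1 ∧ E c i x.2 y.2 := by
    rintro i hi ⟨x, x'⟩ ⟨y, y'⟩ ⟨h1, h2⟩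
    simp only [c'] at h2 ⊢
    by_cases h : x = y
    · rw [if_pos h] at h2
      exact ⟨h, fun h' => h1 (by rw [h, show x' = y' from h']), h2⟩
    · rw [if_neg h] at h2
      have := hlo x y h
      omega
  have large : ∀ i, ¬ i < d → ∀ x y, E c' i x y → E e i x.1 y.1 := by
    rintro i hi ⟨x, x'⟩ ⟨y, y'⟩ ⟨h1, h2⟩
    simp only [c'] at h2 ⊢
    by_cases h : x = y
    · rw [if_pos h] at h2
      have := hlt x' y' (fun h' => h1 (by rw [h, h']))
      omega
    · rw [if_neg h] at h2
      exact ⟨h, h2⟩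
  refine ⟨W0 × W, inferInstance, c', by rw [Fintype.card_prod, hc], ?_, ?_, ?_, ?_, ?_⟩
  · intro x y
    simp only [c', hs x.2 y.2, hs0 x.1 y.1, eq_comm (a := x.1)]
  · rintro ⟨x, x'⟩ ⟨y, y'⟩ ⟨z, z'⟩ h1 h2 h3
    simp only [c']
    by_cases hxy : x = y
    · subst hxy
      by_cases hxz : x = z
      · subst hxz
        simp only [if_true]
        exact hG x' y' z' (fun h => h1 (by rw [h])) (fun h => h2 (by rw [h]))
          (fun h => h3 (by rw [h]))
      · simp [hxz]
    · by_cases hxz : x = z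
      · subst hxz
        simp [hxy, Ne.symm hxy, hs0 x y]
      · by_cases hyz : y = z
        · subst hyz
          simp [hxy]
        · simp only [hxy, hxz, hyz, if_false]
          exact hG0 x y z hxy hxz hyz
  · rintro ⟨x, x'⟩ ⟨y, y'⟩ h
    simp only [c']
    by_cases hxy : x = y
    · subst hxy
      simp only [if_true]
      exact (hlt x' y' (fun h' => h (by rw [h']))).trans_le hd
    · simp only [hxy, if_false]
      exact (hlo x y hxy).2
  · intro i hi x y z h1 h2 h3
    by_cases hid : i < d
    · exact ht' i hi _ _ _ (small i hid _ _ h1).2 (small i hid _ _ h2).2 (small i hid _ _ h3).2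
    · exact ht i hi _ _ _ (large i hid _ _ h1) (large i hid _ _ h2) (large i hid _ _ h3)
  · intro i x y z w h1 h2 h3 h4 h5 h6
    by_cases hid : i < d
    · exact hk' i _ _ _ _ (small i hid _ _ h1).2 (small i hid _ _ h2).2 (small i hid _ _ h3).2
        (small i hid _ _ h4).2 (small i hid _ _ h5).2 (small i hid _ _ h6).2
    · exact hk i _ _ _ _ (large i hid _ _ h1) (large i hid _ _ h2) (large i hid _ _ h3)
        (large i hid _ _ h4) (large i hid _ _ h5) (large i hid _ _ h6)

/-- colouring with the two colours `d`, `d+1` given by a symmetric predicate on differences -/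
def dcol (n d : ℕ) (q : ZMod n → Bool) (x y : ZMod n) : ℕ := if q (x - y) then d else d + 1

theorem dcol_E {n d i : ℕ} {q : ZMod n → Bool} {x y : ZMod n} (h : E (dcol n d q) i x y) :
    x - y ≠ 0 ∧ (i = d ∨ i = d + 1) ∧ q (x - y) = decide (i = d) := by
  obtain ⟨h1, h2⟩ := h
  refine ⟨sub_ne_zero.2 h1, ?_⟩
  unfold dcol at h2
  by_cases hq : q (x - y) = true
  · rw [if_pos hq] at h2; subst h2; simp [hq]
  · rw [if_neg hq] at h2; subst h2; simpa using hq

theorem dcol_sym {n d : ℕ} {q : ZMod n → Bool} (hq : ∀ a, q (-a) = q a) :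
    Sym (dcol n d q) := by
  intro x y
  unfold dcol
  rw [← neg_sub, hq]

theorem dcol_gal {n d : ℕ} {q : ZMod n → Bool} : Gal (dcol n d q) := by
  intro x y z _ _ _
  unfold dcol
  split_ifs <;> simp

theorem dcol_rg {n d : ℕ} {q : ZMod n → Bool} (x y : ZMod n) :
    d ≤ dcol n d q x y ∧ dcol n d q x y < d + 2 := by
  unfold dcol
  split_ifs <;> omega

def q5 (a : ZMod 5) : Bool := a = 1 ∨ a = 4

def q17 (a : ZMod 17) : Bool :=
  a = 1 ∨ a = 2 ∨ a = 4 ∨ a = 8 ∨ a = 9 ∨ a = 13 ∨ a = 15 ∨ a = 16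

theorem q5_tri : ∀ t : Bool, ∀ a : ZMod 5, a ≠ 0 → q5 a = t → ∀ b : ZMod 5, b ≠ 0 →
    q5 b = t → a - b ≠ 0 → q5 (a - b) = t → False := by
  unfold q5; decide +kernel

def ok17 (t : Bool) (a : ZMod 17) : Bool := decide (a ≠ 0) && decide (q17 a = t)

theorem ok17_of {t : Bool} {a : ZMod 17} (h : a ≠ 0) (h' : q17 a = t) : ok17 t a = true := by
  simp [ok17, h, h']

theorem ok17_k4 : ∀ t : Bool, ∀ a : ZMod 17, ok17 t a = true → ∀ b : ZMod 17, ok17 t b = true →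
    ok17 t (a - b) = true → ∀ e : ZMod 17, (ok17 t e && ok17 t (a - e) && ok17 t (b - e)) = false := by
  decide +kernel

theorem q17_k4 : ∀ t : Bool, ∀ a : ZMod 17, a ≠ 0 → q17 a = t → ∀ b : ZMod 17, b ≠ 0 →
    q17 b = t → a - b ≠ 0 → q17 (a - b) = t → ∀ e : ZMod 17, e ≠ 0 → q17 e = t →
    a - e ≠ 0 → q17 (a - e) = t → b - e ≠ 0 → q17 (b - e) = t → False := by
  intro t a h1 h2 b h3 h4 h5 h6 e h7 h8 h9 h10 h11 h12
  have := ok17_k4 t a (ok17_of h1 h2) b (ok17_of h3 h4) (ok17_of h5 h6) e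
  rw [ok17_of h7 h8, ok17_of h9 h10, ok17_of h11 h12] at this
  exact absurd this (by decide)

theorem q5_neg : ∀ a, q5 (-a) = q5 a := by unfold q5; decide +kernel

theorem q17_neg : ∀ a, q17 (-a) = q17 a := by unfold q17; decide +kernel

theorem q5_noT {d i : ℕ} (x y z : ZMod 5) (h1 : E (dcol 5 d q5) i x y)
    (h2 : E (dcol 5 d q5) i x z) (h3 : E (dcol 5 d q5) i y z) : False := by
  obtain ⟨a1, -, b1⟩ := dcol_E h1
  obtain ⟨a2, -, b2⟩ := dcol_E h2
  obtain ⟨a3, -, b3⟩ := dcol_E h3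
  have e : (x - z) - (y - z) = x - y := by ring
  exact q5_tri _ _ a2 b2 _ a3 b3 (by rw [e]; exact a1) (by rw [e]; exact b1)

theorem q17_noK {d i : ℕ} (x y z w : ZMod 17) (h1 : E (dcol 17 d q17) i x y)
    (h2 : E (dcol 17 d q17) i x z) (h3 : E (dcol 17 d q17) i x w)
    (h4 : E (dcol 17 d q17) i y z) (h5 : E (dcol 17 d q17) i y w)
    (h6 : E (dcol 17 d q17) i z w) : False := by
  obtain ⟨a1, -, b1⟩ := dcol_E h1
  obtain ⟨a2, -, b2⟩ := dcol_E h2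
  obtain ⟨a3, -, b3⟩ := dcol_E h3
  obtain ⟨a4, -, b4⟩ := dcol_E h4
  obtain ⟨a5, -, b5⟩ := dcol_E h5
  obtain ⟨a6, -, b6⟩ := dcol_E h6
  have e : ∀ p q : ZMod 17, (p - w) - (q - w) = p - q := fun p q => by ring
  exact q17_k4 _ _ a3 b3 _ a5 b5 (by rw [e]; exact a1) (by rw [e]; exact b1) _ a6 b6
    (by rw [e]; exact a2) (by rw [e]; exact b2) (by rw [e]; exact a4) (by rw [e]; exact b4)

theorem good5 {r d N : ℕ} (h : Good r d N) : Good r (d + 2) (5 * N) := by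
  have := blow h (W0 := ZMod 5) (e := dcol 5 d q5) (d' := d + 2) (by omega)
    (dcol_sym q5_neg) dcol_gal (fun x y _ => dcol_rg x y)
    (fun i _ x y z => q5_noT x y z) (fun i x y z w h1 h2 _ h4 _ _ => q5_noT x y z h1 h2 h4)
  rwa [ZMod.card] at this

theorem good17 {r d N : ℕ} (hr : d + 2 ≤ r) (h : Good r d N) : Good r (d + 2) (17 * N) := by
  have := blow h (W0 := ZMod 17) (e := dcol 17 d q17) (d' := d + 2) (by omega)
    (dcol_sym q17_neg) dcol_gal (fun x y _ => dcol_rg x y)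
    (fun i hi x y z h1 _ _ => by
      have := (dcol_E h1).2.1
      omega)
    (fun i x y z w => q17_noK x y z w)
  rwa [ZMod.card] at this

theorem good2 {r d N : ℕ} (h : Good r d N) : Good r (d + 1) (2 * N) := by
  have key : ∀ i, ∀ x y z : Fin 2, E (fun _ _ : Fin 2 => d) i x y →
      E (fun _ _ : Fin 2 => d) i x z → E (fun _ _ : Fin 2 => d) i y z → False := by
    intro i x y z h1 h2 h3
    have n1 := h1.1
    have n2 := h2.1
    have n3 := h3.1
    omega
  have := blow h (W0 := Fin 2) (e := fun _ _ => d) (d' := d + 1) (by omega)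
    (fun _ _ => rfl) (fun _ _ _ _ _ _ => Or.inl rfl) (fun x y _ => ⟨le_rfl, Nat.lt_succ_self d⟩)
    (fun i _ x y z => key i x y z) (fun i x y z w h1 h2 _ h4 _ _ => key i x y z h1 h2 h4)
  rwa [Fintype.card_fin] at this

theorem good1 (r : ℕ) : Good r 0 1 :=
  ⟨Unit, inferInstance, fun _ _ => 0, rfl, fun _ _ => rfl, fun _ _ _ h => (h rfl).elim,
    fun _ _ h => (h rfl).elim, fun _ _ _ _ _ h => (h.1 rfl).elim,
    fun _ _ _ _ _ h => (h.1 rfl).elim⟩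

theorem good_all (s m : ℕ) : Good (2 * s) (2 * s + 2 * m + 1) (2 * 5 ^ m * 17 ^ s) := by
  have h1 : ∀ j ≤ s, Good (2 * s) (2 * j) (17 ^ j) := by
    intro j
    induction j with
    | zero => intro _; exact good1 _
    | succ j ih =>
      intro hj
      have := good17 (by omega) (ih (by omega))
      rwa [← pow_succ'] at this
  have h2 : ∀ j, Good (2 * s) (2 * s + 2 * j) (5 ^ j * 17 ^ s) := by
    intro j
    induction j with
    | zero => simpa using h1 s le_rfl
    | succ j ih =>
      have := good5 ih
      rwa [← mul_assoc, ← pow_succ'] at this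
  have := good2 (h2 m)
  rwa [← mul_assoc] at this

/-! ### The graphs -/

theorem mono_of_H {n k : ℕ} {c : Fin n → Fin n → Fin k} (hs : Sym c) {i : Fin k}
    {H : SimpleGraph (Fin 5)} (hH : H = GH1 ∨ H = GH2) (h : ¬ HasMonoCopy H c i) :
    NoH c Finset.univ i := by
  intro x _ y _ z _ w _ u _ h1 h2 h3 h4 h5 h6 h7 h8 h9 h10
  apply h
  have g1 := h1.symm hs
  have g2 := h2.symm hs
  have g3 := h3.symm hs
  have g4 := h4.symm hs
  have g5 := h5.symm hs
  have g6 := h6.symm hs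
  have g7 := h7.symm hs
  have g8 := h8.symm hs
  rcases hH with rfl | rfl
  · refine ⟨![y, z, w, x, u], ?_, ?_⟩
    · intro a b hab
      fin_cases a <;> fin_cases b <;>
        first
        | rfl
        | exact absurd hab h1.1 | exact absurd hab h2.1 | exact absurd hab h3.1
        | exact absurd hab h4.1 | exact absurd hab h5.1 | exact absurd hab h6.1
        | exact absurd hab h7.1 | exact absurd hab h8.1 | exact absurd hab h9
        | exact absurd hab h10
        | exact absurd hab g1.1 | exact absurd hab g2.1 | exact absurd hab g3.1
        | exact absurd hab g4.1 | exact absurd hab g5.1 | exact absurd hab g6.1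
        | exact absurd hab g7.1 | exact absurd hab g8.1 | exact absurd hab h9.symm
        | exact absurd hab h10.symm
    · intro a b hab
      fin_cases a <;> fin_cases b <;>
        first
        | exact h1.2 | exact h2.2 | exact h3.2 | exact h4.2 | exact h5.2 | exact h6.2
        | exact h7.2 | exact h8.2 | exact g1.2 | exact g2.2 | exact g3.2 | exact g4.2
        | exact g5.2 | exact g6.2 | exact g7.2 | exact g8.2
        | (exfalso; simp [GH1] at hab)
  · refine ⟨![z, u, w, x, y], ?_, ?_⟩
    · intro a b hab
      fin_cases a <;> fin_cases b <;>
        first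
        | rfl
        | exact absurd hab h1.1 | exact absurd hab h2.1 | exact absurd hab h3.1
        | exact absurd hab h4.1 | exact absurd hab h5.1 | exact absurd hab h6.1
        | exact absurd hab h7.1 | exact absurd hab h8.1 | exact absurd hab h9
        | exact absurd hab h10
        | exact absurd hab g1.1 | exact absurd hab g2.1 | exact absurd hab g3.1
        | exact absurd hab g4.1 | exact absurd hab g5.1 | exact absurd hab g6.1
        | exact absurd hab g7.1 | exact absurd hab g8.1 | exact absurd hab h9.symm
        | exact absurd hab h10.symm
    · intro a b hab
      fin_cases a <;> fin_cases b <;>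
        first
        | exact h1.2 | exact h2.2 | exact h3.2 | exact h4.2 | exact h5.2 | exact h6.2
        | exact h7.2 | exact h8.2 | exact g1.2 | exact g2.2 | exact g3.2 | exact g4.2
        | exact g5.2 | exact g6.2 | exact g7.2 | exact g8.2
        | (exfalso; simp [GH2] at hab)

theorem mono_of_T {n k : ℕ} {c : Fin n → Fin n → Fin k} (hs : Sym c) {i : Fin k}
    (h : ¬ HasMonoCopy GK3 c i) : NoT c Finset.univ i := by
  intro x _ y _ z _ h1 h2 h3
  apply h
  have g1 := h1.symm hs
  have g2 := h2.symm hs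
  have g3 := h3.symm hs
  refine ⟨![x, y, z], ?_, ?_⟩
  · intro a b hab
    fin_cases a <;> fin_cases b <;>
      first
      | rfl
      | exact absurd hab h1.1 | exact absurd hab h2.1 | exact absurd hab h3.1
      | exact absurd hab g1.1 | exact absurd hab g2.1 | exact absurd hab g3.1
  · intro a b hab
    fin_cases a <;> fin_cases b <;>
      first
      | exact h1.2 | exact h2.2 | exact h3.2 | exact g1.2 | exact g2.2 | exact g3.2
      | (exfalso; simp [GK3] at hab)

theorem T_of_mono {n k : ℕ} {c : Fin n → Fin n → Fin k} {i : Fin k}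
    (h : HasMonoCopy GK3 c i) : ∃ x y z, E c i x y ∧ E c i x z ∧ E c i y z := by
  obtain ⟨φ, hφ, h⟩ := h
  have key : ∀ a b : Fin 3, a ≠ b → E c i (φ a) (φ b) := fun a b hab =>
    ⟨fun h => hab (hφ h), h a b (by simpa [GK3] using hab)⟩
  exact ⟨_, _, _, key 0 1 (by decide), key 0 2 (by decide), key 1 2 (by decide)⟩

theorem K4_of_mono {n k : ℕ} {c : Fin n → Fin n → Fin k} {i : Fin k}
    {H : SimpleGraph (Fin 5)} (hH : H = GH1 ∨ H = GH2) (h : HasMonoCopy H c i) :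
    ∃ x y z w, E c i x y ∧ E c i x z ∧ E c i x w ∧ E c i y z ∧ E c i y w ∧ E c i z w := by
  obtain ⟨φ, hφ, h⟩ := h
  have key : ∀ a b : Fin 5, H.Adj a b → E c i (φ a) (φ b) := fun a b hab =>
    ⟨fun h => hab.ne (hφ h), h a b hab⟩
  rcases hH with rfl | rfl
  · exact ⟨_, _, _, _, key 0 1 (by simp [GH1]), key 0 2 (by simp [GH1]), key 0 3 (by simp [GH1]),
      key 1 2 (by simp [GH1]), key 1 3 (by simp [GH1]), key 2 3 (by simp [GH1])⟩
  · exact ⟨_, _, _, _, key 0 2 (by simp [GH2]), key 0 3 (by simp [GH2]), key 0 4 (by simp [GH2]),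
      key 2 3 (by simp [GH2]), key 2 4 (by simp [GH2]), key 3 4 (by simp [GH2])⟩

theorem upper_final {H : SimpleGraph (Fin 5)} (hH : H = GH1 ∨ H = GH2) (s m n : ℕ)
    (hn : 2 * 5 ^ m * 17 ^ s < n) (c : Fin n → Fin n → Fin (2 * s + (2 * m + 1)))
    (hc : IsGallaiColoring c) :
    ∃ i, HasMonoCopy (mixKH (2 * s + (2 * m + 1)) (2 * s) H i).2 c i := by
  classical
  by_contra hcon
  push Not at hcon
  obtain ⟨hs, hr⟩ := hc
  have hs' : Sym c := hs
  have hG : Gal c := by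
    intro x y z h1 h2 h3
    by_contra h
    push Not at h
    exact hr ⟨x, y, z, h1, h2, h3, h.1, h.2.1, h.2.2⟩
  let B : Finset (Fin (2 * s + (2 * m + 1))) := Finset.univ.filter (fun i => i.1 < 2 * s)
  let T : Finset (Fin (2 * s + (2 * m + 1))) := Finset.univ.filter (fun i => ¬ i.1 < 2 * s)
  have hBc : B.card = 2 * s := by
    simp only [B, Fin.card_filter_val_lt]
    omega
  have hTc : T.card = 2 * m + 1 := by
    have := Finset.card_filter_add_card_filter_not
      (s := (Finset.univ : Finset (Fin (2 * s + (2 * m + 1))))) (fun i => i.1 < 2 * s)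
    rw [Finset.card_univ, Fintype.card_fin] at this
    change B.card + T.card = _ at this
    omega
  have hd : Disjoint T B := by
    rw [Finset.disjoint_left]
    intro i hi hi'
    simp only [T, B, Finset.mem_filter] at hi hi'
    exact hi.2 hi'.2
  have hP : P c T B Finset.univ := by
    refine ⟨fun i h1 h2 => ?_, fun i hi => ?_, fun i hi => ?_⟩
    · simp [T, B] at h1 h2
      omega
    · simp only [T, Finset.mem_filter] at hi
      have h := hcon i
      rw [show mixKH (2 * s + (2 * m + 1)) (2 * s) H i = ⟨Fin 3, GK3⟩ from if_neg hi.2] at h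
      exact mono_of_T hs' h
    · simp only [B, Finset.mem_filter] at hi
      have h := hcon i
      rw [show mixKH (2 * s + (2 * m + 1)) (2 * s) H i = ⟨Fin 5, H⟩ from if_pos hi.2] at h
      exact mono_of_H hs' hH h
  have := upper_all hs' hG (n + 1) Finset.univ (by simp) T B hd hP
  rw [hBc, hTc, f_odd, g_even, Finset.card_univ, Fintype.card_fin] at this
  have : n ≤ 2 * 5 ^ m * 17 ^ s := by exact_mod_cast this
  omega

theorem lower_final {H : SimpleGraph (Fin 5)} (hH : H = GH1 ∨ H = GH2) (s m n : ℕ)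
    (hn : n ≤ 2 * 5 ^ m * 17 ^ s) :
    ∃ c : Fin n → Fin n → Fin (2 * s + (2 * m + 1)), IsGallaiColoring c ∧
      ∀ i, ¬ HasMonoCopy (mixKH (2 * s + (2 * m + 1)) (2 * s) H i).2 c i := by
  classical
  obtain ⟨W, hW, c, hcard, hs, hG, hlt, ht, hk⟩ := good_all s m
  obtain ⟨ι⟩ := Function.Embedding.nonempty_of_card_le (α := Fin n) (β := W)
    (by rw [Fintype.card_fin, hcard]; exact hn)
  let c' : Fin n → Fin n → Fin (2 * s + (2 * m + 1)) := fun u v =>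
    if h : c (ι u) (ι v) < 2 * s + (2 * m + 1) then ⟨c (ι u) (ι v), h⟩ else ⟨0, by omega⟩
  have hval : ∀ u v, u ≠ v → (c' u v).1 = c (ι u) (ι v) := by
    intro u v huv
    have := hlt (ι u) (ι v) (fun h => huv (ι.injective h))
    simp only [c']
    rw [dif_pos (by omega)]
  have hE : ∀ i u v, E c' i u v → E c i.1 (ι u) (ι v) := by
    intro i u v h
    exact ⟨fun h' => h.1 (ι.injective h'), by rw [← hval u v h.1, h.2]⟩
  refine ⟨c', ⟨?_, ?_⟩, ?_⟩
  · intro u v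
    simp only [c', hs (ι u) (ι v)]
  · rintro ⟨u, v, w, h1, h2, h3, h4, h5, h6⟩
    have n1 : ι u ≠ ι v := fun h => h1 (ι.injective h)
    have n2 : ι u ≠ ι w := fun h => h2 (ι.injective h)
    have n3 : ι v ≠ ι w := fun h => h3 (ι.injective h)
    rcases hG _ _ _ n1 n2 n3 with h | h | h
    · exact h4 (Fin.ext (by rw [hval u v h1, hval u w h2, h]))
    · exact h5 (Fin.ext (by rw [hval u v h1, hval v w h3, h]))
    · exact h6 (Fin.ext (by rw [hval u w h2, hval v w h3, h]))
  · intro i h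
    by_cases hi : i.1 < 2 * s
    · rw [show mixKH (2 * s + (2 * m + 1)) (2 * s) H i = ⟨Fin 5, H⟩ from if_pos hi] at h
      obtain ⟨x, y, z, w, h1, h2, h3, h4, h5, h6⟩ := K4_of_mono hH h
      exact hk i.1 _ _ _ _ (hE _ _ _ h1) (hE _ _ _ h2) (hE _ _ _ h3) (hE _ _ _ h4)
        (hE _ _ _ h5) (hE _ _ _ h6)
    · rw [show mixKH (2 * s + (2 * m + 1)) (2 * s) H i = ⟨Fin 3, GK3⟩ from if_neg hi] at h
      obtain ⟨x, y, z, h1, h2, h3⟩ := T_of_mono h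
      exact ht i.1 (by omega) _ _ _ (hE _ _ _ h1) (hE _ _ _ h2) (hE _ _ _ h3)

end GRproof

/-- Theorem 1.4, case (a₂): for H ∈ {H₁, H₂}, k ≥ 1, 0 ≤ r ≤ k with k - r odd and r
even, GR_k((k-r)K₃, rH) = 2·5^((k-r-1)/2)·17^(r/2) + 1. -/
theorem GR_mixKH_odd_even (H : SimpleGraph (Fin 5)) (hH : H = GH1 ∨ H = GH2)
    (k r : ℕ) (hk : 1 ≤ k) (hr : r ≤ k) (h1 : Odd (k - r)) (h2 : Even r) :
    GR k (mixKH k r H) = 2 * 5 ^ ((k - r - 1) / 2) * 17 ^ (r / 2) + 1 := by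
  obtain ⟨m, hm⟩ := h1
  obtain ⟨s, hs⟩ := h2
  obtain rfl : r = 2 * s := by omega
  obtain rfl : k = 2 * s + (2 * m + 1) := by omega
  have e1 : (2 * s + (2 * m + 1) - 2 * s - 1) / 2 = m := by omega
  have e2 : 2 * s / 2 = s := by omega
  rw [e1, e2]
  unfold GR
  refine IsLeast.csInf_eq ⟨?_, ?_⟩
  · intro c hc
    exact GRproof.upper_final hH s m _ (Nat.lt_succ_self _) c hc
  · intro n hn
    by_contra hcon
    obtain ⟨c, hc, hno⟩ := GRproof.lower_final hH s m n (by omega)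
    obtain ⟨i, hi⟩ := hn c hc
    exact hno i hi
end
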